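/- For every integer d ≥ 1 there exists a constant C_d > 0, depending only on d, such that for every integer n ≥ 2, every degree-d polynomial threshold function f : {-1,1}^n → {-1,1} satisfies BSA[f] ≤ exp(C_d · √(log n)). -/

import Mathlib

open Finset
open scoped Classical

/-- The embedding of `Bool` into `{-1, 1} ⊆ ℝ`. -/
noncomputable def chi (b : Bool) : ℝ := if b then 1 else -1

/-- Flip the `i`-th coordinate of a point of the Boolean cube. -/
def flipAt {n : ℕ} (x : Fin n → Bool) (i : Fin n) : Fin n → Bool :=
  Function.update x i (!x i)

/-- The sensitivity of `f` at `x`: the number of coordinates whose flip changes `f`. -/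
noncomputable def sens {n : ℕ} (f : (Fin n → Bool) → ℝ) (x : Fin n → Bool) : ℕ :=
  (Finset.univ.filter (fun i => f (flipAt x i) ≠ f x)).card

/-- The Boolean surface area `BSA[f] = E_x √(s_f(x))`, `x` uniform on the cube. -/
noncomputable def BSA {n : ℕ} (f : (Fin n → Bool) → ℝ) : ℝ :=
  (∑ x : Fin n → Bool, Real.sqrt (sens f x)) / 2 ^ n

/-- Evaluation of a polynomial at a point of the cube `{-1,1}^n`. -/
noncomputable def pev {n : ℕ} (p : MvPolynomial (Fin n) ℝ) (x : Fin n → Bool) : ℝ :=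
  MvPolynomial.eval (fun i => chi (x i)) p

/-- `f` is a degree-`d` polynomial threshold function: `f = sgn p` for some multilinear
polynomial `p` of total degree at most `d` that is nonvanishing on the cube. -/
def IsPTF (d : ℕ) {n : ℕ} (f : (Fin n → Bool) → ℝ) : Prop :=
  ∃ p : MvPolynomial (Fin n) ℝ,
    (∀ m ∈ p.support, ∀ i, m i ≤ 1) ∧ p.totalDegree ≤ d ∧
    ∀ x, pev p x ≠ 0 ∧ f x = Real.sign (pev p x)

set_option linter.unusedVariables false
set_option linter.unusedSectionVars false
/-! ### Weighted product expectations -/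

/-- Expectation over `n` i.i.d. samples of a finite weighted space. -/
noncomputable def Ex {n : ℕ} {Ω : Type} [Fintype Ω] (w : Ω → ℝ) (F : (Fin n → Ω) → ℝ) : ℝ :=
  ∑ ω : Fin n → Ω, (∏ i, w (ω i)) * F ω

/-- Probability weights. -/
structure IsPW {Ω : Type} [Fintype Ω] (w : Ω → ℝ) : Prop where
  nonneg : ∀ u, 0 ≤ w u
  sum_one : ∑ u, w u = 1

section ExBasic
variable {n : ℕ} {Ω : Type} [Fintype Ω] {w : Ω → ℝ}

lemma Ex_add (F G : (Fin n → Ω) → ℝ) : Ex w (fun ω => F ω + G ω) = Ex w F + Ex w G := by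
  simp [Ex, mul_add, Finset.sum_add_distrib]

lemma Ex_sub (F G : (Fin n → Ω) → ℝ) : Ex w (fun ω => F ω - G ω) = Ex w F - Ex w G := by
  simp [Ex, mul_sub, Finset.sum_sub_distrib]

lemma Ex_const_mul (a : ℝ) (F : (Fin n → Ω) → ℝ) :
    Ex w (fun ω => a * F ω) = a * Ex w F := by
  simp only [Ex, Finset.mul_sum]
  exact Finset.sum_congr rfl fun _ _ => by ring

lemma Ex_mul_const (a : ℝ) (F : (Fin n → Ω) → ℝ) :
    Ex w (fun ω => F ω * a) = Ex w F * a := by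
  simp only [Ex, Finset.sum_mul]
  exact Finset.sum_congr rfl fun _ _ => by ring

lemma Ex_div_const (a : ℝ) (F : (Fin n → Ω) → ℝ) :
    Ex w (fun ω => F ω / a) = Ex w F / a := by
  simp only [div_eq_mul_inv, Ex_mul_const]

lemma Ex_sum {κ : Type*} (s : Finset κ) (F : κ → (Fin n → Ω) → ℝ) :
    Ex w (fun ω => ∑ k ∈ s, F k ω) = ∑ k ∈ s, Ex w (F k) := by
  simp only [Ex, Finset.mul_sum]
  exact Finset.sum_comm

lemma Ex_mono (hw : IsPW w) {F G : (Fin n → Ω) → ℝ} (h : ∀ ω, F ω ≤ G ω) : Ex w F ≤ Ex w G :=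
  Finset.sum_le_sum fun ω _ =>
    mul_le_mul_of_nonneg_left (h ω) (Finset.prod_nonneg fun _ _ => hw.nonneg _)

lemma Ex_nonneg (hw : IsPW w) {F : (Fin n → Ω) → ℝ} (h : ∀ ω, 0 ≤ F ω) : 0 ≤ Ex w F :=
  Finset.sum_nonneg fun ω _ => mul_nonneg (Finset.prod_nonneg fun _ _ => hw.nonneg _) (h ω)

lemma Ex_abs_le (hw : IsPW w) (F : (Fin n → Ω) → ℝ) : |Ex w F| ≤ Ex w (fun ω => |F ω|) := by
  rw [abs_le]
  constructor
  · have := Ex_mono (n := n) hw (F := fun ω => (-1) * |F ω|) (G := F)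
      (fun ω => by have := neg_abs_le (F ω); linarith)
    rw [Ex_const_mul] at this; linarith
  · exact Ex_mono hw fun ω => le_abs_self _

/-- Expectation of a product of functions of single coordinates. -/
lemma Ex_prod (h : Fin n → Ω → ℝ) :
    Ex w (fun ω => ∏ i, h i (ω i)) = ∏ i, ∑ u, w u * h i u := by
  rw [Finset.prod_univ_sum]
  simp only [Ex, Fintype.piFinset_univ, ← Finset.prod_mul_distrib]

lemma Ex_const (hw : IsPW w) (a : ℝ) : Ex w (fun _ : Fin n → Ω => a) = a := by
  have := Ex_prod (w := w) (n := n) (fun _ _ => 1)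
  simp only [Finset.prod_const_one, mul_one, hw.sum_one] at this
  have h2 := Ex_const_mul (w := w) (n := n) a (fun _ => 1)
  rw [this] at h2
  simpa using h2

/-- Resampling one coordinate. -/
lemma Ex_resample (hw : IsPW w) (a : Fin n) (F : (Fin n → Ω) → ℝ) :
    Ex w F = Ex w (fun ω => ∑ u, w u * F (Function.update ω a u)) := by
  have hsplit : ∀ ω : Fin n → Ω, (∏ i, w (ω i)) = w (ω a) * ∏ i ∈ univ.erase a, w (ω i) :=
    fun ω => (Finset.mul_prod_erase _ _ (Finset.mem_univ a)).symm
  have hupd : ∀ (ω : Fin n → Ω) (u : Ω),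
      (∏ i ∈ univ.erase a, w (Function.update ω a u i)) = ∏ i ∈ univ.erase a, w (ω i) := by
    intro ω u
    apply Finset.prod_congr rfl
    intro i hi
    rw [Function.update_of_ne (Finset.ne_of_mem_erase hi)]
  have h1 : Ex w (fun ω => ∑ u, w u * F (Function.update ω a u))
      = ∑ q : (Fin n → Ω) × Ω, (∏ i, w (q.1 i)) * (w q.2 * F (Function.update q.1 a q.2)) := by
    rw [Fintype.sum_prod_type]
    simp only [Ex, Finset.mul_sum]
  have h2 : Ex w F = ∑ q : (Fin n → Ω) × Ω, (∏ i, w (q.1 i)) * (w q.2 * F q.1) := by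
    rw [Fintype.sum_prod_type]
    simp only [Ex]
    refine Finset.sum_congr rfl fun ω _ => ?_
    rw [← Finset.mul_sum, ← Finset.sum_mul, hw.sum_one, one_mul]
  rw [h1, h2]
  refine Finset.sum_bij' (fun q _ => (Function.update q.1 a q.2, q.1 a))
    (fun q _ => (Function.update q.1 a q.2, q.1 a)) (by simp) (by simp) (by simp) (by simp) ?_
  rintro ⟨ω, u⟩ _
  simp only [Function.update_idem, Function.update_eq_self]
  rw [hsplit ω, hsplit (Function.update ω a u), hupd]
  simp only [Function.update_self]
  ring

lemma Ex_indep (hw : IsPW w) (a : Fin n) (h : Ω → ℝ) (G : (Fin n → Ω) → ℝ)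
    (hG : ∀ ω u, G (Function.update ω a u) = G ω) :
    Ex w (fun ω => h (ω a) * G ω) = (∑ u, w u * h u) * Ex w G := by
  rw [Ex_resample hw a, ← Ex_const_mul]
  congr 1; ext ω
  simp only [Function.update_self, hG, Finset.sum_mul]
  exact Finset.sum_congr rfl fun _ _ => by ring

/-- Cauchy-Schwarz. -/
lemma Ex_CS (hw : IsPW w) (F G H : (Fin n → Ω) → ℝ) (hF : ∀ ω, 0 ≤ F ω) (hG : ∀ ω, 0 ≤ G ω)
    (h : ∀ ω, H ω ^ 2 ≤ F ω * G ω) : (Ex w H) ^ 2 ≤ Ex w F * Ex w G := by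
  refine Finset.sum_sq_le_sum_mul_sum_of_sq_le_mul _ ?_ ?_ ?_
  · exact fun ω _ => mul_nonneg (Finset.prod_nonneg fun _ _ => hw.nonneg _) (hF ω)
  · exact fun ω _ => mul_nonneg (Finset.prod_nonneg fun _ _ => hw.nonneg _) (hG ω)
  · intro ω _
    have hp : 0 ≤ (∏ i, w (ω i)) ^ 2 := sq_nonneg _
    calc ((∏ i, w (ω i)) * H ω) ^ 2 = (∏ i, w (ω i)) ^ 2 * H ω ^ 2 := by ring
      _ ≤ (∏ i, w (ω i)) ^ 2 * (F ω * G ω) := mul_le_mul_of_nonneg_left (h ω) hp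
      _ = _ := by ring

/-- Push-forward. -/
lemma Ex_map {Ω' : Type} [Fintype Ω'] {w' : Ω' → ℝ} (φ : Ω → Ω')
    (h : ∀ v, ∑ u, (if φ u = v then w u else 0) = w' v) (F : (Fin n → Ω') → ℝ) :
    Ex w (fun ω => F (fun i => φ (ω i))) = Ex w' F := by
  have key : ∀ v : Fin n → Ω', (∏ i, w' (v i))
      = ∑ ω : Fin n → Ω, if (fun i => φ (ω i)) = v then ∏ i, w (ω i) else 0 := by
    intro v
    simp only [← h]
    rw [Finset.prod_univ_sum]
    simp only [Fintype.piFinset_univ]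
    refine Finset.sum_congr rfl fun ω _ => ?_
    by_cases hv : (fun i => φ (ω i)) = v
    · rw [if_pos hv]
      exact Finset.prod_congr rfl fun i _ => by rw [if_pos (congrFun hv i)]
    · rw [if_neg hv]
      obtain ⟨i, hi⟩ := Function.ne_iff.mp hv
      exact Finset.prod_eq_zero (Finset.mem_univ i) (if_neg hi)
  simp only [Ex, key, Finset.sum_mul]
  rw [Finset.sum_comm]
  refine Finset.sum_congr rfl fun ω _ => ?_
  simp [ite_mul]

/-- Fubini. -/
lemma Ex_prod_type {Ω' : Type} [Fintype Ω'] (w' : Ω' → ℝ) (F : (Fin n → Ω × Ω') → ℝ) :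
    Ex (fun u : Ω × Ω' => w u.1 * w' u.2) F
      = Ex w (fun ω => Ex w' (fun ω' => F (fun i => (ω i, ω' i)))) := by
  simp only [Ex, Finset.mul_sum]
  rw [← Fintype.sum_prod_type']
  rw [← (Equiv.arrowProdEquivProdArrow (Fin n) (fun _ => Ω) (fun _ => Ω')).sum_comp]
  refine Finset.sum_congr rfl fun ω _ => ?_
  simp only [Equiv.arrowProdEquivProdArrow, Equiv.coe_fn_mk, Finset.prod_mul_distrib]
  ring

end ExBasic

set_option linter.unusedSectionVars false
/-! ### Multilinear polynomials given by coefficients -/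

/-- Evaluation of the multilinear polynomial with coefficients `c`. -/
noncomputable def ev {n : ℕ} (c : Finset (Fin n) → ℝ) (x : Fin n → ℝ) : ℝ :=
  ∑ S, c S * ∏ i ∈ S, x i

/-- Degree at most `d`. -/
def DegLE {n : ℕ} (d : ℕ) (c : Finset (Fin n) → ℝ) : Prop := ∀ S, d < S.card → c S = 0

/-- Only the variables in `J` occur. -/
def SuppIn {n : ℕ} (J : Finset (Fin n)) (c : Finset (Fin n) → ℝ) : Prop :=
  ∀ S, ¬ S ⊆ J → c S = 0

/-- The derivative in direction `i`. -/
noncomputable def der {n : ℕ} (i : Fin n) (c : Finset (Fin n) → ℝ) : Finset (Fin n) → ℝ :=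
  fun S => if i ∈ S then 0 else c (insert i S)

/-- The part without the variable `i`. -/
noncomputable def rst {n : ℕ} (i : Fin n) (c : Finset (Fin n) → ℝ) : Finset (Fin n) → ℝ :=
  fun S => if i ∈ S then 0 else c S

/-- Sum of squares of coefficients. -/
noncomputable def sqn {n : ℕ} (c : Finset (Fin n) → ℝ) : ℝ := ∑ S, c S ^ 2

/-- Variance. -/
noncomputable def vr {n : ℕ} (c : Finset (Fin n) → ℝ) : ℝ := sqn c - c ∅ ^ 2

/-- Influence of `i`. -/
noncomputable def infl {n : ℕ} (i : Fin n) (c : Finset (Fin n) → ℝ) : ℝ := sqn (der i c)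

section Poly
variable {n : ℕ}

/-- Sum over all sets split according to membership of `i`. -/
lemma sum_split (i : Fin n) (f : Finset (Fin n) → ℝ) :
    ∑ S, f S = ∑ S, (if i ∈ S then 0 else f S) + ∑ S, (if i ∈ S then 0 else f (insert i S)) := by
  have h1 : ∑ S, f S = ∑ S, (if i ∈ S then 0 else f S) + ∑ S, (if i ∈ S then f S else 0) := by
    rw [← Finset.sum_add_distrib]
    refine Finset.sum_congr rfl fun S _ => ?_
    split_ifs <;> simp
  rw [h1]; congr 1
  have e1 : ∑ S, (if i ∈ S then f S else 0) = ∑ S ∈ univ.filter (fun S => i ∈ S), f S := by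
    rw [Finset.sum_filter]
  have e2 : ∑ S, (if i ∈ S then 0 else f (insert i S))
      = ∑ S ∈ univ.filter (fun S => i ∉ S), f (insert i S) := by
    rw [Finset.sum_filter]
    refine Finset.sum_congr rfl fun S _ => ?_
    split_ifs <;> simp_all
  rw [e1, e2]
  refine Finset.sum_bij' (fun S _ => S.erase i) (fun S _ => insert i S) ?_ ?_ ?_ ?_ ?_
  · intro S hS; simp
  · intro S hS; simp
  · intro S hS; simp at hS; exact Finset.insert_erase hS
  · intro S hS; simp at hS; exact Finset.erase_insert hS
  · intro S hS; simp at hS; rw [Finset.insert_erase hS]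

lemma ev_split (i : Fin n) (c : Finset (Fin n) → ℝ) (x : Fin n → ℝ) :
    ev c x = ev (rst i c) x + x i * ev (der i c) x := by
  unfold ev
  rw [sum_split i, Finset.mul_sum]
  congr 1
  · refine Finset.sum_congr rfl fun S _ => ?_
    unfold rst; split_ifs <;> simp
  · refine Finset.sum_congr rfl fun S _ => ?_
    unfold der; split_ifs with h
    · simp
    · rw [Finset.prod_insert h]; ring

lemma ev_congr {c : Finset (Fin n) → ℝ} {J : Finset (Fin n)} (hc : SuppIn J c)
    {x y : Fin n → ℝ} (h : ∀ i ∈ J, x i = y i) : ev c x = ev c y := by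
  unfold ev
  refine Finset.sum_congr rfl fun S _ => ?_
  by_cases hS : S ⊆ J
  · rw [Finset.prod_congr rfl fun i hi => h i (hS hi)]
  · rw [hc S hS]; simp

lemma suppIn_rst (i : Fin n) (c : Finset (Fin n) → ℝ) : SuppIn (univ.erase i) (rst i c) := by
  intro S hS
  unfold rst; rw [if_pos]
  by_contra h; apply hS; intro j hj; simp; rintro rfl; exact h hj

lemma suppIn_der (i : Fin n) (c : Finset (Fin n) → ℝ) : SuppIn (univ.erase i) (der i c) := by
  intro S hS
  unfold der; rw [if_pos]
  by_contra h; apply hS; intro j hj; simp; rintro rfl; exact h hj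

lemma SuppIn.rst {J : Finset (Fin n)} {c : Finset (Fin n) → ℝ} (hc : SuppIn J c) (i : Fin n) :
    SuppIn (J.erase i) (rst i c) := by
  intro S hS
  unfold _root_.rst; split_ifs with h
  · rfl
  · apply hc; intro h'; apply hS; intro j hj; rw [Finset.mem_erase]
    exact ⟨by rintro rfl; exact h hj, h' hj⟩

lemma SuppIn.der {J : Finset (Fin n)} {c : Finset (Fin n) → ℝ} (hc : SuppIn J c) (i : Fin n) :
    SuppIn (J.erase i) (der i c) := by
  intro S hS
  unfold _root_.der; split_ifs with h
  · rfl
  · apply hc; intro h'; apply hS; intro j hj; rw [Finset.mem_erase]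
    exact ⟨by rintro rfl; exact h hj, h' (Finset.mem_insert_of_mem hj)⟩

lemma SuppIn.mono {J J' : Finset (Fin n)} {c : Finset (Fin n) → ℝ} (hc : SuppIn J c)
    (h : J ⊆ J') : SuppIn J' c := fun S hS => hc S fun h' => hS (h'.trans h)

lemma DegLE.rst {d : ℕ} {c : Finset (Fin n) → ℝ} (hc : DegLE d c) (i : Fin n) :
    DegLE d (rst i c) := by
  intro S hS; unfold _root_.rst; rw [hc S hS]; simp

lemma DegLE.der {d : ℕ} {c : Finset (Fin n) → ℝ} (hc : DegLE (d + 1) c) (i : Fin n) :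
    DegLE d (der i c) := by
  intro S hS; unfold _root_.der; split_ifs with h
  · rfl
  · apply hc; rw [Finset.card_insert_of_notMem h]; omega

lemma DegLE.der_zero {c : Finset (Fin n) → ℝ} (hc : DegLE 0 c) (i : Fin n) :
    _root_.der i c = fun _ => 0 := by
  ext S; unfold _root_.der; split_ifs with h
  · rfl
  · apply hc; rw [Finset.card_insert_of_notMem h]; omega

lemma DegLE.mono {d d' : ℕ} {c : Finset (Fin n) → ℝ} (hc : DegLE d c) (h : d ≤ d') :
    DegLE d' c := fun S hS => hc S (by omega)

lemma DegLE.der_le {d : ℕ} {c : Finset (Fin n) → ℝ} (hc : DegLE d c) (i : Fin n) :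
    DegLE d (_root_.der i c) := DegLE.der (hc.mono (Nat.le_succ d)) i

lemma sqn_split (i : Fin n) (c : Finset (Fin n) → ℝ) :
    sqn c = sqn (rst i c) + sqn (der i c) := by
  unfold sqn; rw [sum_split i]
  congr 1
  · refine Finset.sum_congr rfl fun S _ => ?_
    unfold rst; split_ifs <;> simp
  · refine Finset.sum_congr rfl fun S _ => ?_
    unfold der; split_ifs <;> simp

lemma sqn_nonneg (c : Finset (Fin n) → ℝ) : 0 ≤ sqn c := Finset.sum_nonneg fun _ _ => sq_nonneg _

lemma infl_nonneg (i : Fin n) (c : Finset (Fin n) → ℝ) : 0 ≤ infl i c := sqn_nonneg _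

lemma vr_eq (c : Finset (Fin n) → ℝ) : vr c = ∑ S ∈ univ.erase ∅, c S ^ 2 := by
  unfold vr sqn
  rw [← Finset.add_sum_erase _ _ (Finset.mem_univ ∅)]; ring

lemma vr_nonneg (c : Finset (Fin n) → ℝ) : 0 ≤ vr c := by
  rw [vr_eq]; exact Finset.sum_nonneg fun _ _ => sq_nonneg _

lemma sqn_eq (c : Finset (Fin n) → ℝ) : sqn c = vr c + c ∅ ^ 2 := by unfold vr; ring

lemma infl_eq (i : Fin n) (c : Finset (Fin n) → ℝ) :
    infl i c = ∑ S, if i ∈ S then c S ^ 2 else 0 := by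
  have := sum_split i (fun S => if i ∈ S then c S ^ 2 else 0)
  rw [this]
  have h0 : ∑ S : Finset (Fin n), (if i ∈ S then 0 else if i ∈ S then c S ^ 2 else 0) = 0 := by
    apply Finset.sum_eq_zero; intro S _; split_ifs <;> rfl
  rw [h0, zero_add]
  unfold infl sqn der
  refine Finset.sum_congr rfl fun S _ => ?_
  split_ifs with h1 h2
  · simp
  · rfl
  · simp at h2

lemma sum_infl (c : Finset (Fin n) → ℝ) : ∑ i, infl i c = ∑ S, (S.card : ℝ) * c S ^ 2 := by
  simp only [infl_eq]
  rw [Finset.sum_comm]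
  refine Finset.sum_congr rfl fun S _ => ?_
  rw [← Finset.sum_filter, Finset.sum_const]
  simp

lemma vr_le_sum_infl (c : Finset (Fin n) → ℝ) : vr c ≤ ∑ i, infl i c := by
  rw [sum_infl, vr_eq, ← Finset.add_sum_erase _ _ (Finset.mem_univ ∅)]
  simp only [Finset.card_empty, Nat.cast_zero, zero_mul, zero_add]
  refine Finset.sum_le_sum fun S hS => ?_
  have : (1 : ℝ) ≤ S.card := by
    have := Finset.nonempty_iff_ne_empty.mpr (Finset.ne_of_mem_erase hS)
    exact_mod_cast this.card_pos
  nlinarith [sq_nonneg (c S)]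

lemma sum_infl_le {d : ℕ} {c : Finset (Fin n) → ℝ} (hc : DegLE d c) :
    ∑ i, infl i c ≤ d * vr c := by
  rw [sum_infl, vr_eq, ← Finset.add_sum_erase _ _ (Finset.mem_univ ∅), Finset.mul_sum]
  simp only [Finset.card_empty, Nat.cast_zero, zero_mul, zero_add]
  refine Finset.sum_le_sum fun S hS => ?_
  by_cases h : d < S.card
  · rw [hc S h]; simp
  · have : (S.card : ℝ) ≤ d := by exact_mod_cast not_lt.mp h
    nlinarith [sq_nonneg (c S)]

lemma ev_add (c c' : Finset (Fin n) → ℝ) (x : Fin n → ℝ) :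
    ev (fun S => c S + c' S) x = ev c x + ev c' x := by
  simp [ev, add_mul, Finset.sum_add_distrib]

lemma ev_smul (a : ℝ) (c : Finset (Fin n) → ℝ) (x : Fin n → ℝ) :
    ev (fun S => a * c S) x = a * ev c x := by
  simp [ev, mul_assoc, Finset.mul_sum]

lemma ev_zero (x : Fin n → ℝ) : ev (fun _ => 0) x = 0 := by simp [ev]

/-- The centered polynomial. -/
noncomputable def cen (c : Finset (Fin n) → ℝ) : Finset (Fin n) → ℝ :=
  fun S => if S = ∅ then 0 else c S

lemma ev_cen (c : Finset (Fin n) → ℝ) (x : Fin n → ℝ) : ev (cen c) x = ev c x - c ∅ := by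
  unfold ev cen
  rw [← Finset.add_sum_erase _ _ (Finset.mem_univ ∅),
    ← Finset.add_sum_erase _ (fun S => c S * ∏ i ∈ S, x i) (Finset.mem_univ ∅)]
  simp only [if_true, Finset.prod_empty, mul_one, zero_add]
  rw [add_sub_cancel_left]
  refine Finset.sum_congr rfl fun S hS => ?_
  rw [if_neg (Finset.ne_of_mem_erase hS)]

lemma sqn_cen (c : Finset (Fin n) → ℝ) : sqn (cen c) = vr c := by
  rw [vr_eq]; unfold sqn cen
  rw [← Finset.add_sum_erase _ _ (Finset.mem_univ ∅)]
  simp only [if_true]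
  rw [zero_pow two_ne_zero, zero_add]
  refine Finset.sum_congr rfl fun S hS => ?_
  rw [if_neg (Finset.ne_of_mem_erase hS)]

lemma DegLE.cen {d : ℕ} {c : Finset (Fin n) → ℝ} (hc : DegLE d c) : DegLE d (cen c) := by
  intro S hS; unfold _root_.cen; rw [hc S hS]; simp

end Poly

/-! ### Moments -/
section Moments
variable {n : ℕ} {Ω : Type} [Fintype Ω] {w : Ω → ℝ}

/-- Normalised bounded symmetric-like variables. -/
structure Nice (w U : Ω → ℝ) : Prop where
  m1 : ∑ u, w u * U u = 0
  m2 : ∑ u, w u * U u ^ 2 = 1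
  m3 : ∑ u, w u * U u ^ 3 = 0
  le2 : ∀ u, U u ^ 2 ≤ 2

lemma Nice.m4 {U : Ω → ℝ} (h : Nice w U) (hw : IsPW w) : ∑ u, w u * U u ^ 4 ≤ 9 := by
  calc ∑ u, w u * U u ^ 4 ≤ ∑ u, 4 * w u := Finset.sum_le_sum fun u _ => by
        have h1 := h.le2 u
        have h2 : U u ^ 4 ≤ 4 := by nlinarith [sq_nonneg (U u)]
        nlinarith [hw.nonneg u]
    _ ≤ 9 := by rw [← Finset.mul_sum, hw.sum_one]; norm_num

lemma le_of_sq_le_sq_nn {a b : ℝ} (h : a ^ 2 ≤ b ^ 2) (hb : 0 ≤ b) : a ≤ b :=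
  le_trans (le_abs_self a) (abs_le_of_sq_le_sq h hb)

/-- Covariance formula. -/
lemma Ex_cov (hw : IsPW w) {U V : Fin n → Ω → ℝ} {ρ : ℝ} (hU : ∀ i, ∑ u, w u * U i u = 0)
    (hV : ∀ i, ∑ u, w u * V i u = 0) (hUV : ∀ i, ∑ u, w u * (U i u * V i u) = ρ) (c c' : Finset (Fin n) → ℝ) :
    Ex w (fun ω => ev c (fun i => U i (ω i)) * ev c' (fun i => V i (ω i)))
      = ∑ S, c S * c' S * ρ ^ S.card := by
  have key : ∀ S T : Finset (Fin n), Ex w (fun ω => (∏ i ∈ S, U i (ω i)) * ∏ i ∈ T, V i (ω i))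
      = if S = T then ρ ^ S.card else 0 := by
    intro S T
    have h1 : ∀ ω : Fin n → Ω, (∏ i ∈ S, U i (ω i)) * ∏ i ∈ T, V i (ω i)
        = ∏ i, (fun i u => (if i ∈ S then U i u else 1) * (if i ∈ T then V i u else 1)) i (ω i) := by
      intro ω
      simp only [Finset.prod_mul_distrib]
      rw [Finset.prod_ite_mem, Finset.prod_ite_mem]; simp
    rw [show (fun ω : Fin n → Ω => (∏ i ∈ S, U i (ω i)) * ∏ i ∈ T, V i (ω i)) = _ from funext h1,
      Ex_prod (fun i u => (if i ∈ S then U i u else 1) * (if i ∈ T then V i u else 1))]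
    split_ifs with hST
    · subst hST
      have : ∀ i, (∑ u, w u * ((if i ∈ S then U i u else 1) * (if i ∈ S then V i u else 1)))
          = if i ∈ S then ρ else 1 := by
        intro i; split_ifs with h
        · exact hUV i
        · simp [hw.sum_one]
      simp only [this]
      rw [Finset.prod_ite_mem]; simp
    · have : ∃ i, (i ∈ S ∧ i ∉ T) ∨ (i ∉ S ∧ i ∈ T) := by
        by_contra h; push Not at h; apply hST; ext i; have := h i; tauto
      obtain ⟨i, hi⟩ := this
      apply Finset.prod_eq_zero (Finset.mem_univ i)
      rcases hi with ⟨h1, h2⟩ | ⟨h1, h2⟩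
      · simp [h1, h2, hU]
      · simp [h1, h2, hV]
  have h2 : ∀ ω : Fin n → Ω, ev c (fun i => U i (ω i)) * ev c' (fun i => V i (ω i))
      = ∑ S, ∑ T, (c S * c' T) * ((∏ i ∈ S, U i (ω i)) * ∏ i ∈ T, V i (ω i)) := by
    intro ω; unfold ev; rw [Finset.sum_mul_sum]
    exact Finset.sum_congr rfl fun S _ => Finset.sum_congr rfl fun T _ => by ring
  simp only [h2, Ex_sum, Ex_const_mul, key]
  simp

lemma Ex_sq (hw : IsPW w) {U : Fin n → Ω → ℝ} (hU : ∀ i, Nice w (U i)) (c : Finset (Fin n) → ℝ) :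
    Ex w (fun ω => ev c (fun i => U i (ω i)) ^ 2) = sqn c := by
  simp only [sq (ev c _)]
  rw [Ex_cov hw (fun i => (hU i).m1) (fun i => (hU i).m1) (ρ := 1)
    (fun i => by simpa [sq] using (hU i).m2)]
  simp [sqn, sq]

lemma ev_indep {J : Finset (Fin n)} {c : Finset (Fin n) → ℝ} (hc : SuppIn J c) {a : Fin n}
    (ha : a ∉ J) (U : Fin n → Ω → ℝ) (ω : Fin n → Ω) (u : Ω) :
    ev c (fun i => U i (Function.update ω a u i)) = ev c (fun i => U i (ω i)) := by
  apply ev_congr hc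
  intro i hi
  rw [Function.update_of_ne]; rintro rfl; exact ha hi

/-- Hypercontractivity (fourth moment). -/
lemma hyper (hw : IsPW w) {U : Fin n → Ω → ℝ} (hU : ∀ i, Nice w (U i)) (d : ℕ) (c : Finset (Fin n) → ℝ) (hc : DegLE d c) :
    Ex w (fun ω => ev c (fun i => U i (ω i)) ^ 4) ≤ 9 ^ d * sqn c ^ 2 := by
  suffices H : ∀ J : Finset (Fin n), ∀ d : ℕ, ∀ c : Finset (Fin n) → ℝ, DegLE d c → SuppIn J c →
      Ex w (fun ω => ev c (fun i => U i (ω i)) ^ 4) ≤ 9 ^ d * sqn c ^ 2 from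
    H univ d c hc (fun S hS => absurd (Finset.subset_univ S) hS)
  intro J
  induction J using Finset.induction_on with
  | empty =>
    intro d c hc hs
    have h1 : ∀ x, ev c x = c ∅ := by
      intro x; unfold ev
      rw [Finset.sum_eq_single ∅]
      · simp
      · intro S _ hS; rw [hs S (by simpa [Finset.subset_empty] using hS)]; simp
      · simp
    have h2 : sqn c = c ∅ ^ 2 := by
      unfold sqn
      rw [Finset.sum_eq_single ∅]
      · intro S _ hS; rw [hs S (by simpa [Finset.subset_empty] using hS)]; simp
      · simp
    simp only [h1, h2, Ex_const hw]
    have : (1 : ℝ) ≤ 9 ^ d := one_le_pow₀ (by norm_num)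
    nlinarith [sq_nonneg (c ∅ ^ 2)]
  | insert a J ha ih =>
    intro d c hc hs
    have hA : SuppIn J (rst a c) := (hs.rst a).mono (by
      rw [Finset.erase_insert ha])
    have hB : SuppIn J (der a c) := (hs.der a).mono (by
      rw [Finset.erase_insert ha])
    set A : (Fin n → Ω) → ℝ := fun ω => ev (rst a c) (fun i => U i (ω i)) with hAdef
    set B : (Fin n → Ω) → ℝ := fun ω => ev (der a c) (fun i => U i (ω i)) with hBdef
    have iA : ∀ ω u, A (Function.update ω a u) = A ω := fun ω u => ev_indep hA ha U ω u
    have iB : ∀ ω u, B (Function.update ω a u) = B ω := fun ω u => ev_indep hB ha U ω u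
    have hexp : Ex w (fun ω => ev c (fun i => U i (ω i)) ^ 4)
        = Ex w (fun ω => A ω ^ 4) + 6 * Ex w (fun ω => A ω ^ 2 * B ω ^ 2)
          + (∑ u, w u * U a u ^ 4) * Ex w (fun ω => B ω ^ 4) := by
      have e1 : ∀ ω : Fin n → Ω, ev c (fun i => U i (ω i)) ^ 4
          = A ω ^ 4 + (U a (ω a) * (4 * A ω ^ 3 * B ω) + ((U a (ω a)) ^ 2 * (6 * (A ω ^ 2 * B ω ^ 2))
            + ((U a (ω a)) ^ 3 * (4 * A ω * B ω ^ 3) + (U a (ω a)) ^ 4 * B ω ^ 4))) := by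
        intro ω; rw [ev_split a]; simp only [hAdef, hBdef]; ring
      simp only [e1]
      rw [Ex_add, Ex_add, Ex_add, Ex_add]
      rw [Ex_indep hw a (U a) (fun ω => 4 * A ω ^ 3 * B ω) (by intro ω u; simp only [iA, iB]),
        Ex_indep hw a (fun u => U a u ^ 2) (fun ω => 6 * (A ω ^ 2 * B ω ^ 2))
          (by intro ω u; simp only [iA, iB]),
        Ex_indep hw a (fun u => U a u ^ 3) (fun ω => 4 * A ω * B ω ^ 3)
          (by intro ω u; simp only [iA, iB]),
        Ex_indep hw a (fun u => U a u ^ 4) (fun ω => B ω ^ 4) (by intro ω u; simp only [iB])]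
      rw [(hU a).m1, (hU a).m2, (hU a).m3, Ex_const_mul]; ring
    have hcs := Ex_CS hw (fun ω => A ω ^ 4) (fun ω => B ω ^ 4) (fun ω => A ω ^ 2 * B ω ^ 2)
      (fun ω => by positivity) (fun ω => by positivity) (fun ω => by apply le_of_eq; ring)
    have hM : 0 ≤ Ex w (fun ω => A ω ^ 2 * B ω ^ 2) := Ex_nonneg hw fun ω => by positivity
    have hB0 : 0 ≤ Ex w (fun ω => B ω ^ 4) := Ex_nonneg hw fun ω => by positivity
    have hA0 : 0 ≤ Ex w (fun ω => A ω ^ 4) := Ex_nonneg hw fun ω => by positivity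
    have hsq := sqn_split a c
    have hαnn := sqn_nonneg (rst a c)
    have hβnn := sqn_nonneg (der a c)
    have ihA := ih d _ (hc.rst a) hA
    change Ex w (fun ω => A ω ^ 4) ≤ _ at ihA
    rw [hexp, hsq]
    set α := sqn (rst a c)
    set β := sqn (der a c)
    have ihB : 9 * Ex w (fun ω => B ω ^ 4) ≤ 9 ^ d * β ^ 2 := by
      cases d with
      | zero =>
        have : ∀ ω, B ω = 0 := by intro ω; simp only [hBdef]; rw [hc.der_zero, ev_zero]
        simp only [this]
        simp [Ex]; positivity
      | succ d =>
        have := ih d _ (hc.der a) hB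
        change Ex w (fun ω => B ω ^ 4) ≤ 9 ^ d * β ^ 2 at this
        rw [pow_succ]; linarith
    have hcross : 3 * Ex w (fun ω => A ω ^ 2 * B ω ^ 2) ≤ 9 ^ d * (α * β) := by
      apply le_of_sq_le_sq_nn
      · have h9 : (0 : ℝ) ≤ 9 ^ d := by positivity
        calc (3 * Ex w (fun ω => A ω ^ 2 * B ω ^ 2)) ^ 2
            = 9 * (Ex w (fun ω => A ω ^ 2 * B ω ^ 2)) ^ 2 := by ring
          _ ≤ 9 * (Ex w (fun ω => A ω ^ 4) * Ex w (fun ω => B ω ^ 4)) := by linarith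
          _ = Ex w (fun ω => A ω ^ 4) * (9 * Ex w (fun ω => B ω ^ 4)) := by ring
          _ ≤ (9 ^ d * α ^ 2) * (9 ^ d * β ^ 2) := by
            apply mul_le_mul ihA ihB (by linarith) (by positivity)
          _ = (9 ^ d * (α * β)) ^ 2 := by ring
      · positivity
    have h4 : (∑ u, w u * U a u ^ 4) * Ex w (fun ω => B ω ^ 4) ≤ 9 * Ex w (fun ω => B ω ^ 4) :=
      mul_le_mul_of_nonneg_right ((hU a).m4 hw) hB0
    nlinarith

end Moments

/-! ### The cube -/

/-- Uniform weights on a bit. -/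
noncomputable def wb : Bool → ℝ := fun _ => 1 / 2

lemma wb_pw : IsPW wb := ⟨fun _ => by unfold wb; norm_num, by unfold wb; simp⟩

lemma chi_sq (b : Bool) : chi b ^ 2 = 1 := by cases b <;> simp [chi]

lemma chi_not (b : Bool) : chi (!b) = - chi b := by cases b <;> simp [chi]

lemma nice_chi : Nice wb chi :=
  ⟨by simp [wb, chi], by simp [wb, chi], by simp [wb, chi]; norm_num,
    fun u => by rw [chi_sq]; norm_num⟩

/-- Value at a cube point. -/
noncomputable def pc {n : ℕ} (c : Finset (Fin n) → ℝ) (x : Fin n → Bool) : ℝ :=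
  ev c (fun i => chi (x i))

/-- Number of sign changes. -/
noncomputable def sn {n : ℕ} (c : Finset (Fin n) → ℝ) (x : Fin n → Bool) : ℕ :=
  (univ.filter (fun i => pc c x * pc c (flipAt x i) < 0)).card

/-- Boolean surface area. -/
noncomputable def BS {n : ℕ} (c : Finset (Fin n) → ℝ) : ℝ := Ex wb (fun x => √(sn c x : ℝ))

/-- The weight `Var / ‖p‖²`. -/
noncomputable def wt {n : ℕ} (c : Finset (Fin n) → ℝ) : ℝ := vr c / sqn c

section Cube
variable {n : ℕ}

lemma wt_nonneg (c : Finset (Fin n) → ℝ) : 0 ≤ wt c := div_nonneg (vr_nonneg c) (sqn_nonneg c)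

lemma vr_le_sqn (c : Finset (Fin n) → ℝ) : vr c ≤ sqn c := by
  unfold vr; nlinarith [sq_nonneg (c ∅)]

lemma wt_le_one (c : Finset (Fin n) → ℝ) : wt c ≤ 1 :=
  div_le_one_of_le₀ (vr_le_sqn c) (sqn_nonneg c)

lemma Ex_pc_sq (c : Finset (Fin n) → ℝ) : Ex wb (fun x => pc c x ^ 2) = sqn c :=
  Ex_sq wb_pw (U := fun _ => chi) (fun _ => nice_chi) c

lemma Ex_pc (c : Finset (Fin n) → ℝ) : Ex wb (fun x => pc c x) = c ∅ := by
  have := Ex_cov (n := n) wb_pw (U := fun _ => chi) (V := fun _ => chi) (ρ := 1)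
    (fun _ => nice_chi.m1) (fun _ => nice_chi.m1) (fun i => by simpa [sq] using nice_chi.m2)
    c (fun S => if S = ∅ then 1 else 0)
  have h1 : ∀ x : Fin n → ℝ, ev (fun S => if S = ∅ then (1:ℝ) else 0) x = 1 := by
    intro x; simp [ev, ite_mul]
  simp only [h1, mul_one] at this
  simpa [pc] using this

lemma hyper_pc {d : ℕ} {c : Finset (Fin n) → ℝ} (hc : DegLE d c) :
    Ex wb (fun x => pc c x ^ 4) ≤ 9 ^ d * sqn c ^ 2 :=
  hyper wb_pw (U := fun _ => chi) (fun _ => nice_chi) d c hc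

lemma pc_cen (c : Finset (Fin n) → ℝ) (x : Fin n → Bool) : pc (cen c) x = pc c x - c ∅ :=
  ev_cen c _

lemma Ex_flip (i : Fin n) (F : (Fin n → Bool) → ℝ) :
    Ex wb (fun x => F (flipAt x i)) = Ex wb F := by
  rw [Ex_resample wb_pw i, Ex_resample wb_pw i F]
  congr 1; ext x
  simp [flipAt, wb]; ring

lemma pc_flip_notMem {J : Finset (Fin n)} {c : Finset (Fin n) → ℝ} (hc : SuppIn J c)
    {i : Fin n} (hi : i ∉ J) (x : Fin n → Bool) : pc c (flipAt x i) = pc c x := by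
  apply ev_congr hc
  intro j hj
  have : j ≠ i := by rintro rfl; exact hi hj
  simp [flipAt, Function.update_of_ne this]

lemma sn_le {J : Finset (Fin n)} {c : Finset (Fin n) → ℝ} (hc : SuppIn J c)
    (x : Fin n → Bool) : sn c x ≤ J.card := by
  apply Finset.card_le_card
  intro i hi
  simp only [Finset.mem_filter, Finset.mem_univ, true_and] at hi
  by_contra h
  rw [pc_flip_notMem hc h] at hi
  nlinarith [mul_self_nonneg (pc c x)]

lemma sqrt_nat_le (k : ℕ) : √(k : ℝ) ≤ k := by
  rcases Nat.eq_zero_or_pos k with rfl | h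
  · simp
  · rw [Real.sqrt_le_left (by positivity)]
    have : (1 : ℝ) ≤ k := by exact_mod_cast h
    nlinarith

lemma BS_nonneg (c : Finset (Fin n) → ℝ) : 0 ≤ BS c :=
  Ex_nonneg wb_pw fun _ => Real.sqrt_nonneg _

lemma BS_le_card {J : Finset (Fin n)} {c : Finset (Fin n) → ℝ} (hc : SuppIn J c) :
    BS c ≤ J.card := by
  calc BS c ≤ Ex wb (fun _ : Fin n → Bool => (J.card : ℝ)) := Ex_mono wb_pw fun x =>
        (sqrt_nat_le _).trans (by exact_mod_cast sn_le hc x)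
    _ = _ := Ex_const wb_pw _

/-- Union bound through a high even moment. -/
lemma BS_le_moment {J : Finset (Fin n)} {c : Finset (Fin n) → ℝ} (hc : SuppIn J c)
    (hμ : c ∅ ≠ 0) (Q : ℕ) :
    BS c ≤ 2 * J.card * (Ex wb (fun x => (pc (cen c) x) ^ (2 * Q)) / (c ∅) ^ (2 * Q)) := by
  set h : (Fin n → Bool) → ℝ := fun x => (pc (cen c) x) ^ (2 * Q) / (c ∅) ^ (2 * Q) with hh
  have hnn : ∀ x, 0 ≤ h x := fun x => by
    simp only [hh]
    exact div_nonneg ((even_two_mul Q).pow_nonneg _) ((even_two_mul Q).pow_nonneg _)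
  have hbig : ∀ x, pc c x * c ∅ ≤ 0 → 1 ≤ h x := by
    intro x hx
    simp only [hh]
    rw [← div_pow, pow_mul]
    apply one_le_pow₀
    rw [div_pow, one_le_div (by positivity), pc_cen]
    nlinarith [sq_nonneg (pc c x)]
  have hpt : ∀ x, √(sn c x : ℝ) ≤ ∑ i ∈ J, (h x + h (flipAt x i)) := by
    intro x
    refine (sqrt_nat_le _).trans ?_
    have h1 : (sn c x : ℝ) ≤ ∑ i ∈ J, (if pc c x * pc c (flipAt x i) < 0 then (1 : ℝ) else 0) := by
      rw [← Finset.sum_filter, Finset.sum_const, nsmul_eq_mul, mul_one]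
      unfold sn
      norm_cast
      apply Finset.card_le_card
      intro i hi
      simp only [Finset.mem_filter, Finset.mem_univ, true_and] at hi ⊢
      refine ⟨?_, hi⟩
      by_contra h
      rw [pc_flip_notMem hc h] at hi
      nlinarith [mul_self_nonneg (pc c x)]
    refine h1.trans (Finset.sum_le_sum fun i _ => ?_)
    split_ifs with hi
    · by_cases h2 : pc c x * c ∅ ≤ 0
      · linarith [hbig x h2, hnn (flipAt x i)]
      · have h3 : pc c (flipAt x i) * c ∅ ≤ 0 := by
          push Not at h2
          by_contra h4
          push Not at h4
          have := mul_pos h2 h4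
          have h5 : 0 < c ∅ ^ 2 := by positivity
          nlinarith
        linarith [hbig _ h3, hnn x]
    · linarith [hnn x, hnn (flipAt x i)]
  calc BS c ≤ Ex wb (fun x => ∑ i ∈ J, (h x + h (flipAt x i))) := Ex_mono wb_pw hpt
    _ = ∑ i ∈ J, (2 * Ex wb h) := by
        rw [Ex_sum]
        refine Finset.sum_congr rfl fun i _ => ?_
        rw [Ex_add, Ex_flip i h]; ring
    _ = _ := by
        rw [Finset.sum_const, nsmul_eq_mul]
        simp only [hh, Ex_div_const]; ring

lemma coeff_zero_of_sqn {c : Finset (Fin n) → ℝ} (h : sqn c = 0) : c = fun _ => 0 := by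
  ext S
  have := (Finset.sum_eq_zero_iff_of_nonneg (fun S _ => sq_nonneg (c S))).mp h S (mem_univ S)
  simpa using this

lemma BS_zero {c : Finset (Fin n) → ℝ} (h : sqn c = 0) : BS c = 0 := by
  have := coeff_zero_of_sqn h
  subst this
  simp [BS, sn, pc, ev_zero, Ex]

lemma BS_apriori {J : Finset (Fin n)} {c : Finset (Fin n) → ℝ} (hc : SuppIn J c) :
    BS c ≤ 4 * J.card * wt c := by
  rcases (sqn_nonneg c).eq_or_lt with h0 | h0
  · rw [BS_zero h0.symm]; have := wt_nonneg c; positivity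
  have hv := vr_nonneg c
  have hsq := sqn_eq c
  have hJ : (0 : ℝ) ≤ J.card := by positivity
  by_cases h : c ∅ ^ 2 ≤ vr c
  · have h1 : 1 / 2 ≤ wt c := by
      unfold wt; rw [div_le_div_iff₀ (by norm_num) h0]; linarith
    have := BS_le_card hc
    nlinarith
  · push Not at h
    have hμ : c ∅ ≠ 0 := by rintro h'; rw [h'] at h; simp at h; linarith
    have h1 := BS_le_moment hc hμ 1
    rw [mul_one, Ex_pc_sq, sqn_cen] at h1
    have hp : 0 < c ∅ ^ 2 := by positivity
    have h2 : vr c / c ∅ ^ 2 ≤ 2 * wt c := by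
      unfold wt; rw [mul_div_assoc', div_le_div_iff₀ hp h0]; nlinarith
    nlinarith

lemma prod_symmDiff (S T : Finset (Fin n)) (x : Fin n → Bool) :
    (∏ i ∈ S, chi (x i)) * ∏ i ∈ T, chi (x i) = ∏ i ∈ symmDiff S T, chi (x i) := by
  have e : ∀ S : Finset (Fin n), ∏ i ∈ S, chi (x i) = ∏ i, if i ∈ S then chi (x i) else 1 := by
    intro S; rw [Finset.prod_ite_mem]; simp
  rw [e S, e T, e, ← Finset.prod_mul_distrib]
  refine Finset.prod_congr rfl fun i _ => ?_
  have := chi_sq (x i)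
  by_cases h1 : i ∈ S <;> by_cases h2 : i ∈ T <;> simp [h1, h2, Finset.mem_symmDiff]
  nlinarith

lemma exists_sq {d : ℕ} {c : Finset (Fin n) → ℝ} (hc : DegLE d c) :
    ∃ c' : Finset (Fin n) → ℝ, DegLE (2 * d) c' ∧ ∀ x, pc c' x = pc c x ^ 2 := by
  refine ⟨fun U => ∑ S, c S * c (symmDiff S U), ?_, ?_⟩
  · intro U hU
    apply Finset.sum_eq_zero
    intro S _
    by_cases h1 : d < S.card
    · rw [hc S h1]; simp
    · rw [hc (symmDiff S U)]
      · simp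
      · by_contra h2
        have : U = symmDiff S (symmDiff S U) := by simp
        have h3 : U.card ≤ S.card + (symmDiff S U).card := by
          conv_lhs => rw [this]
          refine (Finset.card_le_card ?_).trans (Finset.card_union_le _ _)
          intro i; simp [Finset.mem_symmDiff]; tauto
        omega
  · intro x
    unfold pc ev
    rw [sq, Finset.sum_mul_sum]
    simp only [Finset.sum_mul]
    rw [Finset.sum_comm]
    refine Finset.sum_congr rfl fun S _ => ?_
    refine Finset.sum_bij' (fun U _ => symmDiff S U) (fun U _ => symmDiff S U) (by simp) (by simp)
      (by simp) (by simp) ?_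
    intro U _
    rw [show c S * ∏ i ∈ S, chi (x i) = (∏ i ∈ S, chi (x i)) * c S by ring]
    have := prod_symmDiff S (symmDiff S U) x
    rw [symmDiff_symmDiff_cancel_left] at this
    rw [← this]; ring

lemma high_moment (j : ℕ) : ∀ {d : ℕ} {c : Finset (Fin n) → ℝ}, DegLE d c →
    Ex wb (fun x => pc c x ^ (2 * 2 ^ j)) ≤ (9 ^ (d * j) * sqn c) ^ (2 ^ j) := by
  induction j with
  | zero => intro d c hc; simp [Ex_pc_sq]
  | succ j ih =>
    intro d c hc
    obtain ⟨c', hc', h⟩ := exists_sq hc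
    have e : ∀ x, pc c x ^ (2 * 2 ^ (j + 1)) = pc c' x ^ (2 * 2 ^ j) := by
      intro x; rw [h, ← pow_mul]; congr 1; ring
    simp only [e]
    refine (ih hc').trans ?_
    have h4 : sqn c' ≤ 9 ^ d * sqn c ^ 2 := by
      rw [← Ex_pc_sq]; simp only [h, ← pow_mul]; exact hyper_pc hc
    calc (9 ^ (2 * d * j) * sqn c') ^ 2 ^ j ≤ (9 ^ (2 * d * j) * (9 ^ d * sqn c ^ 2)) ^ 2 ^ j := by
          have := sqn_nonneg c'
          gcongr
      _ ≤ (9 ^ (2 * d * j) * (9 ^ (2 * d) * sqn c ^ 2)) ^ 2 ^ j := by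
          have := sqn_nonneg c
          gcongr
          · norm_num
          · omega
      _ = ((9 ^ (d * (j + 1)) * sqn c) ^ 2) ^ 2 ^ j := by
          congr 1; ring
      _ = _ := by rw [← pow_mul]; congr 1; ring

/-- Large-mean case. -/
lemma BS_large_mean {d j β : ℕ} {J : Finset (Fin n)} {c : Finset (Fin n) → ℝ} (hd : DegLE d c)
    (hc : SuppIn J c) (h0 : 0 < sqn c) (hv : vr c * (4 ^ β) ^ 2 ≤ c ∅ ^ 2)
    (h9 : (9 : ℝ) ^ (d * j) ≤ 2 ^ β) (hj : β + 2 ≤ 2 ^ j) (hJ : (J.card : ℝ) ≤ (4 ^ β) ^ β) :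
    BS c ≤ 4 * wt c := by
  have hvn := vr_nonneg c
  have hsq := sqn_eq c
  have hμ : c ∅ ≠ 0 := by
    rintro h'; rw [h'] at hv hsq
    have : vr c * (4 ^ β) ^ 2 > 0 := by
      have : 0 < vr c := by simpa [hsq] using h0
      positivity
    simp at hv; linarith
  have hp : 0 < c ∅ ^ 2 := by positivity
  have h1 := BS_le_moment hc hμ (2 ^ j)
  have h2 := high_moment j hd.cen
  rw [sqn_cen] at h2
  set t := vr c / c ∅ ^ 2 with ht
  have ht0 : 0 ≤ t := by positivity
  set N : ℝ := 4 ^ β with hN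
  have hN1 : 1 ≤ N := one_le_pow₀ (by norm_num)
  have hNp : 0 < N := by linarith
  have htN : t * N ^ 2 ≤ 1 := by rw [ht, div_mul_eq_mul_div, div_le_one hp]; exact hv
  have hs : ((2 : ℝ) ^ β) ^ 2 = N := by rw [hN, ← pow_mul, mul_comm, pow_mul]; norm_num
  have hwt : t ≤ 2 * wt c := by
    unfold wt; rw [ht, mul_div_assoc', div_le_div_iff₀ hp h0]
    have : vr c ≤ c ∅ ^ 2 := by
      refine le_trans ?_ hv
      nlinarith [one_le_pow₀ (n := 2) hN1]
    nlinarith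
  have h3 : Ex wb (fun x => pc (cen c) x ^ (2 * 2 ^ j)) / c ∅ ^ (2 * 2 ^ j)
      ≤ (2 ^ β * t) ^ (2 ^ j) := by
    rw [div_le_iff₀ (by rw [pow_mul]; positivity), pow_mul (c ∅), ← mul_pow]
    refine h2.trans ?_
    have : t * c ∅ ^ 2 = vr c := by rw [ht]; field_simp
    rw [mul_assoc, this]
    gcongr
  -- `N^β (2^β t)^Q ≤ t`
  obtain ⟨q, hq⟩ := Nat.exists_eq_add_of_le hj
  set s : ℝ := 2 ^ β with hsdef
  have hs1 : 1 ≤ s := one_le_pow₀ (by norm_num)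
  have hst : s * t * N ≤ 1 := by
    have : s ≤ N := by nlinarith
    calc s * t * N ≤ N * t * N := by gcongr
      _ = t * N ^ 2 := by ring
      _ ≤ 1 := htN
  have hst1 : s * t ≤ 1 := by nlinarith [mul_nonneg (by linarith : 0 ≤ s) ht0]
  have h4 : N ^ β * (s * t) ^ (2 ^ j) ≤ t := by
    have hst0 : 0 ≤ s * t := by positivity
    have e : N ^ β * (s * t) ^ (β + 2 + q) = (s * t * N) ^ β * (s * t) ^ q * (s * (s * t)) * t := by
      rw [pow_add, pow_add, mul_pow (s * t) N]; ring
    rw [hq, e]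
    have a1 : (s * t * N) ^ β ≤ 1 := pow_le_one₀ (by positivity) hst
    have a2 : (s * t) ^ q ≤ 1 := pow_le_one₀ hst0 hst1
    have a3 : s * (s * t) ≤ 1 := by nlinarith
    have a4 : (s * t * N) ^ β * (s * t) ^ q ≤ 1 := mul_le_one₀ a1 (by positivity) a2
    have a5 : (s * t * N) ^ β * (s * t) ^ q * (s * (s * t)) ≤ 1 :=
      mul_le_one₀ a4 (by positivity) a3
    nlinarith
  have h5 : 0 ≤ (s * t) ^ (2 ^ j) := by positivity
  calc BS c ≤ 2 * J.card * ((s * t) ^ (2 ^ j)) := h1.trans (by gcongr)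
    _ ≤ 2 * (N ^ β * (s * t) ^ (2 ^ j)) := by nlinarith
    _ ≤ _ := by linarith

end Cube

/-! ### Restrictions -/

/-- Restriction of the variable `i` to the bit `b`. -/
noncomputable def res {n : ℕ} (i : Fin n) (b : Bool) (c : Finset (Fin n) → ℝ) :
    Finset (Fin n) → ℝ := fun S => rst i c S + chi b * der i c S

/-- The comparison function. -/
noncomputable def Ph (a b : ℝ) : ℝ := (a - b) ^ 2 / (a ^ 2 + b ^ 2)

section Restr
variable {n : ℕ}

lemma res_degLE {d : ℕ} {c : Finset (Fin n) → ℝ} (hc : DegLE d c) (i : Fin n) (b : Bool) :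
    DegLE d (res i b c) := by
  intro S hS; unfold res; rw [hc.rst i S hS, hc.der_le i S hS]; simp

lemma res_suppIn {J : Finset (Fin n)} {c : Finset (Fin n) → ℝ} (hc : SuppIn J c) (i : Fin n)
    (b : Bool) : SuppIn (J.erase i) (res i b c) := by
  intro S hS; unfold res; rw [hc.rst i S hS, hc.der i S hS]; simp

lemma pc_res (i : Fin n) (b : Bool) (c : Finset (Fin n) → ℝ) (x : Fin n → Bool) :
    pc (res i b c) x = pc c (Function.update x i b) := by
  have h1 : pc (res i b c) x = ev (rst i c) (fun j => chi (x j))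
      + chi b * ev (der i c) (fun j => chi (x j)) := by
    unfold pc res; rw [ev_add, ev_smul]
  rw [h1]
  unfold pc
  rw [ev_split i c]
  simp only [Function.update_self]
  have hu : ∀ j ∈ univ.erase i, chi (x j) = chi (Function.update x i b j) := by
    intro j hj; rw [Function.update_of_ne (Finset.ne_of_mem_erase hj)]
  rw [ev_congr (suppIn_rst i c) hu, ev_congr (suppIn_der i c) hu]

lemma sqn_res (i : Fin n) (c : Finset (Fin n) → ℝ) :
    (sqn (res i true c) + sqn (res i false c)) / 2 = sqn c := by
  rw [sqn_split i c]
  unfold sqn res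
  rw [← Finset.sum_add_distrib, ← Finset.sum_add_distrib, Finset.sum_div]
  refine Finset.sum_congr rfl fun S _ => ?_
  simp [chi]; ring

lemma mean_res (i : Fin n) (c : Finset (Fin n) → ℝ) :
    ((res i true c) ∅ + (res i false c) ∅) / 2 = c ∅ := by
  simp [res, chi, rst]; ring

lemma Ex_res4 (i : Fin n) (c : Finset (Fin n) → ℝ) (k : ℕ) :
    (Ex wb (fun x => pc (res i true c) x ^ k) + Ex wb (fun x => pc (res i false c) x ^ k)) / 2
      = Ex wb (fun x => pc c x ^ k) := by
  rw [Ex_resample wb_pw i (fun x => pc c x ^ k), ← Ex_add, ← Ex_div_const]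
  congr 1; ext x
  simp only [pc_res, wb, Fintype.sum_bool]; ring

lemma der_res_ne {i j : Fin n} (h : j ≠ i) (b : Bool) (c : Finset (Fin n) → ℝ) :
    der j (res i b c) = res i b (der j c) := by
  ext S
  unfold res der rst
  have : (i ∈ insert j S) ↔ i ∈ S := by simp [Ne.symm h]
  have h2 : (j ∈ insert i S) ↔ j ∈ S := by simp [h]
  simp only [this, h2, Finset.insert_comm j i]
  by_cases h3 : i ∈ S <;> by_cases h4 : j ∈ S <;> simp [h3, h4]

lemma infl_res_self (i : Fin n) (b : Bool) (c : Finset (Fin n) → ℝ) : infl i (res i b c) = 0 := by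
  unfold infl sqn
  apply Finset.sum_eq_zero
  intro S _
  simp [der, res, rst]

lemma infl_res_ne {i j : Fin n} (h : j ≠ i) (c : Finset (Fin n) → ℝ) :
    (infl j (res i true c) + infl j (res i false c)) / 2 = infl j c := by
  unfold infl; rw [der_res_ne h, der_res_ne h, sqn_res]

lemma sum_infl_res (i : Fin n) (c : Finset (Fin n) → ℝ) :
    (∑ j, infl j (res i true c) + ∑ j, infl j (res i false c)) / 2
      = ∑ j, infl j c - infl i c := by
  rw [← Finset.add_sum_erase _ (fun j => infl j (res i true c)) (mem_univ i),
    ← Finset.add_sum_erase _ (fun j => infl j (res i false c)) (mem_univ i),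
    ← Finset.add_sum_erase _ (fun j => infl j c) (mem_univ i)]
  simp only [infl_res_self, zero_add, add_sub_cancel_left]
  rw [← Finset.sum_add_distrib, Finset.sum_div]
  refine Finset.sum_congr rfl fun j hj => infl_res_ne (Finset.ne_of_mem_erase hj) c

lemma exists_mres {d : ℕ} {J : Finset (Fin n)} {c : Finset (Fin n) → ℝ} (hd : DegLE d c)
    (hJ : SuppIn J c) (A : Finset (Fin n)) (x : Fin n → ℝ) :
    ∃ c' : Finset (Fin n) → ℝ, DegLE d c' ∧ SuppIn (J \ A) c' ∧
      ∀ y, ev c' y = ev c (fun i => if i ∈ A then x i else y i) := by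
  induction A using Finset.induction_on with
  | empty => exact ⟨c, hd, by simpa using hJ, fun y => by simp⟩
  | insert a A ha ih =>
    obtain ⟨c', h1, h2, h3⟩ := ih
    refine ⟨fun S => rst a c' S + x a * der a c' S, ?_, ?_, ?_⟩
    · intro S hS; beta_reduce; rw [h1.rst a S hS, h1.der_le a S hS]; simp
    · rw [Finset.sdiff_insert]
      intro S hS; beta_reduce; rw [h2.rst a S hS, h2.der a S hS]; simp
    · intro y
      rw [ev_add, ev_smul]
      have hu : ∀ j ∈ univ.erase a, y j = Function.update y a (x a) j := by
        intro j hj; rw [Function.update_of_ne (Finset.ne_of_mem_erase hj)]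
      rw [ev_congr (suppIn_rst a c') hu, ev_congr (suppIn_der a c') hu]
      have := ev_split a c' (Function.update y a (x a))
      rw [Function.update_self] at this
      rw [← this, h3]
      congr 1; ext i
      by_cases h : i = a
      · subst h; simp [ha]
      · simp [h]

/-- Weight is controlled by the two-sample comparison. -/
lemma wt_le_Ph {d : ℕ} {c : Finset (Fin n) → ℝ} (hc : DegLE d c) :
    wt c ≤ 2 * 9 ^ d * Ex wb (fun y : Fin n → Bool => Ex wb (fun y' : Fin n → Bool =>
      Ph (pc c y) (pc c y'))) := by
  set w2 : Bool × Bool → ℝ := fun u => wb u.1 * wb u.2 with hw2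
  have hpw : IsPW w2 := ⟨fun u => by simp [hw2, wb], by
    simp [hw2, wb]; norm_num⟩
  have fub : ∀ F : (Fin n → Bool) → (Fin n → Bool) → ℝ,
      Ex w2 (fun ω => F (fun i => (ω i).1) (fun i => (ω i).2))
        = Ex wb (fun y => Ex wb (fun y' => F y y')) := by
    intro F
    rw [hw2, Ex_prod_type (w := wb) wb]
  have hΦ0 : ∀ a b, 0 ≤ Ph a b := fun a b => by unfold Ph; positivity
  set E := Ex wb (fun y : Fin n → Bool => Ex wb (fun y' : Fin n → Bool =>
      Ph (pc c y) (pc c y'))) with hE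
  have hE0 : 0 ≤ E := Ex_nonneg wb_pw fun _ => Ex_nonneg wb_pw fun _ => hΦ0 _ _
  rcases (sqn_nonneg c).eq_or_lt with h0 | h0
  · unfold wt; rw [← h0, div_zero]; positivity
  rcases (vr_nonneg c).eq_or_lt with hv | hv
  · unfold wt; rw [← hv, zero_div]; positivity
  have cs := Ex_CS hpw
    (fun ω : Fin n → Bool × Bool => Ph (pc c (fun i => (ω i).1)) (pc c (fun i => (ω i).2)))
    (fun ω => (pc c (fun i => (ω i).1) - pc c (fun i => (ω i).2)) ^ 2 *
      (pc c (fun i => (ω i).1) ^ 2 + pc c (fun i => (ω i).2) ^ 2))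
    (fun ω => (pc c (fun i => (ω i).1) - pc c (fun i => (ω i).2)) ^ 2)
    (fun ω => hΦ0 _ _) (fun ω => by positivity) (by
      intro ω
      set a := pc c (fun i => (ω i).1)
      set b := pc c (fun i => (ω i).2)
      unfold Ph
      rcases eq_or_ne (a ^ 2 + b ^ 2) 0 with h | h
      · have ha : a = 0 := by nlinarith
        have hb : b = 0 := by nlinarith
        simp [ha, hb]
      · rw [div_mul_eq_mul_div, le_div_iff₀ (by positivity)]
        apply le_of_eq; ring)
  have e1 := fub (fun y y' => Ph (pc c y) (pc c y'))
  have e2 := fub (fun y y' => (pc c y - pc c y') ^ 2)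
  have e3 := fub (fun y y' => (pc c y - pc c y') ^ 2 * (pc c y ^ 2 + pc c y' ^ 2))
  rw [e1, e2, e3] at cs
  -- the second moment
  have hlin : Ex wb (fun y : Fin n → Bool => Ex wb (fun y' => (pc c y - pc c y') ^ 2))
      = 2 * vr c := by
    have : ∀ y : Fin n → Bool, Ex wb (fun y' => (pc c y - pc c y') ^ 2)
        = pc c y ^ 2 - 2 * c ∅ * pc c y + sqn c := by
      intro y
      have : ∀ y', (pc c y - pc c y') ^ 2 = pc c y ^ 2 - 2 * pc c y * pc c y' + pc c y' ^ 2 := by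
        intro y'; ring
      simp only [this]
      rw [Ex_add, Ex_sub, Ex_const wb_pw, Ex_const_mul, Ex_pc, Ex_pc_sq]; ring
    simp only [this]
    rw [Ex_add, Ex_sub, Ex_const wb_pw, Ex_const_mul, Ex_pc, Ex_pc_sq]; unfold vr; ring
  have hquad : Ex wb (fun y : Fin n → Bool => Ex wb (fun y' =>
      (pc c y - pc c y') ^ 2 * (pc c y ^ 2 + pc c y' ^ 2))) ≤ 8 * 9 ^ d * (vr c * sqn c) := by
    set h := fun y => pc (cen c) y with hh
    set M := Ex wb (fun y => h y ^ 2 * pc c y ^ 2) with hM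
    have hM0 : 0 ≤ M := Ex_nonneg wb_pw fun _ => by positivity
    have hMle : M ≤ 9 ^ d * (vr c * sqn c) := by
      have cs2 := Ex_CS wb_pw (fun y => h y ^ 4) (fun y => pc c y ^ 4)
        (fun y => h y ^ 2 * pc c y ^ 2) (fun _ => by positivity) (fun _ => by positivity)
        (fun _ => by apply le_of_eq; ring)
      have a1 := hyper_pc hc.cen
      have a2 := hyper_pc hc
      rw [sqn_cen] at a1
      apply le_of_sq_le_sq_nn _ (by positivity)
      calc M ^ 2 ≤ _ := cs2
        _ ≤ (9 ^ d * vr c ^ 2) * (9 ^ d * sqn c ^ 2) :=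
          mul_le_mul a1 a2 (Ex_nonneg wb_pw fun _ => by positivity) (by positivity)
        _ = _ := by ring
    have hpt : ∀ y y', (pc c y - pc c y') ^ 2 * (pc c y ^ 2 + pc c y' ^ 2)
        ≤ 2 * (h y ^ 2 * pc c y ^ 2) + 2 * h y ^ 2 * pc c y' ^ 2 + 2 * pc c y ^ 2 * h y' ^ 2
          + 2 * (h y' ^ 2 * pc c y' ^ 2) := by
      intro y y'
      have e : pc c y - pc c y' = h y - h y' := by simp only [hh, pc_cen]; ring
      rw [e]
      have : (h y - h y') ^ 2 ≤ 2 * h y ^ 2 + 2 * h y' ^ 2 := by nlinarith [sq_nonneg (h y + h y')]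
      nlinarith [sq_nonneg (pc c y), sq_nonneg (pc c y')]
    have h2 : Ex wb (fun y => h y ^ 2) = vr c := by
      simp only [hh]; rw [Ex_pc_sq, sqn_cen]
    calc _ ≤ Ex wb (fun y : Fin n → Bool => Ex wb (fun y' => 2 * (h y ^ 2 * pc c y ^ 2)
          + 2 * h y ^ 2 * pc c y' ^ 2 + 2 * pc c y ^ 2 * h y' ^ 2
          + 2 * (h y' ^ 2 * pc c y' ^ 2))) :=
          Ex_mono wb_pw fun y => Ex_mono wb_pw fun y' => hpt y y'
      _ = 2 * M + 2 * vr c * sqn c + 2 * sqn c * vr c + 2 * M := by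
          have : ∀ y, Ex wb (fun y' => 2 * (h y ^ 2 * pc c y ^ 2)
            + 2 * h y ^ 2 * pc c y' ^ 2 + 2 * pc c y ^ 2 * h y' ^ 2
            + 2 * (h y' ^ 2 * pc c y' ^ 2)) = 2 * (h y ^ 2 * pc c y ^ 2)
            + 2 * sqn c * h y ^ 2  + 2 * vr c * pc c y ^ 2 + 2 * M := by
            intro y
            rw [Ex_add, Ex_add, Ex_add, Ex_const wb_pw, Ex_const_mul, Ex_const_mul, Ex_const_mul,
              h2, Ex_pc_sq]; ring
          simp only [this]
          rw [Ex_add, Ex_add, Ex_add, Ex_const wb_pw, Ex_const_mul, Ex_const_mul, Ex_const_mul,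
              h2, Ex_pc_sq]; ring
      _ ≤ _ := by
          have : (1 : ℝ) ≤ 9 ^ d := one_le_pow₀ (by norm_num)
          have h3 : 0 < vr c * sqn c := by positivity
          nlinarith
  rw [hlin] at cs
  have h5 : (2 * vr c) ^ 2 ≤ E * (8 * 9 ^ d * (vr c * sqn c)) :=
    cs.trans (mul_le_mul_of_nonneg_left hquad hE0)
  unfold wt
  rw [div_le_iff₀ h0]
  have : vr c * (4 * vr c) ≤ vr c * (8 * 9 ^ d * E * sqn c) := by nlinarith
  have := le_of_mul_le_mul_left this hv
  linarith

/-- The harmonic majorant of `wt`. -/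
lemma wt_le_harm (q : Finset (Fin n) → ℝ) {μ : ℝ} (hμ : μ ≠ 0) :
    wt q ≤ 4 * (sqn q - 2 * μ * q ∅ + μ ^ 2) / μ ^ 2 := by
  have hp : 0 < μ ^ 2 := by positivity
  have hs := sqn_eq q
  have hv := vr_nonneg q
  by_cases h : μ ^ 2 ≤ 4 * (q ∅ - μ) ^ 2
  · refine (wt_le_one q).trans ?_
    rw [one_le_div hp, hs]; nlinarith
  · push Not at h
    have h2 : μ ^ 2 ≤ 4 * q ∅ ^ 2 := by
      nlinarith [sq_nonneg (2 * q ∅ - μ)]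
    have h3 : 0 < sqn q := by nlinarith
    unfold wt
    rw [div_le_div_iff₀ h3 hp]
    have : 4 * (sqn q - 2 * μ * q ∅ + μ ^ 2) ≥ 4 * vr q := by
      rw [hs]; nlinarith [sq_nonneg (q ∅ - μ)]
    nlinarith

lemma min_le_wt (c : Finset (Fin n) → ℝ) (h0 : 0 < sqn c) {E : ℝ} (h1 : E ≤ 1)
    (h2 : c ∅ ≠ 0 → E ≤ 4 * vr c / c ∅ ^ 2) : E ≤ 5 * wt c := by
  have hs := sqn_eq c
  have hv := vr_nonneg c
  unfold wt
  by_cases h : c ∅ ^ 2 ≤ 4 * vr c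
  · refine h1.trans ?_
    rw [mul_div_assoc', one_le_div h0]; linarith
  · push Not at h
    have hμ : c ∅ ≠ 0 := by intro h'; rw [h'] at h; simp at h; linarith
    refine (h2 hμ).trans ?_
    have hp : 0 < c ∅ ^ 2 := by positivity
    rw [mul_div_assoc', div_le_div_iff₀ hp h0]; nlinarith

end Restr

/-! ### Taylor expansion with cubic error and the Lindeberg argument -/

/-- Second order Taylor expansion with cubic error. -/
def Tay (K : ℝ) (F : ℝ → ℝ → ℝ) : Prop :=
  ∀ a b, ∃ g1 g2 g3 g4 g5 : ℝ, ∀ u v,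
    |F (a + u) (b + v) - (F a b + g1 * u + g2 * v + g3 * u ^ 2 + g4 * (u * v) + g5 * v ^ 2)|
      ≤ K * (|u| ^ 3 + |v| ^ 3)

lemma cube_sum_le {u v : ℝ} (hu : 0 ≤ u) (hv : 0 ≤ v) : (u + v) ^ 3 ≤ 4 * (u ^ 3 + v ^ 3) := by
  nlinarith [mul_nonneg (add_nonneg hu hv) (sq_nonneg (u - v))]

lemma tay_core {R D0 D h T0 T1 T2 D1 D2 N1 N2 : ℝ} (hh0 : 0 ≤ h) (hR1 : 1 ≤ R)
    (hRR : R ^ 2 = D0) (hDp : 1 ≤ D) (T0b : |T0| ≤ 1) (D1b : |D1| ≤ 2 * R * h)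
    (D2b : |D2| ≤ h ^ 2) (N1b : |N1| ≤ 2 * R * h) (N2b : |N2| ≤ h ^ 2)
    (T1e : T1 * D0 = N1 - T0 * D1) (T2e : T2 * D0 = N2 - T1 * D1 - T0 * D2)
    (hDexp : D = D0 + D1 + D2) (hhD : h ≤ 2 * (D0 * D)) :
    |(T0 * D0 + N1 + N2) / D - (T0 + T1 + T2)| ≤ 44 * h ^ 3 := by
  have hD0p : 1 ≤ D0 := by rw [← hRR]; exact one_le_pow₀ hR1
  have hD0' : 0 < D0 := by linarith
  have hR0 : 0 < R := by linarith
  have hRD : R ≤ D0 := by rw [← hRR]; nlinarith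
  have T1n := abs_nonneg T1
  have T2n := abs_nonneg T2
  have T1b : |T1| * R ≤ 4 * h := by
    have h1 : |T1| * D0 ≤ 4 * R * h := by
      have e : |T1| * D0 = |N1 - T0 * D1| := by rw [← T1e, abs_mul, abs_of_pos hD0']
      rw [e]
      calc |N1 - T0 * D1| ≤ |N1| + |T0| * |D1| := by rw [← abs_mul]; exact abs_sub _ _
        _ ≤ 2 * R * h + 1 * (2 * R * h) := by gcongr
        _ = _ := by ring
    have h2 : R * (|T1| * R) ≤ R * (4 * h) := by
      calc R * (|T1| * R) = |T1| * D0 := by rw [← hRR]; ring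
        _ ≤ 4 * R * h := h1
        _ = _ := by ring
    exact le_of_mul_le_mul_left h2 hR0
  have T2b : |T2| * D0 ≤ 10 * h ^ 2 := by
    have e : |T2| * D0 = |N2 - T1 * D1 - T0 * D2| := by rw [← T2e, abs_mul, abs_of_pos hD0']
    rw [e]
    calc |N2 - T1 * D1 - T0 * D2| ≤ |N2| + |T1| * |D1| + |T0| * |D2| := by
          rw [← abs_mul, ← abs_mul]
          exact (abs_sub _ _).trans (add_le_add (abs_sub _ _) le_rfl)
      _ ≤ h ^ 2 + |T1| * (2 * R * h) + 1 * h ^ 2 := by gcongr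
      _ = h ^ 2 + (|T1| * R) * (2 * h) + 1 * h ^ 2 := by ring
      _ ≤ h ^ 2 + (4 * h) * (2 * h) + 1 * h ^ 2 := by gcongr
      _ = _ := by ring
  have hDn : D ≠ 0 := by positivity
  have herr : (T0 * D0 + N1 + N2) / D
      - (T0 + T1 + T2) = -(T2 * D1 + T1 * D2 + T2 * D2) / D := by
    rw [eq_div_iff hDn, sub_mul, div_mul_cancel₀ _ hDn, hDexp]
    linear_combination T1e * (-1) + T2e * (-1)
  rw [herr, abs_div, abs_neg, abs_of_pos (by linarith : 0 < D), div_le_iff₀ (by linarith)]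
  have f1 : |T2| * |D1| ≤ 20 * h ^ 3 := by
    have : |T2| * R ≤ 10 * h ^ 2 := (mul_le_mul_of_nonneg_left hRD T2n).trans T2b
    calc |T2| * |D1| ≤ |T2| * (2 * R * h) := by gcongr
      _ = 2 * h * (|T2| * R) := by ring
      _ ≤ 2 * h * (10 * h ^ 2) := by gcongr
      _ = _ := by ring
  have f2 : |T1| * |D2| ≤ 4 * h ^ 3 := by
    have : |T1| ≤ 4 * h := (le_mul_of_one_le_right T1n hR1).trans T1b
    calc |T1| * |D2| ≤ (4 * h) * h ^ 2 := by gcongr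
      _ = _ := by ring
  have f3 : |T2| * |D2| ≤ 20 * h ^ 3 * D := by
    calc |T2| * |D2| ≤ |T2| * h ^ 2 := by gcongr
      _ ≤ |T2| * (h * (2 * (D0 * D))) := by rw [sq]; gcongr
      _ = (|T2| * D0) * (2 * h * D) := by ring
      _ ≤ (10 * h ^ 2) * (2 * h * D) := by gcongr
      _ = _ := by ring
  have hh3 : 0 ≤ h ^ 3 := by positivity
  calc |T2 * D1 + T1 * D2 + T2 * D2| ≤ |T2| * |D1| + |T1| * |D2| + |T2| * |D2| := by
        rw [← abs_mul, ← abs_mul, ← abs_mul]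
        exact (abs_add_le _ _).trans (add_le_add (abs_add_le _ _) le_rfl)
    _ ≤ 44 * h ^ 3 * D := by nlinarith

lemma tay_h {a b u v : ℝ} : |u| + |v| ≤ 2 * ((1 + a ^ 2 + b ^ 2) *
    (1 + (a + u) ^ 2 + (b + v) ^ 2)) := by
  have e1 : |u| ≤ |a| + |a + u| := by
    have := abs_sub (a + u) a; rw [add_sub_cancel_left] at this; linarith
  have e2 : |v| ≤ |b| + |b + v| := by
    have := abs_sub (b + v) b; rw [add_sub_cancel_left] at this; linarith
  have e3 : |a| + |b| ≤ (1 + a ^ 2 + b ^ 2) := by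
    rw [← sq_abs a, ← sq_abs b]; nlinarith [sq_nonneg (|a| - 1), sq_nonneg (|b| - 1)]
  have e4 : |a + u| + |b + v| ≤ (1 + (a + u) ^ 2 + (b + v) ^ 2) := by
    rw [← sq_abs (a + u), ← sq_abs (b + v)]
    nlinarith [sq_nonneg (|a + u| - 1), sq_nonneg (|b + v| - 1)]
  have h1 : 1 ≤ 1 + a ^ 2 + b ^ 2 := by nlinarith [sq_nonneg a, sq_nonneg b]
  have h2 : 1 ≤ 1 + (a + u) ^ 2 + (b + v) ^ 2 := by nlinarith [sq_nonneg (a + u), sq_nonneg (b + v)]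
  generalize 1 + a ^ 2 + b ^ 2 = X at *
  generalize 1 + (a + u) ^ 2 + (b + v) ^ 2 = Y at *
  nlinarith

set_option maxHeartbeats 1000000 in
lemma tay_quad (α β γ δ : ℝ) (h1 : |α| + |β| + |γ| + |δ| ≤ 1) :
    Tay 176 (fun a b => (α + β * a ^ 2 + γ * (a * b) + δ * b ^ 2) / (1 + a ^ 2 + b ^ 2)) := by
  intro a b
  set D0 := 1 + a ^ 2 + b ^ 2 with hD0
  have hD0p : 1 ≤ D0 := by nlinarith [sq_nonneg a, sq_nonneg b]
  set T0 := (α + β * a ^ 2 + γ * (a * b) + δ * b ^ 2) / D0 with hT0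
  set p := (2 * β * a + γ * b - T0 * (2 * a)) / D0 with hp
  set q := (γ * a + 2 * δ * b - T0 * (2 * b)) / D0 with hq
  refine ⟨p, q, (β - p * (2 * a) - T0) / D0, (γ - p * (2 * b) - q * (2 * a)) / D0,
    (δ - q * (2 * b) - T0) / D0, fun u v => ?_⟩
  have hD0n : D0 ≠ 0 := by positivity
  set D := 1 + (a + u) ^ 2 + (b + v) ^ 2 with hD
  have hDp : 1 ≤ D := by nlinarith [sq_nonneg (a + u), sq_nonneg (b + v)]
  have hDn : D ≠ 0 := by positivity
  set T1 := p * u + q * v with hT1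
  set T2 := (β - p * (2 * a) - T0) / D0 * u ^ 2 + (γ - p * (2 * b) - q * (2 * a)) / D0 * (u * v)
    + (δ - q * (2 * b) - T0) / D0 * v ^ 2 with hT2
  set D1 := 2 * a * u + 2 * b * v with hD1
  set D2 := u ^ 2 + v ^ 2 with hD2
  set h := |u| + |v| with hh
  have hu0 := abs_nonneg u
  have hv0 := abs_nonneg v
  have hh0 : 0 ≤ h := by positivity
  set R := √D0 with hR
  have hRR : R ^ 2 = D0 := Real.sq_sqrt (by linarith)
  have hR1 : 1 ≤ R := by rw [hR]; exact Real.one_le_sqrt.mpr hD0p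
  have haR : |a| ≤ R := by
    rw [hR, ← Real.sqrt_sq_eq_abs]; apply Real.sqrt_le_sqrt; nlinarith [sq_nonneg b]
  have hbR : |b| ≤ R := by
    rw [hR, ← Real.sqrt_sq_eq_abs]; apply Real.sqrt_le_sqrt; nlinarith [sq_nonneg a]
  have ha0 := abs_nonneg a
  have hb0 := abs_nonneg b
  have hβ0 := abs_nonneg β
  have hγ0 := abs_nonneg γ
  have hδ0 := abs_nonneg δ
  have hα0 := abs_nonneg α
  have T0b : |T0| ≤ 1 := by
    rw [hT0, abs_div, abs_of_pos (by linarith : 0 < D0), div_le_one (by linarith)]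
    calc |α + β * a ^ 2 + γ * (a * b) + δ * b ^ 2|
        ≤ |α| + |β| * |a| ^ 2 + |γ| * (|a| * |b|) + |δ| * |b| ^ 2 := by
          refine (abs_add_le _ _).trans (add_le_add ((abs_add_le _ _).trans
            (add_le_add ((abs_add_le _ _).trans (add_le_add le_rfl ?_)) ?_)) ?_)
          · rw [abs_mul, abs_pow]
          · rw [abs_mul, abs_mul]
          · rw [abs_mul, abs_pow]
      _ ≤ |α| * D0 + |β| * D0 + |γ| * D0 + |δ| * D0 := by
          rw [sq_abs, sq_abs]
          have : |a| * |b| ≤ D0 := by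
            rw [hD0]; nlinarith [sq_nonneg (|a| - |b|), sq_abs a, sq_abs b]
          have h2 : a ^ 2 ≤ D0 := by nlinarith [sq_nonneg b]
          have h3 : b ^ 2 ≤ D0 := by nlinarith [sq_nonneg a]
          gcongr
          nlinarith
      _ ≤ D0 := by nlinarith
  have D1b : |D1| ≤ 2 * R * h := by
    calc |D1| ≤ 2 * |a| * |u| + 2 * |b| * |v| := by
          rw [hD1]; refine (abs_add_le _ _).trans (le_of_eq ?_)
          simp [abs_mul]
      _ ≤ 2 * R * |u| + 2 * R * |v| := by gcongr
      _ = _ := by rw [hh]; ring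
  have D2b : |D2| ≤ h ^ 2 := by
    rw [hD2, abs_of_nonneg (by positivity), hh, ← sq_abs u, ← sq_abs v]; nlinarith
  set N1 := (2 * β * a + γ * b) * u + (γ * a + 2 * δ * b) * v with hN1
  set N2 := β * u ^ 2 + γ * (u * v) + δ * v ^ 2 with hN2
  have N1b : |N1| ≤ 2 * R * h := by
    calc |N1| ≤ (2 * |β| * |a| + |γ| * |b|) * |u| + (|γ| * |a| + 2 * |δ| * |b|) * |v| := by
          rw [hN1]; refine (abs_add_le _ _).trans ?_
          rw [abs_mul, abs_mul]
          gcongr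
          · refine (abs_add_le _ _).trans (le_of_eq ?_); simp [abs_mul]
          · refine (abs_add_le _ _).trans (le_of_eq ?_); simp [abs_mul]
      _ ≤ (2 * |β| * R + |γ| * R) * |u| + (|γ| * R + 2 * |δ| * R) * |v| := by gcongr
      _ ≤ (2 * R) * |u| + (2 * R) * |v| := by
          gcongr
          · nlinarith
          · nlinarith
      _ = _ := by rw [hh]; ring
  have N2b : |N2| ≤ h ^ 2 := by
    calc |N2| ≤ |β| * |u| ^ 2 + |γ| * (|u| * |v|) + |δ| * |v| ^ 2 := by
          refine (abs_add_le _ _).trans (add_le_add ((abs_add_le _ _).trans (add_le_add ?_ ?_)) ?_)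
          · rw [abs_mul, abs_pow]
          · rw [abs_mul, abs_mul]
          · rw [abs_mul, abs_pow]
      _ ≤ |β| * h ^ 2 + |γ| * h ^ 2 + |δ| * h ^ 2 := by
          have : |u| ^ 2 ≤ h ^ 2 := by rw [hh]; nlinarith
          have : |v| ^ 2 ≤ h ^ 2 := by rw [hh]; nlinarith
          have : |u| * |v| ≤ h ^ 2 := by rw [hh]; nlinarith
          gcongr
      _ ≤ _ := by nlinarith [sq_nonneg h]
  have T1e : T1 * D0 = N1 - T0 * D1 := by
    rw [hT1, hp, hq, hN1, hD1]; field_simp; ring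
  have T2e : T2 * D0 = N2 - T1 * D1 - T0 * D2 := by
    rw [hT2, hT1, hN2, hD1, hD2]; field_simp; ring
  have T0e : T0 * D0 = α + β * a ^ 2 + γ * (a * b) + δ * b ^ 2 := by
    rw [hT0]; field_simp
  have hDexp : D = D0 + D1 + D2 := by rw [hD, hD0, hD1, hD2]; ring
  have hNexp : α + β * (a + u) ^ 2 + γ * ((a + u) * (b + v)) + δ * (b + v) ^ 2
      = T0 * D0 + N1 + N2 := by rw [T0e, hN1, hN2]; ring
  have hhD : h ≤ 2 * (D0 * D) := tay_h
  have hfin := tay_core hh0 hR1 hRR hDp T0b D1b D2b N1b N2b T1e T2e hDexp hhD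
  rw [← hNexp] at hfin
  have hcube := cube_sum_le hu0 hv0
  refine le_trans (le_of_eq ?_) (hfin.trans ?_)
  · congr 1; rw [hT1, hT2]; ring
  · rw [hh]; linarith

lemma Tay.scale {K : ℝ} {F : ℝ → ℝ → ℝ} (h : Tay K F) (hK : 0 ≤ K) (l l' L : ℝ) (hl : |l| ≤ L)
    (hl' : |l'| ≤ L) : Tay (K * L ^ 3) (fun a b => F (l * a) (l' * b)) := by
  intro a b
  obtain ⟨g1, g2, g3, g4, g5, hg⟩ := h (l * a) (l' * b)
  refine ⟨g1 * l, g2 * l', g3 * l ^ 2, g4 * (l * l'), g5 * l' ^ 2, fun u v => ?_⟩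
  have := hg (l * u) (l' * v)
  simp only [mul_add]
  refine le_trans (le_of_eq ?_) (this.trans ?_)
  · congr 1; ring
  · rw [abs_mul, abs_mul, mul_pow, mul_pow]
    calc K * (|l| ^ 3 * |u| ^ 3 + |l'| ^ 3 * |v| ^ 3) ≤ K * (L ^ 3 * |u| ^ 3 + L ^ 3 * |v| ^ 3) := by
          gcongr
      _ = _ := by ring

lemma Tay.const_mul {K : ℝ} {F : ℝ → ℝ → ℝ} (h : Tay K F) (l : ℝ) :
    Tay (|l| * K) (fun a b => l * F a b) := by
  intro a b
  obtain ⟨g1, g2, g3, g4, g5, hg⟩ := h a b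
  refine ⟨l * g1, l * g2, l * g3, l * g4, l * g5, fun u v => ?_⟩
  refine le_trans (le_of_eq ?_) ((mul_le_mul_of_nonneg_left (hg u v) (abs_nonneg l)).trans
    (le_of_eq ?_))
  · rw [← abs_mul]; congr 1; ring
  · ring

section Lind
variable {n : ℕ} {Ω : Type} [Fintype Ω] {w : Ω → ℝ}

lemma abs_cube_le {x : ℝ} (h : x ^ 2 ≤ 2) : |x| ^ 3 ≤ 3 := by
  rw [← sq_abs] at h
  have h0 := abs_nonneg x
  have h1 : |x| ≤ 3 / 2 := by nlinarith
  calc |x| ^ 3 = |x| * |x| ^ 2 := by ring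
    _ ≤ 3 / 2 * 2 := by gcongr
    _ = 3 := by norm_num

lemma tay_avg (hw : IsPW w) {U V : Ω → ℝ} (hU : Nice w U) (hV : Nice w V) {K : ℝ} (hK : 0 ≤ K)
    {F : ℝ → ℝ → ℝ} {P Q g1 g2 g3 g4 g5 : ℝ} (B B' : ℝ)
    (hg : ∀ u v, |F (P + u) (Q + v) - (F P Q + g1 * u + g2 * v + g3 * u ^ 2 + g4 * (u * v)
      + g5 * v ^ 2)| ≤ K * (|u| ^ 3 + |v| ^ 3)) :
    |∑ t, w t * F (P + U t * B) (Q + V t * B') - (F P Q + g3 * B ^ 2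
      + g4 * (∑ t, w t * (U t * V t)) * (B * B') + g5 * B' ^ 2)| ≤ 3 * K * (|B| ^ 3 + |B'| ^ 3) := by
  have e : F P Q + g3 * B ^ 2 + g4 * (∑ t, w t * (U t * V t)) * (B * B') + g5 * B' ^ 2
      = ∑ t, w t * (F P Q + g1 * (U t * B) + g2 * (V t * B') + g3 * (U t * B) ^ 2
        + g4 * ((U t * B) * (V t * B')) + g5 * (V t * B') ^ 2) := by
    have : ∀ t, w t * (F P Q + g1 * (U t * B) + g2 * (V t * B') + g3 * (U t * B) ^ 2
        + g4 * ((U t * B) * (V t * B')) + g5 * (V t * B') ^ 2)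
        = F P Q * w t + g1 * B * (w t * U t) + g2 * B' * (w t * V t)
          + g3 * B ^ 2 * (w t * U t ^ 2) + g4 * (B * B') * (w t * (U t * V t))
          + g5 * B' ^ 2 * (w t * V t ^ 2) := by intro t; ring
    simp only [this, Finset.sum_add_distrib, ← Finset.mul_sum, hw.sum_one, hU.m1, hV.m1, hU.m2,
      hV.m2]
    ring
  rw [e, ← Finset.sum_sub_distrib]
  refine (Finset.abs_sum_le_sum_abs _ _).trans ?_
  calc _ ≤ ∑ t, w t * (3 * K * (|B| ^ 3 + |B'| ^ 3)) := by
        refine Finset.sum_le_sum fun t _ => ?_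
        rw [← mul_sub, abs_mul, abs_of_nonneg (hw.nonneg t)]
        apply mul_le_mul_of_nonneg_left _ (hw.nonneg t)
        refine (hg _ _).trans ?_
        rw [abs_mul, abs_mul, mul_pow, mul_pow]
        have h1 := abs_cube_le (hU.le2 t)
        have h2 := abs_cube_le (hV.le2 t)
        calc K * (|U t| ^ 3 * |B| ^ 3 + |V t| ^ 3 * |B'| ^ 3)
            ≤ K * (3 * |B| ^ 3 + 3 * |B'| ^ 3) := by gcongr
          _ = _ := by ring
    _ = _ := by rw [← Finset.sum_mul, hw.sum_one, one_mul]

lemma Ex_cube (hw : IsPW w) {U : Fin n → Ω → ℝ} (hU : ∀ i, Nice w (U i)) {d : ℕ}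
    {c : Finset (Fin n) → ℝ} (hc : DegLE d c) {s : ℝ} (hs : 0 < s) (hI : sqn c ≤ s ^ 2) :
    Ex w (fun ω => |ev c (fun i => U i (ω i))| ^ 3) ≤ 9 ^ d * s * sqn c := by
  have h1 : ∀ x : ℝ, |x| ^ 3 ≤ 1 / 2 * s * x ^ 2 + 1 / (2 * s) * x ^ 4 := by
    intro x
    have e : |x| ^ 3 = |x| * x ^ 2 := by rw [← sq_abs]; ring
    have h2 : |x| ≤ 1 / 2 * s + 1 / (2 * s) * x ^ 2 := by
      rw [← sq_abs]
      have : 1 / 2 * s + 1 / (2 * s) * |x| ^ 2 - |x| = (s - |x|) ^ 2 / (2 * s) := by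
        field_simp; ring
      have h3 : 0 ≤ (s - |x|) ^ 2 / (2 * s) := by positivity
      linarith
    rw [e]; nlinarith [sq_nonneg x]
  have h9 : (1 : ℝ) ≤ 9 ^ d := one_le_pow₀ (by norm_num)
  have h0 := sqn_nonneg c
  calc _ ≤ Ex w (fun ω => 1 / 2 * s * ev c (fun i => U i (ω i)) ^ 2
          + 1 / (2 * s) * ev c (fun i => U i (ω i)) ^ 4) := Ex_mono hw fun ω => h1 _
    _ = 1 / 2 * s * sqn c + 1 / (2 * s) * Ex w (fun ω => ev c (fun i => U i (ω i)) ^ 4) := by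
        rw [Ex_add, Ex_const_mul, Ex_const_mul, Ex_sq hw hU]
    _ ≤ 1 / 2 * s * sqn c + 1 / (2 * s) * (9 ^ d * (s ^ 2 * sqn c)) := by
        have := hyper hw hU d c hc
        have h2 : 9 ^ d * sqn c ^ 2 ≤ 9 ^ d * (s ^ 2 * sqn c) := by rw [sq (sqn c)]; gcongr
        gcongr
        linarith
    _ = 1 / 2 * (s * sqn c) + 1 / 2 * (9 ^ d * (s * sqn c)) := by field_simp
    _ ≤ _ := by
        have : 0 ≤ s * sqn c := by positivity
        nlinarith

/-- Lindeberg replacement. -/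
lemma lindeberg (hw : IsPW w) {U V U' V' : Ω → ℝ} (hU : Nice w U) (hV : Nice w V)
    (hU' : Nice w U') (hV' : Nice w V') (hρ : ∑ t, w t * (U t * V t) = ∑ t, w t * (U' t * V' t))
    {d : ℕ} {c : Finset (Fin n) → ℝ} (hc : DegLE d c) {s : ℝ} (hs : 0 < s)
    (hI : ∀ i, infl i c ≤ s ^ 2) {K : ℝ} (hK : 0 ≤ K) {F : ℝ → ℝ → ℝ} (hF : Tay K F) :
    |Ex w (fun ω => F (ev c fun i => U (ω i)) (ev c fun i => V (ω i)))
      - Ex w (fun ω => F (ev c fun i => U' (ω i)) (ev c fun i => V' (ω i)))|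
      ≤ 12 * 9 ^ d * K * s * (d * vr c) := by
  suffices H : ∀ A : Finset (Fin n),
      |Ex w (fun ω => F (ev c fun i => U (ω i)) (ev c fun i => V (ω i)))
      - Ex w (fun ω => F (ev c fun i => (if i ∈ A then U' else U) (ω i))
          (ev c fun i => (if i ∈ A then V' else V) (ω i)))|
      ≤ 12 * 9 ^ d * K * s * ∑ i ∈ A, infl i c by
    have := H univ
    simp only [Finset.mem_univ, if_true] at this
    refine this.trans ?_
    have := sum_infl_le hc
    gcongr
  intro A
  induction A using Finset.induction_on with
  | empty => simp
  | insert a A ha ih =>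
    rw [Finset.sum_insert ha]
    set UA : Fin n → Ω → ℝ := fun i => if i ∈ A then U' else U with hUA
    set VA : Fin n → Ω → ℝ := fun i => if i ∈ A then V' else V with hVA
    set UB : Fin n → Ω → ℝ := fun i => if i ∈ insert a A then U' else U with hUB
    set VB : Fin n → Ω → ℝ := fun i => if i ∈ insert a A then V' else V with hVB
    have nUA : ∀ i, Nice w (UA i) := fun i => by simp only [hUA]; split_ifs <;> assumption
    have nVA : ∀ i, Nice w (VA i) := fun i => by simp only [hVA]; split_ifs <;> assumption
    have uaa : UA a = U := by simp [hUA, ha]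
    have vaa : VA a = V := by simp [hVA, ha]
    have uba : UB a = U' := by simp [hUB]
    have vba : VB a = V' := by simp [hVB]
    have ub : ∀ i, i ≠ a → UB i = UA i := fun i hi => by simp [hUB, hUA, hi]
    have vb : ∀ i, i ≠ a → VB i = VA i := fun i hi => by simp [hVB, hVA, hi]
    set P : (Fin n → Ω) → ℝ := fun ω => ev (rst a c) (fun i => UA i (ω i)) with hP
    set Q : (Fin n → Ω) → ℝ := fun ω => ev (rst a c) (fun i => VA i (ω i)) with hQ
    set B : (Fin n → Ω) → ℝ := fun ω => ev (der a c) (fun i => UA i (ω i)) with hB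
    set B' : (Fin n → Ω) → ℝ := fun ω => ev (der a c) (fun i => VA i (ω i)) with hB'
    have gen : ∀ (X Y : Fin n → Ω → ℝ) (ω : Fin n → Ω) (t : Ω), (∀ i, i ≠ a → Y i = X i) →
        ev c (fun i => Y i (Function.update ω a t i))
          = ev (rst a c) (fun i => X i (ω i)) + Y a t * ev (der a c) (fun i => X i (ω i)) := by
      intro X Y ω t hXY
      rw [ev_split a]
      simp only [Function.update_self]
      have : ∀ i ∈ univ.erase a, Y i (Function.update ω a t i) = X i (ω i) := by
        intro i hi
        have := Finset.ne_of_mem_erase hi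
        rw [Function.update_of_ne this, hXY i this]
      rw [ev_congr (suppIn_rst a c) this, ev_congr (suppIn_der a c) this]
    have step : |Ex w (fun ω => F (ev c fun i => UA i (ω i)) (ev c fun i => VA i (ω i)))
        - Ex w (fun ω => F (ev c fun i => UB i (ω i)) (ev c fun i => VB i (ω i)))|
        ≤ 12 * 9 ^ d * K * s * infl a c := by
      rw [Ex_resample hw a (fun ω => F (ev c fun i => UA i (ω i)) (ev c fun i => VA i (ω i))),
        Ex_resample hw a (fun ω => F (ev c fun i => UB i (ω i)) (ev c fun i => VB i (ω i))),
        ← Ex_sub]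
      have g1 := fun ω t => gen UA UA ω t (fun _ _ => rfl)
      have g2 := fun ω t => gen VA VA ω t (fun _ _ => rfl)
      have g3 := fun ω t => gen UA UB ω t ub
      have g4 := fun ω t => gen VA VB ω t vb
      simp only [g1, g2, g3, g4, uaa, vaa, uba, vba]
      refine (Ex_abs_le hw _).trans ?_
      have hpt : ∀ ω, |∑ t, w t * F (P ω + U t * B ω) (Q ω + V t * B' ω)
          - ∑ t, w t * F (P ω + U' t * B ω) (Q ω + V' t * B' ω)|
          ≤ 6 * K * (|B ω| ^ 3 + |B' ω| ^ 3) := by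
        intro ω
        obtain ⟨k1, k2, k3, k4, k5, hk⟩ := hF (P ω) (Q ω)
        have r1 := tay_avg hw hU hV hK (B ω) (B' ω) hk
        have r2 := tay_avg hw hU' hV' hK (B ω) (B' ω) hk
        rw [hρ] at r1
        rw [abs_le] at r1 r2 ⊢
        constructor <;> linarith [r1.1, r1.2, r2.1, r2.2]
      refine (Ex_mono hw hpt).trans ?_
      rw [Ex_const_mul, Ex_add]
      have c1 := Ex_cube hw nUA (hc.der_le a) hs (hI a)
      have c2 := Ex_cube hw nVA (hc.der_le a) hs (hI a)
      calc _ ≤ 6 * K * (9 ^ d * s * infl a c + 9 ^ d * s * infl a c) := by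
            apply mul_le_mul_of_nonneg_left _ (by positivity)
            exact add_le_add c1 c2
        _ = _ := by ring
    have := abs_sub_le _ _ _ |>.trans (add_le_add ih step)
    refine this.trans (le_of_eq ?_)
    ring

end Lind

/-! ### Points on the circle -/

lemma sum_inv_sq_le (N : ℕ) : ∑ j ∈ range N, 1 / (1 + 4 * (j : ℝ) ^ 2) ≤ 2 := by
  have : ∀ N : ℕ, ∑ j ∈ range (N + 1), 1 / (1 + 4 * (j : ℝ) ^ 2) ≤ 2 - 1 / ((N : ℝ) + 1) := by
    intro N
    induction N with
    | zero => simp; norm_num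
    | succ N ih =>
      rw [Finset.sum_range_succ]
      have h : 1 / (1 + 4 * ((N + 1 : ℕ) : ℝ) ^ 2) ≤ 1 / ((N : ℝ) + 1) - 1 / (((N + 1 : ℕ) : ℝ) + 1) := by
        push_cast
        rw [div_sub_div _ _ (by positivity) (by positivity), div_le_div_iff₀ (by positivity)
          (by positivity)]
        nlinarith [(Nat.cast_nonneg N : (0 : ℝ) ≤ N)]
      linarith
  cases N with
  | zero => simp
  | succ N =>
    have h := this N
    have : (0 : ℝ) ≤ 1 / ((N : ℝ) + 1) := by positivity
    linarith

lemma sum_dist_le {N k0 : ℕ} (hk : k0 < N) (f : ℕ → ℝ) (hf : ∀ j, 0 ≤ f j) :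
    ∑ k ∈ range N, f (Nat.dist k k0) ≤ 2 * ∑ j ∈ range N, f j := by
  have h1 : ∀ k ∈ range N, f (Nat.dist k k0)
      ≤ (if k ≤ k0 then f (k0 - k) else 0) + (if k0 ≤ k then f (k - k0) else 0) := by
    intro k _
    rcases le_total k k0 with h | h
    · rw [if_pos h, Nat.dist_eq_sub_of_le h]
      have : 0 ≤ (if k0 ≤ k then f (k - k0) else 0) := by split_ifs <;> simp [hf]
      linarith
    · rw [if_pos h, Nat.dist_eq_sub_of_le_right h]
      have : 0 ≤ (if k ≤ k0 then f (k0 - k) else 0) := by split_ifs <;> simp [hf]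
      linarith
  refine (Finset.sum_le_sum h1).trans ?_
  rw [Finset.sum_add_distrib, two_mul]
  apply add_le_add
  · rw [← Finset.sum_filter]
    rw [← Finset.sum_image (f := f) (g := fun k => k0 - k)]
    · apply Finset.sum_le_sum_of_subset_of_nonneg
      · intro j hj
        simp only [Finset.mem_image, Finset.mem_filter, Finset.mem_range] at hj ⊢
        omega
      · intro j _ _; exact hf j
    · intro a ha b hb h
      simp only [Finset.coe_filter, Finset.mem_range, Set.mem_ofPred_eq] at ha hb
      have : k0 - a = k0 - b := h
      omega
  · rw [← Finset.sum_filter]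
    rw [← Finset.sum_image (f := f) (g := fun k => k - k0)]
    · apply Finset.sum_le_sum_of_subset_of_nonneg
      · intro j hj
        simp only [Finset.mem_image, Finset.mem_filter, Finset.mem_range] at hj ⊢
        omega
      · intro j _ _; exact hf j
    · intro a ha b hb h
      simp only [Finset.coe_filter, Finset.mem_range, Set.mem_ofPred_eq] at ha hb
      have : a - k0 = b - k0 := h
      omega

/-- Unit complex number. -/
noncomputable def zc (ψ : ℝ) : ℂ := Complex.exp (Complex.I * ψ)

lemma norm_zc (ψ : ℝ) : ‖zc ψ‖ = 1 := by
  unfold zc; rw [mul_comm]; exact Complex.norm_exp_ofReal_mul_I ψ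

lemma zc_add (a b : ℝ) : zc (a + b) = zc a * zc b := by
  unfold zc; rw [← Complex.exp_add]; push_cast; ring_nf

lemma norm_zc_sub (a b : ℝ) : ‖zc a - zc b‖ = 2 * |Real.sin ((a - b) / 2)| := by
  have : zc a = zc b * zc (a - b) := by rw [← zc_add]; ring_nf
  rw [this, ← mul_sub_one, norm_mul, norm_zc, one_mul]
  unfold zc
  rw [Complex.norm_exp_I_mul_ofReal_sub_one]
  simp [abs_mul]

/-- Angle. -/
noncomputable def ang (N k : ℕ) : ℝ := 2 * Real.pi * k / N

lemma sin_lower {N t : ℕ} (hN : 0 < N) (ht : t < N) :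
    4 * (min t (N - t) : ℕ) ^ 2 ≤ (N : ℝ) ^ 2 * Real.sin (Real.pi * t / N) ^ 2 := by
  have hNr : (0 : ℝ) < N := by exact_mod_cast hN
  have hπ := Real.pi_pos
  have key : ∀ s : ℕ, 2 * s ≤ N → 2 * (s : ℝ) ≤ N * Real.sin (Real.pi * s / N) := by
    intro s hs
    have hs' : 2 * (s : ℝ) ≤ N := by exact_mod_cast hs
    have h1 : Real.pi * s / N ≤ Real.pi / 2 := by
      rw [div_le_div_iff₀ hNr (by norm_num)]; nlinarith
    have := Real.mul_le_sin (x := Real.pi * s / N) (by positivity) h1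
    calc 2 * (s : ℝ) = N * (2 / Real.pi * (Real.pi * s / N)) := by field_simp
      _ ≤ _ := by gcongr
  rcases le_total (2 * t) N with h | h
  · rw [min_eq_left (by omega)]
    have := key t h
    have h0 : (0 : ℝ) ≤ t := by positivity
    calc (4 : ℝ) * (t : ℝ) ^ 2 = (2 * t) ^ 2 := by ring
      _ ≤ (N * Real.sin (Real.pi * t / N)) ^ 2 := by gcongr
      _ = _ := by ring
  · rw [min_eq_right (by omega)]
    have := key (N - t) (by omega)
    have e : Real.pi * (N - t : ℕ) / N = Real.pi - Real.pi * t / N := by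
      rw [Nat.cast_sub ht.le]; field_simp
    rw [e, Real.sin_pi_sub] at this
    have h0 : (0 : ℝ) ≤ (N - t : ℕ) := by positivity
    calc (4 : ℝ) * ((N - t : ℕ) : ℝ) ^ 2 = (2 * (N - t : ℕ)) ^ 2 := by ring
      _ ≤ (N * Real.sin (Real.pi * t / N)) ^ 2 := by gcongr
      _ = _ := by ring

lemma circle_sum (N : ℕ) (ζ : ℂ) :
    ∑ k ∈ range N, 1 / (1 + (N : ℝ) ^ 2 * ‖zc (ang N k) - ζ‖ ^ 2) ≤ 12 := by
  rcases Nat.eq_zero_or_pos N with rfl | hN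
  · simp
  obtain ⟨k0, hk0, hmin⟩ := Finset.exists_min_image (range N) (fun k => ‖zc (ang N k) - ζ‖)
    ⟨0, by simpa using hN⟩
  have hk0' : k0 < N := by simpa using hk0
  have hNr : (0 : ℝ) < N := by exact_mod_cast hN
  set f : ℕ → ℝ := fun t => 1 / (1 + 4 * (t : ℝ) ^ 2) + 1 / (1 + 4 * ((N - t : ℕ) : ℝ) ^ 2) with hf
  have hf0 : ∀ j, 0 ≤ f j := fun j => by simp only [hf]; positivity
  have h1 : ∀ k ∈ range N, 1 / (1 + (N : ℝ) ^ 2 * ‖zc (ang N k) - ζ‖ ^ 2) ≤ f (Nat.dist k k0) := by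
    intro k hk
    have hk' : k < N := by simpa using hk
    set t := Nat.dist k k0 with ht
    have htN : t < N := by
      rw [ht]; unfold Nat.dist; omega
    have e : ‖zc (ang N k) - zc (ang N k0)‖ ^ 2 = 4 * Real.sin (Real.pi * t / N) ^ 2 := by
      rw [norm_zc_sub, mul_pow, sq_abs]
      rcases le_total k k0 with h | h
      · rw [ht, Nat.dist_eq_sub_of_le h, Nat.cast_sub h]
        have : (ang N k - ang N k0) / 2 = -(Real.pi * ((k0 : ℝ) - k) / N) := by unfold ang; ring
        rw [this, Real.sin_neg]; ring
      · rw [ht, Nat.dist_eq_sub_of_le_right h, Nat.cast_sub h]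
        have : (ang N k - ang N k0) / 2 = (Real.pi * ((k : ℝ) - k0) / N) := by unfold ang; ring
        rw [this]; ring
    have h2 : ‖zc (ang N k) - zc (ang N k0)‖ ≤ 2 * ‖zc (ang N k) - ζ‖ := by
      have a1 := norm_sub_le_norm_sub_add_norm_sub (zc (ang N k)) ζ (zc (ang N k0))
      rw [norm_sub_rev ζ] at a1
      have := hmin k hk
      linarith
    have h3 : Real.sin (Real.pi * t / N) ^ 2 ≤ ‖zc (ang N k) - ζ‖ ^ 2 := by
      have := pow_le_pow_left₀ (norm_nonneg _) h2 2
      rw [e] at this; nlinarith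
    have h4 := sin_lower hN htN
    have h5 : 1 + 4 * ((min t (N - t) : ℕ) : ℝ) ^ 2 ≤ 1 + (N : ℝ) ^ 2 * ‖zc (ang N k) - ζ‖ ^ 2 := by
      have : (N : ℝ) ^ 2 * Real.sin (Real.pi * t / N) ^ 2 ≤ (N : ℝ) ^ 2 * ‖zc (ang N k) - ζ‖ ^ 2 := by
        gcongr
      linarith
    refine (one_div_le_one_div_of_le (by positivity) h5).trans ?_
    simp only [hf]
    rcases min_choice t (N - t) with h | h
    · rw [h]
      have : 0 ≤ 1 / (1 + 4 * ((N - t : ℕ) : ℝ) ^ 2) := by positivity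
      linarith
    · rw [h]
      have : 0 ≤ 1 / (1 + 4 * (t : ℝ) ^ 2) := by positivity
      linarith
  refine (Finset.sum_le_sum h1).trans ((sum_dist_le hk0' f hf0).trans ?_)
  have h6 : ∑ j ∈ range N, f j ≤ 2 + 2 := by
    simp only [hf]
    rw [Finset.sum_add_distrib]
    apply add_le_add (sum_inv_sq_le N)
    have : ∑ j ∈ range N, 1 / (1 + 4 * ((N - j : ℕ) : ℝ) ^ 2)
        ≤ ∑ j ∈ range (N + 1), 1 / (1 + 4 * ((N - j : ℕ) : ℝ) ^ 2) := by
      rw [Finset.sum_range_succ]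
      have : 0 ≤ 1 / (1 + 4 * ((N - N : ℕ) : ℝ) ^ 2) := by positivity
      linarith
    refine this.trans ?_
    have := Finset.sum_range_reflect (fun j : ℕ => 1 / (1 + 4 * (j : ℝ) ^ 2)) (N + 1)
    simp only [Nat.add_sub_cancel] at this
    rw [this]
    exact sum_inv_sq_le (N + 1)
  linarith

/-- Complex comparison function. -/
noncomputable def TT (u v : ℂ) : ℝ := ‖v - u‖ ^ 2 / (‖u‖ ^ 2 + ‖v‖ ^ 2)

lemma TT_nonneg (u v : ℂ) : 0 ≤ TT u v := by unfold TT; positivity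

lemma norm_sub_sq_le (u v : ℂ) : ‖v - u‖ ^ 2 ≤ 2 * (‖u‖ ^ 2 + ‖v‖ ^ 2) := by
  have := norm_sub_le v u
  have h := pow_le_pow_left₀ (norm_nonneg _) this 2
  nlinarith [sq_nonneg (‖u‖ - ‖v‖)]

lemma TT_le_two (u v : ℂ) : TT u v ≤ 2 :=
  div_le_of_le_mul₀ (by positivity) (by norm_num) (norm_sub_sq_le u v)

lemma TT_comparable {u v : ℂ} (h : TT u v < 1 / 5) :
    ‖v‖ ^ 2 ≤ 5 * ‖u‖ ^ 2 ∧ ‖u‖ ^ 2 ≤ 5 * ‖v‖ ^ 2 := by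
  have hz : ‖v - u‖ ^ 2 ≤ 1 / 5 * (‖u‖ ^ 2 + ‖v‖ ^ 2) := by
    rcases eq_or_ne (‖u‖ ^ 2 + ‖v‖ ^ 2) 0 with h0 | h0
    · have := norm_sub_sq_le u v
      rw [h0] at this ⊢; linarith
    · have hp : 0 < ‖u‖ ^ 2 + ‖v‖ ^ 2 := by positivity
      unfold TT at h; rw [div_lt_iff₀ hp] at h; exact h.le
  have h1 : ‖v‖ ≤ ‖v - u‖ + ‖u‖ := by simpa using norm_add_le (v - u) u
  have h2 : ‖u‖ ≤ ‖v - u‖ + ‖v‖ := by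
    rw [norm_sub_rev]; simpa using norm_add_le (u - v) v
  have h3 := pow_le_pow_left₀ (norm_nonneg _) h1 2
  have h4 := pow_le_pow_left₀ (norm_nonneg _) h2 2
  constructor
  · nlinarith [sq_nonneg (‖v - u‖ - ‖u‖)]
  · nlinarith [sq_nonneg (‖v - u‖ - ‖v‖)]

lemma TT_mul (u u' v v' : ℂ) : TT (u * v) (u' * v') ≤ 10 * (TT u u' + TT v v') := by
  have n1 := TT_nonneg u u'
  have n2 := TT_nonneg v v'
  by_cases h1 : TT u u' < 1 / 5
  · by_cases h2 : TT v v' < 1 / 5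
    · have c1 := (TT_comparable h1).1
      have c2 := (TT_comparable h2).2
      rcases eq_or_ne (‖u‖ ^ 2 + ‖u'‖ ^ 2) 0 with h0 | h0
      · have hu : u = 0 := by rw [← norm_eq_zero]; nlinarith [sq_nonneg ‖u‖, sq_nonneg ‖u'‖]
        have hu' : u' = 0 := by rw [← norm_eq_zero]; nlinarith [sq_nonneg ‖u‖, sq_nonneg ‖u'‖]
        have : TT (u * v) (u' * v') = 0 := by simp [TT, hu, hu']
        rw [this]; linarith
      rcases eq_or_ne (‖v‖ ^ 2 + ‖v'‖ ^ 2) 0 with h0' | h0'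
      · have hu : v = 0 := by rw [← norm_eq_zero]; nlinarith [sq_nonneg ‖v‖, sq_nonneg ‖v'‖]
        have hu' : v' = 0 := by rw [← norm_eq_zero]; nlinarith [sq_nonneg ‖v‖, sq_nonneg ‖v'‖]
        have : TT (u * v) (u' * v') = 0 := by simp [TT, hu, hu']
        rw [this]; linarith
      have p1 : 0 < ‖u‖ ^ 2 + ‖u'‖ ^ 2 := by positivity
      have p2 : 0 < ‖v‖ ^ 2 + ‖v'‖ ^ 2 := by positivity
      have e1 : ‖u' - u‖ ^ 2 = TT u u' * (‖u‖ ^ 2 + ‖u'‖ ^ 2) := by unfold TT; field_simp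
      have e2 : ‖v' - v‖ ^ 2 = TT v v' * (‖v‖ ^ 2 + ‖v'‖ ^ 2) := by unfold TT; field_simp
      have h3 : ‖u' * v' - u * v‖ ≤ ‖u'‖ * ‖v' - v‖ + ‖v‖ * ‖u' - u‖ := by
        rw [← norm_mul, ← norm_mul]
        refine le_trans (le_of_eq ?_) (norm_add_le _ _)
        congr 1; ring
      have h4 := pow_le_pow_left₀ (norm_nonneg _) h3 2
      have h5 : ‖u' * v' - u * v‖ ^ 2
          ≤ 2 * (‖u'‖ ^ 2 * ‖v' - v‖ ^ 2) + 2 * (‖v‖ ^ 2 * ‖u' - u‖ ^ 2) := by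
        nlinarith [sq_nonneg (‖u'‖ * ‖v' - v‖ - ‖v‖ * ‖u' - u‖)]
      rw [e1, e2] at h5
      unfold TT at n1 n2 e1 e2 h5 ⊢
      refine div_le_of_le_mul₀ (by positivity) (by positivity) ?_
      rw [norm_mul u v, norm_mul u' v', mul_pow, mul_pow]
      generalize ‖u' - u‖ ^ 2 / (‖u‖ ^ 2 + ‖u'‖ ^ 2) = A at *
      generalize ‖v' - v‖ ^ 2 / (‖v‖ ^ 2 + ‖v'‖ ^ 2) = B at *
      have g1 : ‖u'‖ ^ 2 * (‖v‖ ^ 2 + ‖v'‖ ^ 2) ≤ 5 * (‖u‖ ^ 2 * ‖v‖ ^ 2 + ‖u'‖ ^ 2 * ‖v'‖ ^ 2) := by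
        nlinarith [sq_nonneg ‖v‖, mul_nonneg (sq_nonneg ‖u'‖) (sq_nonneg ‖v'‖)]
      have g2 : ‖v‖ ^ 2 * (‖u‖ ^ 2 + ‖u'‖ ^ 2) ≤ 5 * (‖u‖ ^ 2 * ‖v‖ ^ 2 + ‖u'‖ ^ 2 * ‖v'‖ ^ 2) := by
        nlinarith [sq_nonneg ‖u'‖, mul_nonneg (sq_nonneg ‖u‖) (sq_nonneg ‖v‖)]
      nlinarith [mul_le_mul_of_nonneg_left g1 n2, mul_le_mul_of_nonneg_left g2 n1]
    · have := TT_le_two (u * v) (u' * v'); linarith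
  · have := TT_le_two (u * v) (u' * v'); linarith

lemma ang_succ (N k : ℕ) : ang N (k + 1) - ang N k = 2 * Real.pi / N := by
  unfold ang; push_cast; ring

lemma TT_linear {N : ℕ} (hN : 0 < N) (k : ℕ) (ζ : ℂ) :
    TT (zc (ang N k) - ζ) (zc (ang N (k + 1)) - ζ)
      ≤ 42 * (1 / (1 + (N : ℝ) ^ 2 * ‖zc (ang N k) - ζ‖ ^ 2)) := by
  have hNr : (0 : ℝ) < N := by exact_mod_cast hN
  set u := zc (ang N k) - ζ with hu
  set v := zc (ang N (k + 1)) - ζ with hv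
  have hd : ‖v - u‖ ^ 2 * N ^ 2 ≤ 40 := by
    have e : v - u = zc (ang N (k + 1)) - zc (ang N k) := by rw [hu, hv]; ring
    rw [e, norm_zc_sub, ang_succ]
    have h1 : |Real.sin (2 * Real.pi / N / 2)| ≤ Real.pi / N := by
      have := Real.abs_sin_le_abs (x := 2 * Real.pi / N / 2)
      refine this.trans (le_of_eq ?_)
      rw [abs_of_nonneg (by positivity)]; ring
    have h2 : 2 * |Real.sin (2 * Real.pi / N / 2)| * N ≤ 2 * Real.pi := by
      calc _ ≤ 2 * (Real.pi / N) * N := by gcongr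
        _ = _ := by field_simp
    have h3 : (2 * |Real.sin (2 * Real.pi / N / 2)| * N) ^ 2 ≤ (2 * Real.pi) ^ 2 := by
      gcongr
    have h4 := Real.pi_lt_d2
    have h5 := Real.pi_pos
    nlinarith
  rw [mul_one_div, le_div_iff₀ (by positivity), mul_add, mul_one]
  have h2 := TT_le_two u v
  have : TT u v * (N ^ 2 * ‖u‖ ^ 2) ≤ 40 := by
    unfold TT
    rw [div_mul_eq_mul_div]
    apply div_le_of_le_mul₀ (by positivity) (by norm_num)
    nlinarith [sq_nonneg ‖u‖, sq_nonneg ‖v‖]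
  linarith

lemma TT_multiset {N : ℕ} (hN : 0 < N) (s : Multiset ℂ) :
    ∑ k ∈ range N, TT (s.map (fun ζ => zc (ang N k) - ζ)).prod
      (s.map (fun ζ => zc (ang N (k + 1)) - ζ)).prod ≤ 10 ^ s.card * s.card * 504 := by
  induction s using Multiset.induction_on with
  | empty => simp [TT]
  | cons a s ih =>
    simp only [Multiset.map_cons, Multiset.prod_cons, Multiset.card_cons]
    have h1 : ∑ k ∈ range N, TT ((zc (ang N k) - a) * (s.map (fun ζ => zc (ang N k) - ζ)).prod)
        ((zc (ang N (k + 1)) - a) * (s.map (fun ζ => zc (ang N (k + 1)) - ζ)).prod)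
        ≤ ∑ k ∈ range N, 10 * (42 * (1 / (1 + (N : ℝ) ^ 2 * ‖zc (ang N k) - a‖ ^ 2))
          + TT (s.map (fun ζ => zc (ang N k) - ζ)).prod
            (s.map (fun ζ => zc (ang N (k + 1)) - ζ)).prod) := by
      refine Finset.sum_le_sum fun k _ => (TT_mul _ _ _ _).trans ?_
      have := TT_linear hN k a
      linarith
    refine h1.trans ?_
    rw [← Finset.mul_sum, Finset.sum_add_distrib, ← Finset.mul_sum]
    have h2 := circle_sum N a
    have h3 : (1 : ℝ) ≤ 10 ^ (Multiset.card s) := one_le_pow₀ (by norm_num)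
    push_cast
    rw [pow_succ (10 : ℝ)]
    nlinarith

open Polynomial in
lemma TT_poly {N : ℕ} (hN : 0 < N) (P : ℂ[X]) :
    ∑ k ∈ range N, TT (P.eval (zc (ang N k))) (P.eval (zc (ang N (k + 1))))
      ≤ 10 ^ P.natDegree * P.natDegree * 504 := by
  have hs := (IsAlgClosed.splits P)
  have he : ∀ z, P.eval z = P.leadingCoeff * (P.roots.map (fun ζ => z - ζ)).prod := by
    intro z
    conv_lhs => rw [hs.eq_prod_roots]
    simp [Polynomial.eval_mul, Polynomial.eval_multiset_prod, Multiset.map_map]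
  have hcard : P.roots.card = P.natDegree := hs.natDegree_eq_card_roots.symm
  rw [← hcard]
  refine le_trans (Finset.sum_le_sum fun k _ => ?_) (TT_multiset hN P.roots)
  rw [he, he]
  unfold TT
  rw [← mul_sub, norm_mul, norm_mul, norm_mul, mul_pow, mul_pow, mul_pow, ← mul_add]
  rcases eq_or_ne P.leadingCoeff 0 with h | h
  · rw [h]; simp; positivity
  · rw [mul_div_mul_left]
    have := norm_pos_iff.mpr h
    positivity


/-! ### Trigonometric polynomials along a circle of correlated inputs -/

lemma TT_poly_le {N : ℕ} (hN : 0 < N) (P : Polynomial ℂ) {r : ℕ} (hr : P.natDegree ≤ r) :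
    ∑ k ∈ range N, TT (P.eval (zc (ang N k))) (P.eval (zc (ang N (k + 1))))
      ≤ 10 ^ r * r * 504 := by
  refine (TT_poly hN P).trans ?_
  have h1 : (10 : ℝ) ^ P.natDegree ≤ 10 ^ r := pow_le_pow_right₀ (by norm_num) hr
  have h2 : (P.natDegree : ℝ) ≤ r := by exact_mod_cast hr
  gcongr

section Trig
variable {n : ℕ}

/-- The rotated input. -/
noncomputable def rot (X Y : Fin n → ℝ) (ψ : ℝ) : Fin n → ℝ :=
  fun i => Real.cos ψ * X i + Real.sin ψ * Y i

lemma zc_mul_rot (ψ x y : ℝ) : zc ψ * ((Real.cos ψ * x + Real.sin ψ * y : ℝ) : ℂ)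
    = ((x - Complex.I * y) / 2) * zc ψ ^ 2 + (x + Complex.I * y) / 2 := by
  have hz : zc ψ = Complex.cos ψ + Complex.sin ψ * Complex.I := by
    unfold zc; rw [mul_comm, Complex.exp_mul_I]
  have hs := Complex.sin_sq_add_cos_sq (ψ : ℂ)
  push_cast
  rw [hz]
  have hI := Complex.I_sq
  generalize Complex.cos (ψ : ℂ) = C at *
  generalize Complex.sin (ψ : ℂ) = S at *
  linear_combination (-(x : ℂ) * S ^ 2 / 2 + (Complex.I * y * S^2) / 2 + C * S * y) * hI
    + ((x : ℂ) / 2 + Complex.I * y / 2) * hs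

lemma trig (d : ℕ) {c : Finset (Fin n) → ℝ} (hc : DegLE d c) (X Y : Fin n → ℝ) :
    ∃ P : Polynomial ℂ, P.natDegree ≤ 2 * d ∧
      ∀ ψ, P.eval (zc ψ) = zc ψ ^ d * ((ev c (rot X Y ψ) : ℝ) : ℂ) := by
  refine ⟨∑ S, if S.card ≤ d then Polynomial.C (c S : ℂ) * (Polynomial.X ^ (d - S.card) *
    ∏ i ∈ S, (Polynomial.C (((X i : ℂ) - Complex.I * Y i) / 2) * Polynomial.X ^ 2
      + Polynomial.C (((X i : ℂ) + Complex.I * Y i) / 2))) else 0, ?_, ?_⟩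
  · refine Polynomial.natDegree_sum_le_of_forall_le _ _ fun S _ => ?_
    split_ifs with h
    · refine (Polynomial.natDegree_C_mul_le _ _).trans ?_
      refine Polynomial.natDegree_mul_le.trans ?_
      have h1 : (∏ i ∈ S, (Polynomial.C (((X i : ℂ) - Complex.I * Y i) / 2) * Polynomial.X ^ 2
        + Polynomial.C (((X i : ℂ) + Complex.I * Y i) / 2))).natDegree ≤ ∑ i ∈ S, 2 := by
        refine (Polynomial.natDegree_prod_le _ _).trans (Finset.sum_le_sum fun i _ => ?_)
        compute_degree
      rw [Finset.sum_const, smul_eq_mul] at h1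
      rw [Polynomial.natDegree_X_pow]
      omega
    · simp
  · intro ψ
    rw [Polynomial.eval_finsetSum, ev, Complex.ofReal_sum, Finset.mul_sum]
    refine Finset.sum_congr rfl fun S _ => ?_
    split_ifs with h
    · simp only [Polynomial.eval_mul, Polynomial.eval_C, Polynomial.eval_pow, Polynomial.eval_X,
        Polynomial.eval_prod, Polynomial.eval_add]
      simp_rw [← zc_mul_rot]
      rw [Finset.prod_mul_distrib, Finset.prod_const, Complex.ofReal_mul, Complex.ofReal_prod]
      unfold rot
      have : zc ψ ^ d = zc ψ ^ (d - S.card) * zc ψ ^ S.card := by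
        rw [← pow_add]; congr 1; omega
      rw [this]; ring
    · rw [hc S (by omega)]; simp

lemma TT_star (u v : ℂ) : TT (star u) (star v) = TT u v := by
  unfold TT
  rw [← star_sub, norm_star, norm_star, norm_star]

lemma TT_real (a b : ℝ) : TT (a : ℂ) (b : ℂ) = Ph a b := by
  unfold TT Ph
  rw [← Complex.ofReal_sub, Complex.norm_real, Complex.norm_real, Complex.norm_real]
  simp only [Real.norm_eq_abs, sq_abs]
  congr 1; ring

lemma star_zc_mul (ψ : ℝ) (d : ℕ) : star (zc ψ ^ d) * zc ψ ^ d = 1 := by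
  have : star (zc ψ ^ d) * zc ψ ^ d = ((‖zc ψ ^ d‖ ^ 2 : ℝ) : ℂ) := by
    have := Complex.conj_mul' (zc ψ ^ d)
    push_cast; exact this
  rw [this, norm_pow, norm_zc]; simp

/-- The constant in `circle_Ph`. -/
noncomputable def cPh (d : ℕ) : ℝ := 10 * (10 ^ d * d * 504 + 10 ^ (2 * d) * (2 * d) * 504)

lemma cPh_nonneg (d : ℕ) : 0 ≤ cPh d := by unfold cPh; positivity

lemma circle_Ph {N : ℕ} (hN : 0 < N) (d : ℕ) {c : Finset (Fin n) → ℝ} (hc : DegLE d c)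
    (X Y : Fin n → ℝ) :
    ∑ k ∈ range N, Ph (ev c (rot X Y (ang N k))) (ev c (rot X Y (ang N (k + 1)))) ≤ cPh d := by
  obtain ⟨P, hP, he⟩ := trig d hc X Y
  have h1 : ∀ ψ, ((ev c (rot X Y ψ) : ℝ) : ℂ) = star (zc ψ ^ d) * P.eval (zc ψ) := by
    intro ψ
    rw [he, ← mul_assoc, star_zc_mul, one_mul]
  have h2 := TT_poly_le hN P hP
  have h3 := TT_poly_le hN (Polynomial.X ^ d) (r := d) (by simp)
  simp only [Polynomial.eval_pow, Polynomial.eval_X] at h3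
  have h4 : ∑ k ∈ range N, Ph (ev c (rot X Y (ang N k))) (ev c (rot X Y (ang N (k + 1))))
      ≤ ∑ k ∈ range N, 10 * (TT (zc (ang N k) ^ d) (zc (ang N (k + 1)) ^ d)
        + TT (P.eval (zc (ang N k))) (P.eval (zc (ang N (k + 1))))) := by
    refine Finset.sum_le_sum fun k _ => ?_
    rw [← TT_real, h1, h1, ← TT_star (zc (ang N k) ^ d)]
    exact TT_mul _ _ _ _
  refine h4.trans ?_
  rw [← Finset.mul_sum, Finset.sum_add_distrib, cPh]
  push_cast at h2
  linarith

lemma ms_sum_le {N : ℕ} (s : Multiset ℂ) :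
    ∑ k ∈ range N, (s.map fun ζ => 2 * (1 / (1 + (N : ℝ) ^ 2 * ‖zc (ang N k) - ζ‖ ^ 2))).sum
      ≤ 24 * (Multiset.card s : ℝ) := by
  induction s using Multiset.induction_on with
  | empty => simp
  | cons a s ih =>
    simp only [Multiset.map_cons, Multiset.sum_cons, Multiset.card_cons]
    rw [Finset.sum_add_distrib, ← Finset.mul_sum]
    have := circle_sum N a
    push_cast
    linarith

lemma ms_prod_le {N : ℕ} (hN : 0 < N) {u v : ℂ} (hu : ‖u‖ = 1) (hv : ‖v‖ = 1) (s : Multiset ℂ)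
    (hs : ∀ ζ ∈ s, 1 ≤ N * ‖u - ζ‖) :
    ‖(s.map fun ζ => v - ζ).prod‖ ≤ (4 * N) ^ (Multiset.card s) * ‖(s.map fun ζ => u - ζ).prod‖ := by
  induction s using Multiset.induction_on with
  | empty => simp
  | cons a s ih =>
    simp only [Multiset.map_cons, Multiset.prod_cons, Multiset.card_cons, norm_mul]
    have h1 := ih fun ζ hζ => hs ζ (Multiset.mem_cons_of_mem hζ)
    have h2 := hs a (Multiset.mem_cons_self a s)
    have hN1 : (1 : ℝ) ≤ N := by exact_mod_cast hN
    have h3 : ‖v - a‖ ≤ 4 * N * ‖u - a‖ := by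
      have : ‖v - a‖ ≤ ‖v‖ + ‖u‖ + ‖u - a‖ := by
        have e : v - a = v - u + (u - a) := by ring
        rw [e]
        refine (norm_add_le _ _).trans ?_
        have := norm_sub_le v u
        linarith
      nlinarith [norm_nonneg (u - a)]
    calc _ ≤ 4 * N * ‖u - a‖ * ((4 * N) ^ (Multiset.card s) * ‖(s.map fun ζ => u - ζ).prod‖) := by
          gcongr
      _ = _ := by rw [pow_succ]; ring

lemma circle_ac_poly {N : ℕ} (hN : 0 < N) (P : Polynomial ℂ) {r : ℕ} (hr : P.natDegree ≤ r)
    (θ : ℝ) {ε : ℝ} (hε : 0 < ε) :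
    ∑ k ∈ range N, ε * ‖P.eval (zc (ang N k + θ))‖ ^ 2 /
      (‖P.eval (zc (ang N k))‖ ^ 2 + ε * ‖P.eval (zc (ang N k + θ))‖ ^ 2 + ε ^ 2)
      ≤ 24 * r + N * (ε * ((4 * N) ^ r) ^ 2) := by
  have hN1 : (1 : ℝ) ≤ N := by exact_mod_cast hN
  have hs := (IsAlgClosed.splits P)
  have he : ∀ z, P.eval z = P.leadingCoeff * (P.roots.map (fun ζ => z - ζ)).prod := by
    intro z
    conv_lhs => rw [hs.eq_prod_roots]
    simp [Polynomial.eval_mul, Polynomial.eval_multiset_prod, Multiset.map_map]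
  have hcard : P.roots.card = P.natDegree := hs.natDegree_eq_card_roots.symm
  have key : ∀ k ∈ range N, ε * ‖P.eval (zc (ang N k + θ))‖ ^ 2 /
      (‖P.eval (zc (ang N k))‖ ^ 2 + ε * ‖P.eval (zc (ang N k + θ))‖ ^ 2 + ε ^ 2)
      ≤ (P.roots.map fun ζ => 2 * (1 / (1 + (N : ℝ) ^ 2 * ‖zc (ang N k) - ζ‖ ^ 2))).sum
        + ε * ((4 * N) ^ r) ^ 2 := by
    intro k _
    have hnn : ∀ x ∈ (P.roots.map fun ζ => 2 * (1 / (1 + (N : ℝ) ^ 2 * ‖zc (ang N k) - ζ‖ ^ 2))),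
        0 ≤ x := by
      intro x hx
      obtain ⟨ζ, _, rfl⟩ := Multiset.mem_map.mp hx
      positivity
    by_cases hb : ∀ ζ ∈ P.roots, 1 ≤ N * ‖zc (ang N k) - ζ‖
    · have h1 := ms_prod_le hN (norm_zc (ang N k)) (norm_zc (ang N k + θ)) P.roots hb
      have h2 : ‖P.eval (zc (ang N k + θ))‖ ≤ (4 * N) ^ r * ‖P.eval (zc (ang N k))‖ := by
        rw [he, he, norm_mul, norm_mul]
        have h3 : (4 * (N : ℝ)) ^ (Multiset.card P.roots) ≤ (4 * N) ^ r :=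
          pow_le_pow_right₀ (by linarith) (hcard ▸ hr)
        calc _ ≤ ‖P.leadingCoeff‖ * ((4 * N) ^ (Multiset.card P.roots)
              * ‖(P.roots.map fun ζ => zc (ang N k) - ζ).prod‖) := by gcongr
          _ ≤ ‖P.leadingCoeff‖ * ((4 * N) ^ r
              * ‖(P.roots.map fun ζ => zc (ang N k) - ζ).prod‖) := by gcongr
          _ = _ := by ring
      have h4 := pow_le_pow_left₀ (norm_nonneg _) h2 2
      rw [mul_pow] at h4
      have h5 := Multiset.sum_nonneg hnn
      refine le_trans ?_ (le_add_of_nonneg_left h5)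
      rw [div_le_iff₀ (by positivity)]
      have : ε * ‖P.eval (zc (ang N k + θ))‖ ^ 2
        ≤ ε * (((4 * N) ^ r) ^ 2 * ‖P.eval (zc (ang N k))‖ ^ 2) := by gcongr
      refine this.trans ?_
      rw [mul_add, mul_add, mul_assoc, add_assoc]
      refine le_add_of_nonneg_right (by positivity)
    · push Not at hb
      obtain ⟨ζ, hζ, hlt⟩ := hb
      have h1 : ε * ‖P.eval (zc (ang N k + θ))‖ ^ 2 /
        (‖P.eval (zc (ang N k))‖ ^ 2 + ε * ‖P.eval (zc (ang N k + θ))‖ ^ 2 + ε ^ 2) ≤ 1 := by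
        apply div_le_one_of_le₀ <;> nlinarith [sq_nonneg ‖P.eval (zc (ang N k))‖, sq_nonneg ‖P.eval (zc (ang N k + θ))‖, mul_nonneg hε.le (sq_nonneg ‖P.eval (zc (ang N k + θ))‖)]
      have h2 := Multiset.single_le_sum hnn _ (Multiset.mem_map_of_mem _ hζ)
      have h3 : 1 ≤ 2 * (1 / (1 + (N : ℝ) ^ 2 * ‖zc (ang N k) - ζ‖ ^ 2)) := by
        rw [mul_one_div, le_div_iff₀ (by positivity)]
        have : (N * ‖zc (ang N k) - ζ‖) ^ 2 ≤ 1 := pow_le_one₀ (by positivity) hlt.le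
        rw [mul_pow] at this; linarith
      have : 0 ≤ ε * ((4 * (N : ℝ)) ^ r) ^ 2 := by positivity
      linarith
  refine (Finset.sum_le_sum key).trans ?_
  rw [Finset.sum_add_distrib, Finset.sum_const, card_range, nsmul_eq_mul]
  have h1 := ms_sum_le (N := N) P.roots
  have h2 : (Multiset.card P.roots : ℝ) ≤ r := by rw [hcard]; exact_mod_cast hr
  linarith

lemma circle_ac {N : ℕ} (hN : 0 < N) (d : ℕ) {c : Finset (Fin n) → ℝ} (hc : DegLE d c)
    (X Y : Fin n → ℝ) (θ : ℝ) {ε : ℝ} (hε : 0 < ε) :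
    ∑ k ∈ range N, ε * ev c (rot X Y (ang N k + θ)) ^ 2 /
      (ev c (rot X Y (ang N k)) ^ 2 + ε * ev c (rot X Y (ang N k + θ)) ^ 2 + ε ^ 2)
      ≤ 48 * d + N * (ε * ((4 * N) ^ (2 * d)) ^ 2) := by
  obtain ⟨P, hP, he⟩ := trig d hc X Y
  have h1 : ∀ ψ, ‖P.eval (zc ψ)‖ ^ 2 = ev c (rot X Y ψ) ^ 2 := by
    intro ψ
    rw [he, norm_mul, norm_pow, norm_zc, one_pow, one_mul, Complex.norm_real, Real.norm_eq_abs,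
      sq_abs]
  have := circle_ac_poly hN P hP θ hε
  simp only [h1] at this
  push_cast at this
  linarith

end Trig

/-! ### Anti-concentration and the regular case -/

/-- Noise weight. -/
noncomputable def wr (ε : ℝ) : Bool → ℝ := fun r => if r then ε else 1 - ε

lemma wr_pw {ε : ℝ} (h0 : 0 ≤ ε) (h1 : ε ≤ 1) : IsPW (wr ε) :=
  ⟨fun u => by unfold wr; split_ifs <;> linarith, by unfold wr; simp⟩

/-- Two independent bits. -/
noncomputable def w2 : Bool × Bool → ℝ := fun u => wb u.1 * wb u.2

lemma pw_prod {Ω Ω' : Type} [Fintype Ω] [Fintype Ω'] {w : Ω → ℝ} {w' : Ω' → ℝ} (h : IsPW w)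
    (h' : IsPW w') : IsPW (fun u : Ω × Ω' => w u.1 * w' u.2) :=
  ⟨fun u => mul_nonneg (h.nonneg _) (h'.nonneg _), by
    rw [Fintype.sum_prod_type]
    simp only [← Finset.mul_sum, h'.sum_one, mul_one, h.sum_one]⟩

/-- Noise bit and three independent bits. -/
noncomputable def w4 (ε : ℝ) : Bool × (Bool × (Bool × Bool)) → ℝ :=
  fun u => wr ε u.1 * (fun v : Bool × (Bool × Bool) => wb v.1 * w2 v.2) u.2

lemma w2_pw : IsPW w2 := pw_prod wb_pw wb_pw

lemma w4_pw {ε : ℝ} (h0 : 0 ≤ ε) (h1 : ε ≤ 1) : IsPW (w4 ε) :=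
  pw_prod (wr_pw h0 h1) (pw_prod wb_pw w2_pw)

lemma cs_sq_le (ψ : ℝ) (a b : Bool) :
    (Real.cos ψ * chi a + Real.sin ψ * chi b) ^ 2 ≤ 2 := by
  have := Real.sin_sq_add_cos_sq ψ
  have ha := chi_sq a
  have hb := chi_sq b
  nlinarith [sq_nonneg (Real.cos ψ * chi b - Real.sin ψ * chi a), sq_nonneg (Real.cos ψ * chi a - Real.sin ψ * chi b)]

lemma nice_rot2 (ψ : ℝ) :
    Nice w2 (fun u => Real.cos ψ * chi u.1 + Real.sin ψ * chi u.2) := by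
  have := Real.sin_sq_add_cos_sq ψ
  refine ⟨?_, ?_, ?_, fun u => cs_sq_le ψ _ _⟩
  · simp [w2, wb, Fintype.sum_prod_type, chi]; ring
  · simp [w2, wb, Fintype.sum_prod_type, chi]; nlinarith
  · simp [w2, wb, Fintype.sum_prod_type, chi]; ring

lemma nice_rot4 (ε ψ : ℝ) :
    Nice (w4 ε) (fun u => Real.cos ψ * chi u.2.1 + Real.sin ψ * chi u.2.2.1) := by
  have := Real.sin_sq_add_cos_sq ψ
  refine ⟨?_, ?_, ?_, fun u => cs_sq_le ψ _ _⟩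
  · simp [w4, w2, wb, wr, Fintype.sum_prod_type, chi]; ring
  · simp [w4, w2, wb, wr, Fintype.sum_prod_type, chi]; nlinarith
  · simp [w4, w2, wb, wr, Fintype.sum_prod_type, chi]; ring

/-- First noisy bit. -/
def nu (u : Bool × (Bool × (Bool × Bool))) : Bool := if u.1 then u.2.2.1 else u.2.1
/-- Second noisy bit. -/
def nv (u : Bool × (Bool × (Bool × Bool))) : Bool := if u.1 then u.2.2.2 else u.2.1

lemma nice_nu (ε : ℝ) : Nice (w4 ε) (fun u => chi (nu u)) := by
  refine ⟨?_, ?_, ?_, fun u => by rw [chi_sq]; norm_num⟩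
  · simp [w4, w2, wb, wr, Fintype.sum_prod_type, chi, nu]; ring
  · simp [w4, w2, wb, wr, Fintype.sum_prod_type, chi, nu]; ring
  · simp [w4, w2, wb, wr, Fintype.sum_prod_type, chi, nu]; ring

lemma nice_nv (ε : ℝ) : Nice (w4 ε) (fun u => chi (nv u)) := by
  refine ⟨?_, ?_, ?_, fun u => by rw [chi_sq]; norm_num⟩
  · simp [w4, w2, wb, wr, Fintype.sum_prod_type, chi, nv]; ring
  · simp [w4, w2, wb, wr, Fintype.sum_prod_type, chi, nv]; ring
  · simp [w4, w2, wb, wr, Fintype.sum_prod_type, chi, nv]; ring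

lemma cov_nu_nv (ε : ℝ) : ∑ u, w4 ε u * (chi (nu u) * chi (nv u)) = 1 - ε := by
  simp [w4, w2, wb, wr, Fintype.sum_prod_type, chi, nu, nv]; ring

lemma cov_rot4 (ε ψ ψ' : ℝ) : ∑ u, w4 ε u *
    ((Real.cos ψ * chi u.2.1 + Real.sin ψ * chi u.2.2.1)
      * (Real.cos ψ' * chi u.2.1 + Real.sin ψ' * chi u.2.2.1)) = Real.cos (ψ' - ψ) := by
  rw [Real.cos_sub]
  simp [w4, w2, wb, wr, Fintype.sum_prod_type, chi]; ring

lemma cov_rot2 (ψ ψ' : ℝ) : ∑ u, w2 u *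
    ((Real.cos ψ * chi u.1 + Real.sin ψ * chi u.2)
      * (Real.cos ψ' * chi u.1 + Real.sin ψ' * chi u.2)) = Real.cos (ψ' - ψ) := by
  rw [Real.cos_sub]
  simp [w2, wb, Fintype.sum_prod_type, chi]; ring

section Reg
variable {n : ℕ}

lemma Ex_nu (ε : ℝ) (F : (Fin n → Bool) → ℝ) :
    Ex (w4 ε) (fun ω => F (fun i => nu (ω i))) = Ex wb F := by
  apply Ex_map
  intro v
  cases v <;> simp [w4, w2, wb, wr, Fintype.sum_prod_type, nu] <;> ring

lemma ac_lower {d : ℕ} {c : Finset (Fin n) → ℝ} (hc : DegLE d c) (hv : vr c = 1) :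
    1 / (1 + 9 ^ d) ≤ Ex wb (fun y => pc c y ^ 2 / (1 + pc c y ^ 2)) := by
  have h1 : 1 ≤ sqn c := by have := sqn_eq c; nlinarith [sq_nonneg (c ∅)]
  set σ := sqn c with hσ
  set t : ℝ := 1 / (1 + 9 ^ d * σ) with ht
  have h9 : (0 : ℝ) < 9 ^ d := by positivity
  have hden : 0 < 1 + 9 ^ d * σ := by positivity
  have h2 : Ex wb (fun y => (2 * t - t ^ 2) * pc c y ^ 2 - t ^ 2 * pc c y ^ 4)
      ≤ Ex wb (fun y => pc c y ^ 2 / (1 + pc c y ^ 2)) := by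
    refine Ex_mono wb_pw fun y => ?_
    rw [le_div_iff₀ (by positivity)]
    have : 0 ≤ (pc c y * (1 - t * (1 + pc c y ^ 2))) ^ 2 := sq_nonneg _
    nlinarith
  rw [Ex_sub, Ex_const_mul, Ex_const_mul, Ex_pc_sq] at h2
  refine le_trans ?_ h2
  have h3 := hyper_pc hc
  have h4 : t * σ ≤ (2 * t - t ^ 2) * σ - t ^ 2 * (9 ^ d * σ ^ 2) := by
    have : t * (1 + 9 ^ d * σ) = 1 := by rw [ht]; field_simp
    have e : t * σ * (t * (1 + 9 ^ d * σ)) = t * σ := by rw [this, mul_one]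
    nlinarith
  have h5 : 1 / (1 + 9 ^ d) ≤ t * σ := by
    rw [ht, div_mul_eq_mul_div, one_mul, div_le_div_iff₀ (by positivity) hden]
    nlinarith
  nlinarith [sq_nonneg t]

lemma tay_ac {ε : ℝ} (hε : 0 < ε) (hε1 : ε ≤ 1 / 2) :
    Tay (176 * (1 / ε) ^ 3) (fun a b => ε * b ^ 2 / (a ^ 2 + ε * b ^ 2 + ε ^ 2)) := by
  have h := (tay_quad 0 0 0 1 (by norm_num)).scale (by norm_num) (1 / ε) (1 / Real.sqrt ε) (1 / ε)
    (by rw [abs_of_pos (by positivity)])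
    (by
      rw [abs_of_pos (by positivity)]
      apply one_div_le_one_div_of_le hε
      rw [Real.le_sqrt hε.le hε.le]; nlinarith)
  convert h using 3 with a b
  have hs := Real.sq_sqrt hε.le
  have hs0 : 0 < Real.sqrt ε := Real.sqrt_pos.mpr hε
  have e1 : (1 / Real.sqrt ε * b) ^ 2 = b ^ 2 / ε := by
    rw [mul_pow, div_pow, hs]; ring
  have e2 : (1 / ε * a) ^ 2 = a ^ 2 / ε ^ 2 := by rw [mul_pow, div_pow]; ring
  rw [e1, e2]
  field_simp
  ring

lemma ac {d : ℕ} {c : Finset (Fin n) → ℝ} (hc : DegLE d c) (hv : vr c = 1) {s : ℝ} (hs : 0 < s)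
    (hI : ∀ i, infl i c ≤ s ^ 2) {ε : ℝ} (hε : 0 < ε) (hε1 : ε ≤ 1 / 2) {N : ℕ} (hN : 0 < N) :
    Ex wb (fun x => if |pc c x| ≤ ε then (1 : ℝ) else 0)
      ≤ (1 + 9 ^ d) * (48 * d / N + ε * ((4 * N) ^ (2 * d)) ^ 2
          + 12 * 9 ^ d * (176 * (1 / ε) ^ 3) * s * d) := by
  have hNr : (0 : ℝ) < N := by exact_mod_cast hN
  set Θ : ℝ → ℝ → ℝ := fun a b => ε * b ^ 2 / (a ^ 2 + ε * b ^ 2 + ε ^ 2) with hΘ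
  set err := 12 * 9 ^ d * (176 * (1 / ε) ^ 3) * s * (d : ℝ) with herr
  -- upper bound
  have hk : ∀ k ∈ range N, Ex w2 (fun ω => Θ (pc c fun i => (ω i).1) (pc c fun i => (ω i).2))
      ≤ Ex w2 (fun ω => Θ (ev c (rot (fun i => chi (ω i).1) (fun i => chi (ω i).2) (ang N k)))
        (ev c (rot (fun i => chi (ω i).1) (fun i => chi (ω i).2) (ang N k + Real.pi / 2)))) + err := by
    intro k _
    have h := lindeberg w2_pw (nice_rot2 0) (nice_rot2 (0 + Real.pi / 2)) (nice_rot2 (ang N k))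
      (nice_rot2 (ang N k + Real.pi / 2)) (by rw [cov_rot2, cov_rot2]; simp) hc hs hI
      (by positivity) (tay_ac hε hε1)
    have h' := (abs_le.mp h).2
    simp only [zero_add, Real.cos_zero, Real.sin_zero, Real.cos_pi_div_two, Real.sin_pi_div_two,
      one_mul, zero_mul, add_zero, hv, mul_one] at h'
    exact sub_le_iff_le_add'.mp h'
  have hsum := Finset.sum_le_sum hk
  rw [Finset.sum_const, card_range, nsmul_eq_mul, Finset.sum_add_distrib, Finset.sum_const,
    card_range, nsmul_eq_mul, ← Ex_sum] at hsum
  have hup : Ex w2 (fun ω => ∑ k ∈ range N,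
      Θ (ev c (rot (fun i => chi (ω i).1) (fun i => chi (ω i).2) (ang N k)))
        (ev c (rot (fun i => chi (ω i).1) (fun i => chi (ω i).2) (ang N k + Real.pi / 2))))
      ≤ 48 * d + N * (ε * ((4 * N) ^ (2 * d)) ^ 2) := by
    refine le_trans (Ex_mono w2_pw fun ω => circle_ac hN d hc _ _ (Real.pi / 2) hε) ?_
    rw [Ex_const w2_pw]
  -- lower bound
  have hlow : Ex wb (fun x => if |pc c x| ≤ ε then (1 : ℝ) else 0) * (1 / (1 + 9 ^ d))
      ≤ Ex w2 (fun ω => Θ (pc c fun i => (ω i).1) (pc c fun i => (ω i).2)) := by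
    have e := Ex_prod_type (n := n) (w := wb) wb
      (fun ω => Θ (pc c fun i => (ω i).1) (pc c fun i => (ω i).2))
    have e' : Ex w2 (fun ω : Fin n → Bool × Bool => Θ (pc c fun i => (ω i).1) (pc c fun i => (ω i).2))
      = Ex (fun u : Bool × Bool => wb u.1 * wb u.2)
        (fun ω => Θ (pc c fun i => (ω i).1) (pc c fun i => (ω i).2)) := rfl
    rw [e', e, ← Ex_mul_const]
    refine Ex_mono wb_pw fun x => ?_
    split_ifs with hx
    · rw [one_mul]
      refine (ac_lower hc hv).trans (Ex_mono wb_pw fun y => ?_)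
      simp only [hΘ]
      have hx2 : pc c x ^ 2 ≤ ε ^ 2 := by
        rw [← sq_abs]; exact pow_le_pow_left₀ (abs_nonneg _) hx 2
      rw [div_le_div_iff₀ (by positivity) (by positivity)]
      have hb := sq_nonneg (pc c y)
      have h1 : pc c x ^ 2 + ε ^ 2 ≤ ε := by nlinarith
      nlinarith [mul_le_mul_of_nonneg_left h1 hb]
    · rw [zero_mul]
      exact Ex_nonneg wb_pw fun y => by simp only [hΘ]; positivity
  have h9 : (0 : ℝ) < 1 + 9 ^ d := by positivity
  have h1 : Ex wb (fun x => if |pc c x| ≤ ε then (1 : ℝ) else 0) ≤ (1 + 9 ^ d) *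
      Ex w2 (fun ω => Θ (pc c fun i => (ω i).1) (pc c fun i => (ω i).2)) := by
    rw [mul_one_div, div_le_iff₀ h9] at hlow; linarith
  refine h1.trans (mul_le_mul_of_nonneg_left ?_ h9.le)
  have h2 : N * Ex w2 (fun ω => Θ (pc c fun i => (ω i).1) (pc c fun i => (ω i).2))
      ≤ N * (48 * d / N + ε * ((4 * N) ^ (2 * d)) ^ 2 + err) := by
    refine (hsum.trans (add_le_add_left hup _)).trans (le_of_eq ?_)
    field_simp
  exact le_of_mul_le_mul_left h2 hNr

end Reg

/-- The noise rate. -/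
noncomputable def eN (N : ℕ) : ℝ := 1 - Real.cos (2 * Real.pi / N)

lemma eN_eq (N : ℕ) : eN N = 2 * Real.sin (Real.pi / N) ^ 2 := by
  unfold eN
  have : 2 * Real.pi / N = 2 * (Real.pi / N) := by ring
  rw [this, Real.cos_two_mul]
  have := Real.sin_sq_add_cos_sq (Real.pi / N)
  linarith

lemma eN_nonneg (N : ℕ) : 0 ≤ eN N := by rw [eN_eq]; positivity

lemma eN_lower {N : ℕ} (hN : 4 ≤ N) : 8 ≤ N ^ 2 * eN N := by
  have h := sin_lower (N := N) (t := 1) (by omega) (by omega)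
  have : min 1 (N - 1) = 1 := by omega
  rw [this] at h
  rw [eN_eq]
  simp only [Nat.cast_one, mul_one, one_pow] at h
  linarith

lemma eN_upper {N : ℕ} (hN : 4 ≤ N) : N ^ 2 * eN N ≤ 20 := by
  have hNr : (0 : ℝ) < N := by exact_mod_cast (by omega : 0 < N)
  rw [eN_eq]
  have h1 : |Real.sin (Real.pi / N)| ≤ Real.pi / N := by
    refine (Real.abs_sin_le_abs).trans (le_of_eq ?_)
    rw [abs_of_nonneg (by positivity)]
  have h2 : N * |Real.sin (Real.pi / N)| ≤ Real.pi := by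
    calc _ ≤ N * (Real.pi / N) := by gcongr
      _ = _ := by field_simp
  have h3 := pow_le_pow_left₀ (by positivity) h2 2
  rw [mul_pow, sq_abs] at h3
  have h4 := Real.pi_lt_d2
  have h5 := Real.pi_pos
  nlinarith

lemma eN_le_one {N : ℕ} (hN : 4 ≤ N) : eN N ≤ 1 := by
  have hNr : (0 : ℝ) < N := by exact_mod_cast (by omega : 0 < N)
  have h4 : (4 : ℝ) ≤ N := by exact_mod_cast hN
  unfold eN
  have : 0 ≤ Real.cos (2 * Real.pi / N) := by
    apply Real.cos_nonneg_of_neg_pi_div_two_le_of_le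
    · have : 0 ≤ 2 * Real.pi / N := by positivity
      have := Real.pi_pos; linarith
    · rw [div_le_iff₀ hNr]; nlinarith [Real.pi_pos]
  linarith

lemma sobolev {N : ℕ} (hN : 0 < N) (r : ℕ → ℝ) {k : ℕ} (hk : k ≤ N) :
    r k ^ 2 ≤ 2 / N * ∑ j ∈ range N, r j ^ 2 + 2 * N * ∑ l ∈ range N, (r l - r (l + 1)) ^ 2 := by
  have hNr : (0 : ℝ) < N := by exact_mod_cast hN
  set D := ∑ l ∈ range N, (r l - r (l + 1)) ^ 2 with hD
  have habs : ∀ a b, a ≤ b → b ≤ N → |r a - r b| ≤ ∑ l ∈ range N, |r l - r (l + 1)| := by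
    intro a b hab hb
    have h := dist_le_Ico_sum_dist r hab
    simp only [Real.dist_eq] at h
    refine h.trans (Finset.sum_le_sum_of_subset_of_nonneg ?_ fun _ _ _ => abs_nonneg _)
    intro l hl
    rw [Finset.mem_Ico] at hl
    rw [Finset.mem_range]; omega
  have hCS : (∑ l ∈ range N, |r l - r (l + 1)|) ^ 2 ≤ N * D := by
    have := sq_sum_le_card_mul_sum_sq (s := range N) (f := fun l => |r l - r (l + 1)|)
    simpa only [card_range, sq_abs] using this
  have h2 : ∀ j ∈ range N, r k ^ 2 ≤ 2 * r j ^ 2 + 2 * (N * D) := by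
    intro j hj
    rw [Finset.mem_range] at hj
    have h3 : |r k - r j| ≤ ∑ l ∈ range N, |r l - r (l + 1)| := by
      rcases le_total k j with h | h
      · exact habs k j h hj.le
      · rw [abs_sub_comm]; exact habs j k h hk
    have h4 := pow_le_pow_left₀ (abs_nonneg _) h3 2
    rw [sq_abs] at h4
    nlinarith [sq_nonneg (r k - 2 * r j)]
  have h3 := Finset.sum_le_sum h2
  rw [Finset.sum_const, card_range, nsmul_eq_mul, Finset.sum_add_distrib, ← Finset.mul_sum,
    Finset.sum_const, card_range, nsmul_eq_mul] at h3
  have h4 : N * r k ^ 2 ≤ N * (2 / N * ∑ j ∈ range N, r j ^ 2 + 2 * N * D) := by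
    refine h3.trans (le_of_eq ?_)
    field_simp
  exact le_of_mul_le_mul_left h4 hNr

/-- Pointwise bound for large mean. -/
lemma sum_Ph_le {N : ℕ} (hN : 0 < N) (q : ℕ → ℝ) {A μ : ℝ} (hμ : μ ≠ 0) (hA : 0 ≤ A)
    (hq : ∑ k ∈ range N, Ph (q k) (q (k + 1)) ≤ A) :
    ∑ k ∈ range N, Ph (q k) (q (k + 1)) ≤ (4 * A + 1) / μ ^ 2 *
      (2 / N * ∑ j ∈ range N, (q j - μ) ^ 2 + 2 * N * ∑ l ∈ range N, (q l - q (l + 1)) ^ 2) := by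
  have hNr : (1 : ℝ) ≤ N := by exact_mod_cast hN
  have hs := fun k (hk : k ≤ N) => sobolev hN (fun k => q k - μ) hk
  simp only [sub_sub_sub_cancel_right] at hs
  set D := ∑ l ∈ range N, (q l - q (l + 1)) ^ 2 with hD
  have hD0 : 0 ≤ D := Finset.sum_nonneg fun _ _ => sq_nonneg _
  have hR0 : 0 ≤ 2 / (N : ℝ) * ∑ j ∈ range N, (q j - μ) ^ 2 := by positivity
  set G := 2 / N * ∑ j ∈ range N, (q j - μ) ^ 2 + 2 * N * D with hG
  have hμ2 : 0 < μ ^ 2 := by positivity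
  have hG0 : 2 * D ≤ G := by nlinarith
  rcases lt_or_ge G (μ ^ 2 / 4) with h | h
  · have h1 : ∀ k ≤ N, μ ^ 2 / 4 ≤ q k ^ 2 := by
      intro k hk
      have h2 := hs k hk
      have h3 : (q k - μ) ^ 2 < (μ / 2) ^ 2 := by nlinarith
      have h4 := sq_lt_sq.mp h3
      have h5 : |μ| / 2 ≤ |q k| := by
        have : |μ| ≤ |q k| + |q k - μ| := by
          have e : μ = q k - (q k - μ) := by ring
          calc |μ| = |q k - (q k - μ)| := by rw [← e]
            _ ≤ _ := abs_sub _ _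
        have h6 : |μ / 2| = |μ| / 2 := by rw [abs_div]; norm_num
        rw [h6] at h4; linarith
      have h6 := pow_le_pow_left₀ (by positivity) h5 2
      rw [div_pow, sq_abs, sq_abs] at h6
      linarith
    have h2 : ∑ k ∈ range N, Ph (q k) (q (k + 1)) ≤ ∑ k ∈ range N, 2 / μ ^ 2 * (q k - q (k + 1)) ^ 2 := by
      refine Finset.sum_le_sum fun k hk => ?_
      rw [Finset.mem_range] at hk
      have ha := h1 k (by omega)
      have hb := h1 (k + 1) (by omega)
      unfold Ph
      rw [div_mul_eq_mul_div, div_le_div_iff₀ (by linarith) hμ2]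
      nlinarith [sq_nonneg (q k - q (k + 1))]
    rw [← Finset.mul_sum] at h2
    refine h2.trans ?_
    rw [div_mul_eq_mul_div, div_mul_eq_mul_div]
    refine div_le_div_of_nonneg_right ?_ hμ2.le
    nlinarith [mul_nonneg hA (by linarith : 0 ≤ G)]
  · refine hq.trans ?_
    rw [div_mul_eq_mul_div, le_div_iff₀ hμ2]
    nlinarith

section Reg2
variable {n : ℕ}

lemma Ex_diff_sq {N : ℕ} (hN : 4 ≤ N) {d : ℕ} {c : Finset (Fin n) → ℝ} (hc : DegLE d c) (k : ℕ) :
    Ex (w4 (eN N)) (fun ω =>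
      (ev c (rot (fun i => chi (ω i).2.1) (fun i => chi (ω i).2.2.1) (ang N k))
      - ev c (rot (fun i => chi (ω i).2.1) (fun i => chi (ω i).2.2.1) (ang N (k + 1)))) ^ 2)
      ≤ 2 * (d * eN N * vr c) := by
  have hw := w4_pw (eN_nonneg N) (eN_le_one hN)
  have h1 := Ex_sq (n := n) hw (U := fun _ => _) (fun _ => nice_rot4 (eN N) (ang N k)) c
  have h2 := Ex_sq (n := n) hw (U := fun _ => _) (fun _ => nice_rot4 (eN N) (ang N (k + 1))) c
  have h3 := Ex_cov (n := n) hw (U := fun _ => _) (V := fun _ => _)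
    (fun _ => (nice_rot4 (eN N) (ang N k)).m1)
    (fun _ => (nice_rot4 (eN N) (ang N (k + 1))).m1) (fun _ => cov_rot4 _ _ _) c c
  rw [ang_succ] at h3
  have e : ∀ a b : ℝ, (a - b) ^ 2 = a ^ 2 + b ^ 2 - 2 * (a * b) := fun a b => by ring
  simp only [e]
  rw [Ex_sub, Ex_add, Ex_const_mul]
  unfold rot
  rw [h1, h2, h3]
  have hρ : Real.cos (2 * Real.pi / N) = 1 - eN N := by unfold eN; ring
  rw [hρ]
  have h0 := eN_nonneg N
  have h10 := eN_le_one hN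
  have h4 : sqn c - ∑ S, c S * c S * (1 - eN N) ^ S.card ≤ d * eN N * vr c := by
    have hv : vr c = ∑ S, if S = ∅ then 0 else c S ^ 2 := by
      rw [vr_eq, ← Finset.add_sum_erase univ _ (Finset.mem_univ (∅ : Finset (Fin n))), if_pos rfl,
        zero_add]
      exact Finset.sum_congr rfl fun S hS => by rw [if_neg (Finset.ne_of_mem_erase hS)]
    rw [hv, sqn, ← Finset.sum_sub_distrib, Finset.mul_sum]
    refine Finset.sum_le_sum fun S _ => ?_
    split_ifs with hS
    · subst hS; simp [sq]
    · rcases lt_or_ge d S.card with h | h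
      · rw [hc S h]; simp
      · have hb := one_add_mul_le_pow (a := - eN N) (by linarith) S.card
        have hd' : (S.card : ℝ) ≤ d := by exact_mod_cast h
        have h5 : 1 - d * eN N ≤ (1 - eN N) ^ S.card := by
          have : (1 : ℝ) + - eN N = 1 - eN N := by ring
          rw [this] at hb
          nlinarith
        nlinarith [sq_nonneg (c S)]
  linarith

/-- Constant in `Ex_circle`. -/
noncomputable def cR (d : ℕ) : ℝ := cPh d + (4 * cPh d + 1) * (2 + 80 * d)

lemma cR_nonneg (d : ℕ) : 0 ≤ cR d := by
  have := cPh_nonneg d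
  unfold cR; positivity

lemma Ex_circle {N : ℕ} (hN : 4 ≤ N) {d : ℕ} {c : Finset (Fin n) → ℝ} (hc : DegLE d c)
    (hv : vr c = 1) :
    Ex (w4 (eN N)) (fun ω => ∑ k ∈ range N,
      Ph (ev c (rot (fun i => chi (ω i).2.1) (fun i => chi (ω i).2.2.1) (ang N k)))
        (ev c (rot (fun i => chi (ω i).2.1) (fun i => chi (ω i).2.2.1) (ang N (k + 1)))))
      ≤ cR d * wt c := by
  have hw := w4_pw (eN_nonneg N) (eN_le_one hN)
  have hN0 : 0 < N := by omega
  have hNr : (0 : ℝ) < N := by exact_mod_cast hN0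
  have hA := cPh_nonneg d
  set E := Ex (w4 (eN N)) (fun ω => ∑ k ∈ range N,
      Ph (ev c (rot (fun i => chi (ω i).2.1) (fun i => chi (ω i).2.2.1) (ang N k)))
        (ev c (rot (fun i => chi (ω i).2.1) (fun i => chi (ω i).2.2.1) (ang N (k + 1))))) with hE
  have h1 : E ≤ cPh d := by
    refine (Ex_mono hw fun ω => circle_Ph hN0 d hc _ _).trans ?_
    rw [Ex_const hw]
  have h2 : E * c ∅ ^ 2 ≤ (4 * cPh d + 1) * (2 + 80 * d) := by
    rcases eq_or_ne (c ∅) 0 with h0 | h0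
    · rw [h0]; simp; positivity
    have h3 : E ≤ (4 * cPh d + 1) / c ∅ ^ 2 * (2 + 80 * d) := by
      refine (Ex_mono hw fun ω => sum_Ph_le hN0
        (fun k => ev c (rot (fun i => chi (ω i).2.1) (fun i => chi (ω i).2.2.1) (ang N k)))
        h0 hA (circle_Ph hN0 d hc _ _)).trans ?_
      rw [Ex_const_mul, Ex_add, Ex_const_mul, Ex_const_mul, Ex_sum, Ex_sum]
      refine mul_le_mul_of_nonneg_left ?_ (by positivity)
      have h4 : ∀ k ∈ range N, Ex (w4 (eN N)) (fun ω =>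
          (ev c (rot (fun i => chi (ω i).2.1) (fun i => chi (ω i).2.2.1) (ang N k)) - c ∅) ^ 2) = 1 := by
        intro k _
        have h5 := Ex_sq (n := n) hw (U := fun _ => _) (fun _ => nice_rot4 (eN N) (ang N k)) (cen c)
        rw [sqn_cen, hv] at h5
        rw [← h5]
        simp only [ev_cen]; rfl
      rw [Finset.sum_congr rfl h4]
      have h5 := Finset.sum_le_sum fun k (_ : k ∈ range N) => Ex_diff_sq hN hc k
      rw [hv] at h5
      simp only [Finset.sum_const, card_range, nsmul_eq_mul, mul_one] at h5 ⊢
      have h6 := eN_upper hN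
      have h7 : 2 / (N : ℝ) * N = 2 := by field_simp
      rw [h7]
      have hd0 : (0 : ℝ) ≤ d := Nat.cast_nonneg d
      have h8 := mul_le_mul_of_nonneg_left h5 (by positivity : (0 : ℝ) ≤ 2 * N)
      have h9 := mul_le_mul_of_nonneg_left h6 hd0
      refine add_le_add_right (h8.trans ?_) _
      nlinarith
    rw [div_mul_eq_mul_div, le_div_iff₀ (by positivity)] at h3
    exact h3
  have h3 := sqn_eq c
  rw [hv] at h3
  unfold wt cR
  rw [hv, h3, mul_one_div, le_div_iff₀ (by positivity)]
  linarith

lemma tay_reg {η : ℝ} (hη : 0 < η) :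
    Tay (704 * (1 / η) ^ 3) (fun a b => (a - b) ^ 2 / (a ^ 2 + b ^ 2 + η ^ 2)) := by
  have h := ((tay_quad 0 (1 / 4) (-(1 / 2)) (1 / 4) (by norm_num [abs_of_pos])).scale (by norm_num) (1 / η) (1 / η) (1 / η)
    (by rw [abs_of_pos (by positivity)])
    (by rw [abs_of_pos (by positivity)])).const_mul 4
  have e : |(4 : ℝ)| * (176 * (1 / η) ^ 3) = 704 * (1 / η) ^ 3 := by
    rw [abs_of_pos (by norm_num)]; ring
  rw [e] at h
  convert h using 3 with a b
  field_simp
  ring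

lemma Ph_le_eta (a b : ℝ) {η : ℝ} (hη : 0 < η) :
    Ph a b ≤ (a - b) ^ 2 / (a ^ 2 + b ^ 2 + η ^ 2) + 2 * η ^ 2 / (a ^ 2 + η ^ 2) := by
  unfold Ph
  rcases eq_or_ne (a ^ 2 + b ^ 2) 0 with h | h
  · rw [h, div_zero]; positivity
  have h0 : 0 < a ^ 2 + b ^ 2 := lt_of_le_of_ne (by positivity) (Ne.symm h)
  have h1 : (a - b) ^ 2 / (a ^ 2 + b ^ 2) ≤ (a - b) ^ 2 / (a ^ 2 + b ^ 2 + η ^ 2)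
      + 2 * η ^ 2 / (a ^ 2 + b ^ 2 + η ^ 2) := by
    rw [← add_div, div_le_div_iff₀ h0 (by positivity)]
    nlinarith [sq_nonneg (a + b), sq_nonneg (a - b), sq_nonneg η, mul_nonneg (sq_nonneg η) (sq_nonneg (a + b))]
  refine h1.trans (add_le_add_right ?_ _)
  apply div_le_div_of_nonneg_left (by positivity) (by positivity)
  nlinarith [sq_nonneg b]

lemma eta_le (a : ℝ) {η ε : ℝ} (hη : 0 < η) (hε : 0 < ε) :
    2 * η ^ 2 / (a ^ 2 + η ^ 2) ≤ 2 * (if |a| ≤ ε then (1 : ℝ) else 0) + 2 * η ^ 2 / ε ^ 2 := by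
  split_ifs with h
  · have h1 : 2 * η ^ 2 / (a ^ 2 + η ^ 2) ≤ 2 := by
      rw [div_le_iff₀ (by positivity)]; nlinarith [sq_nonneg a]
    have : 0 ≤ 2 * η ^ 2 / ε ^ 2 := by positivity
    linarith
  · push Not at h
    have h1 := pow_le_pow_left₀ hε.le h.le 2
    rw [sq_abs] at h1
    rw [mul_zero, zero_add]
    apply div_le_div_of_nonneg_left (by positivity) (by positivity)
    nlinarith [sq_nonneg η]

lemma eta_Ph_le (a b η : ℝ) : (a - b) ^ 2 / (a ^ 2 + b ^ 2 + η ^ 2) ≤ Ph a b := by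
  unfold Ph
  rcases eq_or_ne (a ^ 2 + b ^ 2) 0 with h0 | h0
  · have ha : a = 0 := by nlinarith [sq_nonneg a, sq_nonneg b]
    have hb : b = 0 := by nlinarith [sq_nonneg a, sq_nonneg b]
    rw [ha, hb]; simp
  · refine div_le_div_of_nonneg_left (sq_nonneg _) (lt_of_le_of_ne (by positivity) h0.symm) ?_
    exact le_add_of_nonneg_right (sq_nonneg _)

lemma reg_raw {N : ℕ} (hN : 4 ≤ N) {d : ℕ} {c : Finset (Fin n) → ℝ} (hc : DegLE d c)
    (hv : vr c = 1) {s : ℝ} (hs : 0 < s) (hI : ∀ i, infl i c ≤ s ^ 2) {η ε : ℝ} (hη : 0 < η)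
    (hε : 0 < ε) :
    Ex (w4 (eN N)) (fun ω => Ph (pc c fun i => nu (ω i)) (pc c fun i => nv (ω i)))
      ≤ cR d * wt c / N + 12 * 9 ^ d * (704 * (1 / η) ^ 3) * s * d
        + (2 * Ex wb (fun x => if |pc c x| ≤ ε then (1 : ℝ) else 0) + 2 * η ^ 2 / ε ^ 2) := by
  have hw := w4_pw (eN_nonneg N) (eN_le_one hN)
  have hN0 : 0 < N := by omega
  have hNr : (0 : ℝ) < N := by exact_mod_cast hN0
  set Θ : ℝ → ℝ → ℝ := fun a b => (a - b) ^ 2 / (a ^ 2 + b ^ 2 + η ^ 2) with hΘ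
  set err := 12 * 9 ^ d * (704 * (1 / η) ^ 3) * s * (d : ℝ) with herr
  have h1 : Ex (w4 (eN N)) (fun ω => Ph (pc c fun i => nu (ω i)) (pc c fun i => nv (ω i)))
      ≤ Ex (w4 (eN N)) (fun ω => Θ (pc c fun i => nu (ω i)) (pc c fun i => nv (ω i)))
        + Ex (w4 (eN N)) (fun ω => 2 * η ^ 2 / ((pc c fun i => nu (ω i)) ^ 2 + η ^ 2)) := by
    rw [← Ex_add]
    exact Ex_mono hw fun ω => Ph_le_eta _ _ hη
  have h2 : Ex (w4 (eN N)) (fun ω => 2 * η ^ 2 / ((pc c fun i => nu (ω i)) ^ 2 + η ^ 2))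
      ≤ 2 * Ex wb (fun x => if |pc c x| ≤ ε then (1 : ℝ) else 0) + 2 * η ^ 2 / ε ^ 2 := by
    rw [Ex_nu (eN N) (fun x => 2 * η ^ 2 / ((pc c x) ^ 2 + η ^ 2))]
    refine (Ex_mono wb_pw fun x => eta_le (pc c x) hη hε).trans ?_
    rw [Ex_add, Ex_const_mul, Ex_const wb_pw]
  have hk : ∀ k ∈ range N, Ex (w4 (eN N)) (fun ω => Θ (pc c fun i => nu (ω i)) (pc c fun i => nv (ω i)))
      ≤ Ex (w4 (eN N)) (fun ω =>
        Ph (ev c (rot (fun i => chi (ω i).2.1) (fun i => chi (ω i).2.2.1) (ang N k)))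
        (ev c (rot (fun i => chi (ω i).2.1) (fun i => chi (ω i).2.2.1) (ang N (k + 1))))) + err := by
    intro k _
    have h := lindeberg hw (nice_nu (eN N)) (nice_nv (eN N)) (nice_rot4 (eN N) (ang N k))
      (nice_rot4 (eN N) (ang N (k + 1)))
      (by rw [cov_nu_nv, cov_rot4, ang_succ]; unfold eN; ring) hc hs hI
      (by positivity) (tay_reg hη)
    have h' := (abs_le.mp h).2
    rw [hv, mul_one] at h'
    refine (sub_le_iff_le_add'.mp h').trans (add_le_add_left (Ex_mono hw fun ω => ?_) _)
    exact eta_Ph_le _ _ η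
  have hsum := Finset.sum_le_sum hk
  rw [Finset.sum_const, card_range, nsmul_eq_mul, Finset.sum_add_distrib, Finset.sum_const,
    card_range, nsmul_eq_mul, ← Ex_sum] at hsum
  have h3 : N * Ex (w4 (eN N)) (fun ω => Θ (pc c fun i => nu (ω i)) (pc c fun i => nv (ω i)))
      ≤ N * (cR d * wt c / N + err) := by
    refine (hsum.trans (add_le_add_left (Ex_circle hN hc hv) _)).trans (le_of_eq ?_)
    field_simp
  have h4 := le_of_mul_le_mul_left h3 hNr
  linarith

end Reg2

section Reg3
variable {n : ℕ}

/-- Error constant. -/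
noncomputable def cE (d : ℕ) : ℝ :=
  12 * 9 ^ d * 704 * d + 2 * ((1 + 9 ^ d) * (48 * d + 1 + 12 * 9 ^ d * 176 * d)) + 2

lemma cE_nonneg (d : ℕ) : 0 ≤ cE d := by unfold cE; positivity

lemma reg_norm {N : ℕ} (hN : 4 ≤ N) {d : ℕ} {c : Finset (Fin n) → ℝ} (hc : DegLE d c)
    (hv : vr c = 1) (hI : ∀ i, infl i c ≤ (1 / (N : ℝ) ^ (48 * d + 18)) ^ 2) :
    Ex (w4 (eN N)) (fun ω => Ph (pc c fun i => nu (ω i)) (pc c fun i => nv (ω i)))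
      ≤ cR d * wt c / N + cE d / N ^ 3 := by
  have hN0 : 0 < N := by omega
  have hx4 : (4 : ℝ) ≤ N := by exact_mod_cast hN
  have hN3 : ((N ^ 3 : ℕ) : ℝ) = (N : ℝ) ^ 3 := by push_cast; ring
  have hraw := reg_raw hN hc hv (s := 1 / (N : ℝ) ^ (48 * d + 18)) (by positivity) hI
    (η := 1 / (N : ℝ) ^ (16 * d + 5)) (ε := 1 / (N : ℝ) ^ (16 * d + 3)) (by positivity) (by positivity)
  have hac := ac hc hv (s := 1 / (N : ℝ) ^ (48 * d + 18)) (by positivity) hI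
    (ε := 1 / (N : ℝ) ^ (16 * d + 3)) (by positivity) (by
      rw [one_div_le_one_div (by positivity) (by norm_num)]
      have : (N : ℝ) ≤ N ^ (16 * d + 3) := le_self_pow₀ (by linarith) (by omega)
      linarith) (N := N ^ 3) (by positivity)
  rw [hN3] at hac
  generalize Ex wb (fun x => if |pc c x| ≤ 1 / (N : ℝ) ^ (16 * d + 3) then (1 : ℝ) else 0) = A at *
  generalize Ex (w4 (eN N)) (fun ω => Ph (pc c fun i => nu (ω i)) (pc c fun i => nv (ω i))) = E at *
  generalize (N : ℝ) = x at *
  have hx0 : 0 < x := by linarith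
  have hx1 : 1 ≤ x := by linarith
  set D : ℝ := (d : ℝ)
  have hD : 0 ≤ D := Nat.cast_nonneg d
  have e1 : 12 * 9 ^ d * (704 * (1 / (1 / x ^ (16 * d + 5))) ^ 3) * (1 / x ^ (48 * d + 18)) * D
      = 12 * 9 ^ d * 704 * D / x ^ 3 := by
    have : x ^ (48 * d + 18) = (x ^ (16 * d + 5)) ^ 3 * x ^ 3 := by
      rw [← pow_mul, ← pow_add]; congr 1; ring
    rw [this]; field_simp
  have e2 : 2 * (1 / x ^ (16 * d + 5)) ^ 2 / (1 / x ^ (16 * d + 3)) ^ 2 ≤ 2 / x ^ 3 := by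
    have : x ^ (16 * d + 5) = x ^ (16 * d + 3) * x ^ 2 := by rw [← pow_add]
    have h2 : 2 * (1 / x ^ (16 * d + 5)) ^ 2 / (1 / x ^ (16 * d + 3)) ^ 2 = 2 / x ^ 4 := by
      rw [this]; field_simp
    rw [h2]
    apply div_le_div_of_nonneg_left (by norm_num) (by positivity)
    exact pow_le_pow_right₀ hx1 (by norm_num)
  have e3 : 12 * 9 ^ d * (176 * (1 / (1 / x ^ (16 * d + 3))) ^ 3) * (1 / x ^ (48 * d + 18)) * D
      ≤ 12 * 9 ^ d * 176 * D / x ^ 3 := by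
    have : x ^ (48 * d + 18) = (x ^ (16 * d + 3)) ^ 3 * x ^ 9 := by
      rw [← pow_mul, ← pow_add]; congr 1; ring
    have h2 : 12 * 9 ^ d * (176 * (1 / (1 / x ^ (16 * d + 3))) ^ 3) * (1 / x ^ (48 * d + 18)) * D
      = 12 * 9 ^ d * 176 * D / x ^ 9 := by rw [this]; field_simp
    rw [h2]
    apply div_le_div_of_nonneg_left (by positivity) (by positivity)
    exact pow_le_pow_right₀ hx1 (by norm_num)
  have e4 : 1 / x ^ (16 * d + 3) * ((4 * x ^ 3) ^ (2 * d)) ^ 2 ≤ 1 / x ^ 3 := by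
    have h1 : (4 * x ^ 3) ≤ x ^ 4 := by nlinarith [pow_pos hx0 3]
    have h2 : ((4 * x ^ 3) ^ (2 * d)) ^ 2 ≤ ((x ^ 4) ^ (2 * d)) ^ 2 := by gcongr
    have h3 : x ^ (16 * d + 3) = ((x ^ 4) ^ (2 * d)) ^ 2 * x ^ 3 := by
      rw [← pow_mul, ← pow_mul, ← pow_add]; congr 1; ring
    rw [h3, div_mul_eq_mul_div, one_mul, div_le_div_iff₀ (by positivity) (by positivity), one_mul]
    gcongr
  rw [e1] at hraw
  have hA : A ≤ (1 + 9 ^ d) * (48 * D / x ^ 3 + 1 / x ^ 3 + 12 * 9 ^ d * 176 * D / x ^ 3) := by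
    refine hac.trans ?_
    gcongr
  have hfin : cE d / x ^ 3 = 12 * 9 ^ d * 704 * D / x ^ 3
      + (2 * ((1 + 9 ^ d) * (48 * D / x ^ 3 + 1 / x ^ 3 + 12 * 9 ^ d * 176 * D / x ^ 3)) + 2 / x ^ 3) := by
    unfold cE; ring
  rw [hfin]
  linarith

lemma sqn_smul (t : ℝ) (c : Finset (Fin n) → ℝ) : sqn (fun S => t * c S) = t ^ 2 * sqn c := by
  simp [sqn, mul_pow, Finset.mul_sum]

lemma infl_smul (t : ℝ) (c : Finset (Fin n) → ℝ) (i : Fin n) :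
    infl i (fun S => t * c S) = t ^ 2 * infl i c := by
  unfold infl
  rw [← sqn_smul]
  congr 1; ext S; unfold der; split_ifs <;> simp

lemma vr_smul (t : ℝ) (c : Finset (Fin n) → ℝ) : vr (fun S => t * c S) = t ^ 2 * vr c := by
  unfold vr; rw [sqn_smul]; ring

lemma Ph_smul {t : ℝ} (ht : t ≠ 0) (a b : ℝ) : Ph (t * a) (t * b) = Ph a b := by
  unfold Ph
  have h1 : (t * a - t * b) ^ 2 = t ^ 2 * (a - b) ^ 2 := by ring
  have h2 : (t * a) ^ 2 + (t * b) ^ 2 = t ^ 2 * (a ^ 2 + b ^ 2) := by ring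
  rw [h1, h2, mul_div_mul_left _ _ (by positivity)]

/-- Final constant of the regular case. -/
noncomputable def cG (d : ℕ) : ℝ := cR d + 2 * cE d

lemma cG_nonneg (d : ℕ) : 0 ≤ cG d := by
  have := cR_nonneg d; have := cE_nonneg d; unfold cG; positivity

lemma reg_final {N : ℕ} (hN : 4 ≤ N) {d : ℕ} {c : Finset (Fin n) → ℝ} (hc : DegLE d c)
    (hv : 0 < vr c) (hμ : c ∅ ^ 2 ≤ N ^ 2 * vr c)
    (hI : ∀ i, infl i c ≤ (1 / (N : ℝ) ^ (48 * d + 18)) ^ 2 * vr c) :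
    Ex (w4 (eN N)) (fun ω => Ph (pc c fun i => nu (ω i)) (pc c fun i => nv (ω i)))
      ≤ cG d / N * wt c := by
  set t : ℝ := 1 / Real.sqrt (vr c) with ht
  have hx4 : (4 : ℝ) ≤ N := by exact_mod_cast hN
  have hx0 : (0 : ℝ) < N := by linarith
  have ht0 : t ≠ 0 := by
    have := Real.sqrt_pos.mpr hv
    positivity
  have ht2 : t ^ 2 * vr c = 1 := by
    rw [ht, div_pow, Real.sq_sqrt hv.le]; field_simp
  have h := reg_norm hN (c := fun S => t * c S) (d := d) (fun S hS => by simp [hc S hS])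
    (by rw [vr_smul, ht2]) (fun i => by
      rw [infl_smul]
      have := mul_le_mul_of_nonneg_left (hI i) (sq_nonneg t)
      calc _ ≤ _ := this
        _ = (1 / (N : ℝ) ^ (48 * d + 18)) ^ 2 * (t ^ 2 * vr c) := by ring
        _ = _ := by rw [ht2, mul_one])
  have hwt : wt (fun S => t * c S) = wt c := by
    unfold wt; rw [vr_smul, sqn_smul, mul_div_mul_left _ _ (by positivity)]
  rw [hwt] at h
  simp only [pc, ev_smul, Ph_smul ht0] at h
  refine h.trans ?_
  have hsq := sqn_eq c
  have h1 : 1 ≤ 2 * N ^ 2 * wt c := by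
    unfold wt
    rw [mul_div_assoc', le_div_iff₀ (by nlinarith [sq_nonneg (c ∅)])]
    nlinarith
  have h2 : cE d / N ^ 3 ≤ 2 * cE d / N * wt c := by
    have := mul_le_mul_of_nonneg_left h1 (div_nonneg (cE_nonneg d) (pow_nonneg hx0.le 3))
    rw [mul_one] at this
    refine this.trans (le_of_eq ?_)
    field_simp
  have e : cG d / N * wt c = cR d * wt c / N + 2 * cE d / N * wt c := by unfold cG; ring
  rw [e]; linarith

end Reg3

/-! ### Block restriction -/
section Block
variable {n : ℕ}

/-- Indicator of a selected coordinate. -/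
noncomputable def sel (b : Bool) : ℝ := if b then 1 else 0

lemma sel_nonneg (b : Bool) : 0 ≤ sel b := by unfold sel; split_ifs <;> norm_num

lemma Ex_sel {ε : ℝ} (h0 : 0 ≤ ε) (h1 : ε ≤ 1) (i : Fin n) :
    Ex (wr ε) (fun r => sel (r i)) = ε := by
  have h := Ex_indep (n := n) (wr_pw h0 h1) i sel (fun _ => 1) (fun _ _ => rfl)
  simp only [mul_one] at h
  rw [h, Ex_const (wr_pw h0 h1)]
  simp [wr, sel]

lemma Ex_sel2 {ε : ℝ} (h0 : 0 ≤ ε) (h1 : ε ≤ 1) (i j : Fin n) :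
    Ex (wr ε) (fun r => sel (r i) * sel (r j)) ≤ ε ^ 2 + (if i = j then ε else 0) := by
  split_ifs with h
  · subst h
    have : ∀ b, sel b * sel b = sel b := fun b => by cases b <;> simp [sel]
    simp only [this]
    rw [Ex_sel h0 h1]; nlinarith
  · have h2 := Ex_indep (n := n) (wr_pw h0 h1) i sel (fun r => sel (r j))
      (fun ω u => by rw [Function.update_of_ne (Ne.symm h)])
    rw [h2, Ex_sel h0 h1]
    simp [wr, sel, sq]

lemma card_sel (A : Finset (Fin n)) (r : Fin n → Bool) :
    ((A.filter (fun i => r i = true)).card : ℝ) = ∑ i ∈ A, sel (r i) := by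
  unfold sel
  rw [Finset.sum_boole]

lemma tangent {a v : ℝ} (ha : 0 < a) (hv : 0 ≤ v) :
    (3 / (2 * a)) * v - 1 / (2 * a ^ 3) * v ^ 2 ≤ √v := by
  have hs := Real.sq_sqrt hv
  have h0 := Real.sqrt_nonneg v
  set t := √v
  rw [← hs]
  have h1 : 0 ≤ t * (t - a) ^ 2 * (t + 2 * a) := by positivity
  have e : t - (3 / (2 * a) * t ^ 2 - 1 / (2 * a ^ 3) * (t ^ 2) ^ 2)
      = t * (t - a) ^ 2 * (t + 2 * a) / (2 * a ^ 3) := by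
    field_simp; ring
  have : 0 ≤ t * (t - a) ^ 2 * (t + 2 * a) / (2 * a ^ 3) := by positivity
  linarith

lemma sqrt_block {ε : ℝ} (h0 : 0 < ε) (h1 : ε ≤ 1) (A : Finset (Fin n)) :
    √(A.card : ℝ) ≤ 1 / √ε + 2 / √ε *
      Ex (wr ε) (fun r => √((A.filter (fun i => r i = true)).card : ℝ)) := by
  have hw := wr_pw h0.le h1
  have hse : 0 < √ε := Real.sqrt_pos.mpr h0
  set E := Ex (wr ε) (fun r => √((A.filter (fun i => r i = true)).card : ℝ)) with hE
  have hE0 : 0 ≤ E := Ex_nonneg hw fun _ => Real.sqrt_nonneg _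
  rcases lt_or_ge (ε * A.card) 1 with h | h
  · have h2 : √(A.card : ℝ) ≤ 1 / √ε := by
      rw [le_div_iff₀ hse, ← Real.sqrt_mul (by positivity), mul_comm]
      exact (Real.sqrt_le_sqrt h.le).trans (by simp)
    have : 0 ≤ 2 / √ε * E := by positivity
    linarith
  · set s : ℝ := (A.card : ℝ) with hs
    have hs0 : 0 ≤ s := Nat.cast_nonneg _
    set a := √(ε * s) with ha
    have ha2 : a ^ 2 = ε * s := Real.sq_sqrt (by positivity)
    have ha1 : 1 ≤ a := by rw [ha]; exact Real.one_le_sqrt.mpr h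
    have ha0 : 0 < a := by linarith
    have hm1 : Ex (wr ε) (fun r => ((A.filter (fun i => r i = true)).card : ℝ)) = ε * s := by
      simp only [card_sel]
      rw [Ex_sum, Finset.sum_congr rfl fun i _ => Ex_sel h0.le h1 i, Finset.sum_const,
        nsmul_eq_mul, mul_comm]
    have hm2 : Ex (wr ε) (fun r => ((A.filter (fun i => r i = true)).card : ℝ) ^ 2)
        ≤ (ε * s) ^ 2 + ε * s := by
      simp only [card_sel, sq (∑ i ∈ A, _), Finset.sum_mul_sum]
      rw [Ex_sum]
      have : ∀ i ∈ A, Ex (wr ε) (fun r : Fin n → Bool => ∑ j ∈ A, sel (r i) * sel (r j)) ≤ ε ^ 2 * s + ε := by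
        intro i hi
        rw [Ex_sum]
        refine (Finset.sum_le_sum fun j _ => Ex_sel2 h0.le h1 i j).trans ?_
        rw [Finset.sum_add_distrib, Finset.sum_const, nsmul_eq_mul, Finset.sum_ite_eq, if_pos hi]
        linarith
      refine (Finset.sum_le_sum this).trans ?_
      rw [Finset.sum_const, nsmul_eq_mul]
      nlinarith
    have hm3 : (3 / (2 * a)) * (ε * s) - 1 / (2 * a ^ 3) * ((ε * s) ^ 2 + ε * s) ≤ E := by
      have h5 := Ex_mono (n := n) hw (fun r => tangent ha0
        (Nat.cast_nonneg ((A.filter (fun i => r i = true)).card)))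
      rw [Ex_sub, Ex_const_mul, Ex_const_mul, hm1] at h5
      have : 1 / (2 * a ^ 3) * Ex (wr ε) (fun r => ((A.filter (fun i => r i = true)).card : ℝ) ^ 2)
        ≤ 1 / (2 * a ^ 3) * ((ε * s) ^ 2 + ε * s) := by gcongr
      linarith
    rw [← ha2] at hm3
    have e : (3 / (2 * a)) * a ^ 2 - 1 / (2 * a ^ 3) * ((a ^ 2) ^ 2 + a ^ 2)
        = a - 1 / (2 * a) := by field_simp; ring
    rw [e] at hm3
    have h6 : 1 / (2 * a) ≤ a / 2 := by
      rw [div_le_div_iff₀ (by positivity) (by norm_num)]; nlinarith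
    have h7 : a ≤ 2 * E := by linarith
    have h8 : √s = a / √ε := by
      rw [ha, Real.sqrt_mul h0.le]; field_simp
    rw [h8]
    have h9 : 0 ≤ 1 / √ε := by positivity
    have h10 : a / √ε ≤ 2 * E / √ε := by gcongr
    calc _ ≤ 2 * E / √ε := h10
      _ = 2 / √ε * E := by ring
      _ ≤ _ := by linarith

lemma tail_bound {ε : ℝ} (h0 : 0 ≤ ε) (h1 : ε ≤ 1) (J : Finset (Fin n)) (m' : ℕ) :
    Ex (wr ε) (fun r => if m' < (J.filter (fun i => r i = true)).card then (1 : ℝ) else 0)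
      ≤ (1 + ε) ^ J.card / 2 ^ m' := by
  have hw := wr_pw h0 h1
  have h2 : ∀ r : Fin n → Bool, (if m' < (J.filter (fun i => r i = true)).card then (1 : ℝ) else 0)
      ≤ (∏ i, if i ∈ J ∧ r i = true then (2 : ℝ) else 1) / 2 ^ m' := by
    intro r
    have e : (∏ i, if i ∈ J ∧ r i = true then (2 : ℝ) else 1)
        = 2 ^ (J.filter (fun i => r i = true)).card := by
      rw [← Finset.prod_filter, Finset.prod_const]
      congr 2; ext i; simp
    rw [e]
    split_ifs with h
    · rw [le_div_iff₀ (by positivity), one_mul]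
      exact pow_le_pow_right₀ (by norm_num) h.le
    · positivity
  refine (Ex_mono hw h2).trans ?_
  rw [Ex_div_const]
  refine div_le_div_of_nonneg_right ?_ (by positivity)
  have h3 := Ex_prod (n := n) (w := wr ε) (fun i b => if i ∈ J ∧ b = true then (2 : ℝ) else 1)
  rw [h3]
  have h4 : ∀ i : Fin n, (∑ u, wr ε u * if i ∈ J ∧ u = true then (2 : ℝ) else 1)
      = if i ∈ J then 1 + ε else 1 := by
    intro i
    by_cases hi : i ∈ J <;> simp [wr, hi]
    ring
  simp only [h4]
  rw [← Finset.prod_filter, Finset.prod_const]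
  simp

lemma Ex_swap {Ω Ω' : Type} [Fintype Ω] [Fintype Ω'] (w : Ω → ℝ) (w' : Ω' → ℝ)
    (F : (Fin n → Ω) → (Fin n → Ω') → ℝ) :
    Ex w (fun a => Ex w' (fun b => F a b)) = Ex w' (fun b => Ex w (fun a => F a b)) := by
  simp only [Ex, Finset.mul_sum]
  rw [Finset.sum_comm]
  refine Finset.sum_congr rfl fun _ _ => Finset.sum_congr rfl fun _ _ => by ring

/-- Mixing of two inputs. -/
def mix (r x y : Fin n → Bool) : Fin n → Bool := fun i => if r i then y i else x i

lemma Ex_mix (ε : ℝ) (F : (Fin n → Bool) → (Fin n → Bool) → ℝ) :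
    Ex (wr ε) (fun r => Ex wb (fun x => F r x))
      = Ex (wr ε) (fun r => Ex wb (fun x => Ex wb (fun y => F r (mix r x y)))) := by
  have h1 := Ex_prod_type (n := n) (w := wr ε) wb (fun ω => F (fun i => (ω i).1) (fun i => (ω i).2))
  have h2 := Ex_prod_type (n := n) (w := wr ε) w2 (fun ω => F (fun i => (ω i).1)
    (fun i => if (ω i).1 then (ω i).2.2 else (ω i).2.1))
  have h3 := Ex_map (n := n) (w := fun u : Bool × (Bool × Bool) => wr ε u.1 * w2 u.2)
    (w' := fun u : Bool × Bool => wr ε u.1 * wb u.2)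
    (fun u => (u.1, if u.1 then u.2.2 else u.2.1)) (by
      rintro ⟨a, b⟩
      cases a <;> cases b <;> simp [wr, w2, wb, Fintype.sum_prod_type] <;> ring)
    (fun ω => F (fun i => (ω i).1) (fun i => (ω i).2))
  rw [← h1, ← h3, h2]
  congr 1; ext r
  have h4 := Ex_prod_type (n := n) (w := wb) wb (fun ω' => F r
    (fun i => if r i then (ω' i).2 else (ω' i).1))
  exact h4

lemma Ex_w4 (ε : ℝ) (F : (Fin n → Bool) → (Fin n → Bool) → ℝ) :
    Ex (w4 ε) (fun ω => F (fun i => nu (ω i)) (fun i => nv (ω i)))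
      = Ex (wr ε) (fun r => Ex wb (fun x => Ex wb (fun y => Ex wb (fun y' =>
        F (mix r x y) (mix r x y'))))) := by
  have h1 := Ex_prod_type (n := n) (w := wr ε) (fun v : Bool × (Bool × Bool) => wb v.1 * w2 v.2)
    (fun ω => F (fun i => nu (ω i)) (fun i => nv (ω i)))
  refine h1.trans ?_
  congr 1; ext r
  refine (Ex_prod_type (n := n) (w := wb) w2 _).trans ?_
  congr 1; ext x
  exact Ex_prod_type (n := n) (w := wb) wb _

lemma block {ε : ℝ} (h0 : 0 < ε) (h1 : ε ≤ 1) {d : ℕ} {c : Finset (Fin n) → ℝ}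
    {J : Finset (Fin n)} (hd : DegLE d c) (hJ : SuppIn J c) {m' : ℕ} {M : ℝ} (hM0 : 0 ≤ M)
    (hM : ∀ (c' : Finset (Fin n) → ℝ) (J' : Finset (Fin n)), DegLE d c' → SuppIn J' c' →
      J'.card ≤ m' → BS c' ≤ M * wt c') :
    BS c ≤ 1 / √ε + 2 / √ε * (M * (2 * 9 ^ d *
      Ex (w4 ε) (fun ω => Ph (pc c fun i => nu (ω i)) (pc c fun i => nv (ω i))))
      + n * ((1 + ε) ^ J.card / 2 ^ m')) := by
  have hw := wr_pw h0.le h1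
  set snR : (Fin n → Bool) → (Fin n → Bool) → ℝ := fun r x =>
    √(((univ.filter (fun i => pc c x * pc c (flipAt x i) < 0)).filter
      (fun i => r i = true)).card : ℝ) with hsnR
  have hA : BS c ≤ 1 / √ε + 2 / √ε * Ex (wr ε) (fun r => Ex wb (fun x => snR r x)) := by
    rw [Ex_swap, ← Ex_const_mul]
    have e : Ex wb (fun _ : Fin n → Bool => 1 / √ε) = 1 / √ε := Ex_const wb_pw _
    rw [← e, ← Ex_add, BS]
    exact Ex_mono wb_pw fun x => sqrt_block h0 h1 _
  refine hA.trans (add_le_add_right (mul_le_mul_of_nonneg_left ?_ (by positivity)) _)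
  rw [Ex_mix]
  have htail := tail_bound h0.le h1 J m'
  rw [Ex_w4 ε (fun a b => Ph (pc c a) (pc c b)), ← Ex_const_mul, ← Ex_const_mul]
  have hB : ∀ r : Fin n → Bool, Ex wb (fun x => Ex wb (fun y => snR r (mix r x y)))
      ≤ M * (2 * 9 ^ d * Ex wb (fun x => Ex wb (fun y => Ex wb (fun y' =>
          Ph (pc c (mix r x y)) (pc c (mix r x y'))))))
        + n * (if m' < (J.filter (fun i => r i = true)).card then (1 : ℝ) else 0) := by
    intro r
    set I := (if m' < (J.filter (fun i => r i = true)).card then (1 : ℝ) else 0) with hI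
    rw [← Ex_const_mul, ← Ex_const_mul]
    have e : Ex wb (fun _ : Fin n → Bool => (n : ℝ) * I) = n * I := Ex_const wb_pw _
    rw [← e, ← Ex_add]
    refine Ex_mono wb_pw fun x => ?_
    obtain ⟨c', hd', hJ', hc'⟩ := exists_mres hd hJ (univ.filter fun i => r i = false)
      (fun i => chi (x i))
    have hpc : ∀ y, pc c' y = pc c (mix r x y) := by
      intro y
      unfold pc
      rw [hc']
      congr 1; ext i
      unfold mix
      cases hr : r i <;> simp [hr]
    have hset : J \ (univ.filter fun i => r i = false) = J.filter (fun i => r i = true) := by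
      ext i; simp
    rw [hset] at hJ'
    have hle : Ex wb (fun y => snR r (mix r x y)) ≤ BS c' := by
      refine Ex_mono wb_pw fun y => ?_
      apply Real.sqrt_le_sqrt
      have : (((univ.filter (fun i => pc c (mix r x y) * pc c (flipAt (mix r x y) i) < 0)).filter
        (fun i => r i = true)).card) ≤ sn c' y := by
        apply Finset.card_le_card
        intro i hi
        simp only [Finset.mem_filter, Finset.mem_univ, true_and] at hi ⊢
        obtain ⟨hi1, hi2⟩ := hi
        rw [hpc, hpc]
        have e2 : mix r x (flipAt y i) = flipAt (mix r x y) i := by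
          ext j
          unfold mix flipAt
          by_cases hj : j = i
          · subst hj; simp [hi2]
          · simp [Function.update_of_ne hj]
        rw [e2]; exact hi1
      exact_mod_cast this
    refine hle.trans ?_
    have hwt := wt_le_Ph hd'
    simp only [hpc] at hwt
    have hwt' := mul_le_mul_of_nonneg_left hwt hM0
    have hwn := mul_nonneg hM0 (wt_nonneg c')
    by_cases hm : m' < (J.filter (fun i => r i = true)).card
    · have hI1 : I = 1 := by rw [hI, if_pos hm]
      rw [hI1, mul_one]
      have h5 := BS_le_card hJ'
      have h6 : ((J.filter (fun i => r i = true)).card : ℝ) ≤ n := by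
        have := Finset.card_le_univ (J.filter (fun i => r i = true))
        rw [Fintype.card_fin] at this
        exact_mod_cast this
      linarith
    · have hI1 : I = 0 := by rw [hI, if_neg hm]
      rw [hI1, mul_zero, add_zero]
      exact (hM c' _ hd' hJ' (by omega)).trans hwt'
  refine (Ex_mono hw hB).trans ?_
  rw [Ex_add]
  refine add_le_add le_rfl ?_
  rw [Ex_const_mul]
  exact mul_le_mul_of_nonneg_left htail (Nat.cast_nonneg n)

end Block

/-! ### The regular case -/
section BlockFinal
variable {n : ℕ}

lemma tail_num {β k N m n : ℕ} (hβ : 3 ≤ β) (hN : N = 4 ^ β) (hk : 2 ≤ k) (hn : n ≤ N ^ β)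
    (hm : m ≤ N ^ (k + 1)) : (n : ℝ) * ((1 + eN N) ^ m / 2 ^ (N ^ k)) ≤ 1 := by
  have hN64 : 64 ≤ N := by
    rw [hN]; calc 64 = 4 ^ 3 := by norm_num
      _ ≤ 4 ^ β := Nat.pow_le_pow_right (by norm_num) hβ
  have he0 := eN_nonneg N
  have heu := eN_upper (N := N) (by omega)
  have h1 : (1 + eN N) ^ m ≤ 2 ^ (30 * N ^ (k - 1)) := by
    have a1 : (1 + eN N) ^ m ≤ Real.exp (eN N) ^ m :=
      pow_le_pow_left₀ (by linarith) (by linarith [Real.add_one_le_exp (eN N)]) m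
    have a2 : Real.exp (eN N) ^ m = Real.exp (m * eN N) := by rw [← Real.exp_nat_mul]
    have a3 : (m : ℝ) * eN N ≤ 20 * N ^ (k - 1) := by
      have : (m : ℝ) ≤ N ^ (k + 1) := by exact_mod_cast hm
      have e : (N : ℝ) ^ (k + 1) = N ^ (k - 1) * N ^ 2 := by
        rw [← pow_add]; congr 1; omega
      calc (m : ℝ) * eN N ≤ N ^ (k + 1) * eN N := by gcongr
        _ = N ^ (k - 1) * (N ^ 2 * eN N) := by rw [e]; ring
        _ ≤ N ^ (k - 1) * 20 := by gcongr
        _ = _ := by ring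
    have a4 : Real.exp 20 ≤ 2 ^ 30 := by
      have h2 : Real.exp 1 ≤ 2.7182818286 := Real.exp_one_lt_d9.le
      calc Real.exp 20 = Real.exp 1 ^ 20 := by rw [← Real.exp_nat_mul]; norm_num
        _ ≤ 2.7182818286 ^ 20 := by gcongr
        _ ≤ 2 ^ 30 := by norm_num
    calc (1 + eN N) ^ m ≤ Real.exp (m * eN N) := by rw [← a2]; exact a1
      _ ≤ Real.exp (20 * N ^ (k - 1)) := Real.exp_le_exp.mpr a3
      _ = Real.exp 20 ^ (N ^ (k - 1)) := by rw [← Real.exp_nat_mul]; push_cast; ring_nf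
      _ ≤ (2 ^ 30) ^ (N ^ (k - 1)) := by gcongr
      _ = _ := by rw [← pow_mul]
  have h2 : (n : ℝ) ≤ 2 ^ (2 * β ^ 2) := by
    have : (n : ℝ) ≤ (N : ℝ) ^ β := by exact_mod_cast hn
    refine this.trans (le_of_eq ?_)
    rw [hN]; push_cast
    rw [show (4 : ℝ) = 2 ^ 2 by norm_num, ← pow_mul, ← pow_mul]; congr 1; ring
  have h3 : 2 * β ^ 2 + 30 * N ^ (k - 1) ≤ N ^ k := by
    have b1 : β ^ 2 ≤ N := by
      rw [hN, show 4 = 2 ^ 2 by norm_num, ← pow_mul, mul_comm, pow_mul]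
      exact Nat.pow_le_pow_left (Nat.lt_two_pow_self).le 2
    have b2 : N ≤ N ^ (k - 1) := Nat.le_self_pow (by omega) N
    have b3 : N ^ k = N ^ (k - 1) * N := by rw [← pow_succ]; congr 1; omega
    rw [b3]; nlinarith
  rw [← mul_div_assoc, div_le_one (by positivity)]
  calc (n : ℝ) * (1 + eN N) ^ m ≤ 2 ^ (2 * β ^ 2) * 2 ^ (30 * N ^ (k - 1)) := by gcongr
    _ = 2 ^ (2 * β ^ 2 + 30 * N ^ (k - 1)) := by rw [pow_add]
    _ ≤ _ := pow_le_pow_right₀ (by norm_num) h3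

lemma block_final {β k N d : ℕ} (hβ : 3 ≤ β) (hN : N = 4 ^ β) (hk : 2 ≤ k) (hn : n ≤ N ^ β)
    {c : Finset (Fin n) → ℝ} {J : Finset (Fin n)} (hd : DegLE d c) (hJ : SuppIn J c)
    (hcard : J.card ≤ N ^ (k + 1))
    (hv : 0 < vr c) (hμ : c ∅ ^ 2 ≤ N ^ 2 * vr c)
    (hI : ∀ i, infl i c ≤ (1 / (N : ℝ) ^ (48 * d + 18)) ^ 2 * vr c)
    {M : ℝ} (hM0 : 0 ≤ M)
    (hM : ∀ (c' : Finset (Fin n) → ℝ) (J' : Finset (Fin n)), DegLE d c' → SuppIn J' c' →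
      J'.card ≤ N ^ k → BS c' ≤ M * wt c') :
    BS c ≤ 4 * 9 ^ d * cG d * M * wt c + 3 * N := by
  have hN4 : 4 ≤ N := by
    rw [hN]; calc 4 = 4 ^ 1 := by norm_num
      _ ≤ 4 ^ β := Nat.pow_le_pow_right (by norm_num) (by omega)
  have hNr : (0 : ℝ) < N := by exact_mod_cast (by omega : 0 < N)
  have hl := eN_lower hN4
  have he : 0 < eN N := by
    by_contra h
    push Not at h
    have : (N : ℝ) ^ 2 * eN N ≤ 0 := mul_nonpos_of_nonneg_of_nonpos (by positivity) h
    linarith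
  have hse : 0 < √(eN N) := Real.sqrt_pos.mpr he
  have hinv : 1 / √(eN N) ≤ N := by
    rw [div_le_iff₀ hse]
    have : √((N : ℝ) ^ 2 * eN N) = N * √(eN N) := by
      rw [Real.sqrt_mul (by positivity), Real.sqrt_sq hNr.le]
    rw [← this]
    exact Real.one_le_sqrt.mpr (by linarith)
  have hb := block he (eN_le_one hN4) hd hJ (m' := N ^ k) hM0 hM
  have hr := reg_final hN4 hd hv hμ hI
  have ht := tail_num hβ hN hk hn hcard
  refine hb.trans ?_
  have e2 : 2 / √(eN N) = 2 * (1 / √(eN N)) := by ring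
  rw [e2]
  set E := Ex (w4 (eN N)) (fun ω => Ph (pc c fun i => nu (ω i)) (pc c fun i => nv (ω i)))
  have hin : M * (2 * 9 ^ d * E) + n * ((1 + eN N) ^ J.card / 2 ^ N ^ k)
      ≤ M * (2 * 9 ^ d * (cG d / N * wt c)) + 1 := by
    refine add_le_add ?_ ht
    gcongr
  have hw := wt_nonneg c
  have hcG := cG_nonneg d
  have hpos : 0 ≤ M * (2 * 9 ^ d * (cG d / N * wt c)) + 1 := by positivity
  calc _ ≤ (N : ℝ) + 2 * N * (M * (2 * 9 ^ d * (cG d / N * wt c)) + 1) := by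
        refine add_le_add hinv ?_
        refine (mul_le_mul_of_nonneg_left hin (by positivity)).trans ?_
        exact mul_le_mul_of_nonneg_right (by linarith) hpos
    _ = _ := by field_simp; ring

end BlockFinal

/-! ### Decision trees -/
section Tree
variable {n : ℕ}

/-- Average of `G` over the leaves of the depth-`t` decision tree with query rule `pk`. -/
noncomputable def KK (pk : (Finset (Fin n) → ℝ) → Option (Fin n)) :
    ℕ → ((Finset (Fin n) → ℝ) → ℝ) → (Finset (Fin n) → ℝ) → ℝ
  | 0, G, q => G q
  | t + 1, G, q =>
    match pk q with
    | none => G q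
    | some i => (KK pk t G (res i true q) + KK pk t G (res i false q)) / 2

variable {pk : (Finset (Fin n) → ℝ) → Option (Fin n)}

lemma KK_none {q : Finset (Fin n) → ℝ} (h : pk q = none) (t : ℕ)
    (G : (Finset (Fin n) → ℝ) → ℝ) : KK pk t G q = G q := by
  cases t with
  | zero => rfl
  | succ t => simp only [KK, h]

lemma KK_some {q : Finset (Fin n) → ℝ} {i : Fin n} (h : pk q = some i) (t : ℕ)
    (G : (Finset (Fin n) → ℝ) → ℝ) :
    KK pk (t + 1) G q = (KK pk t G (res i true q) + KK pk t G (res i false q)) / 2 := by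
  simp only [KK, h]

lemma KK_mono {P : (Finset (Fin n) → ℝ) → Prop} (hP : ∀ q i b, P q → P (res i b q))
    {G H : (Finset (Fin n) → ℝ) → ℝ} (h : ∀ q, P q → G q ≤ H q) (t : ℕ) :
    ∀ q, P q → KK pk t G q ≤ KK pk t H q := by
  induction t with
  | zero => exact h
  | succ t ih =>
    intro q hq
    rcases hk : pk q with _ | i
    · rw [KK_none hk, KK_none hk]; exact h q hq
    · rw [KK_some hk, KK_some hk]
      have h1 := ih _ (hP q i true hq)
      have h2 := ih _ (hP q i false hq)
      linarith

lemma KK_comp (s t : ℕ) (G : (Finset (Fin n) → ℝ) → ℝ) (q : Finset (Fin n) → ℝ) :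
    KK pk (s + t) G q = KK pk s (KK pk t G) q := by
  induction s generalizing q with
  | zero => simp [KK]
  | succ s ih =>
    rcases hk : pk q with _ | i
    · rw [KK_none hk, KK_none hk, KK_none hk]
    · rw [show s + 1 + t = (s + t) + 1 by ring, KK_some hk, KK_some hk, ih, ih]

lemma KK_add (t : ℕ) (G H : (Finset (Fin n) → ℝ) → ℝ) (q : Finset (Fin n) → ℝ) :
    KK pk t (fun q => G q + H q) q = KK pk t G q + KK pk t H q := by
  induction t generalizing q with
  | zero => rfl
  | succ t ih =>
    rcases hk : pk q with _ | i
    · simp only [KK_none hk]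
    · simp only [KK_some hk, ih]; ring

lemma KK_smul (t : ℕ) (a : ℝ) (G : (Finset (Fin n) → ℝ) → ℝ) (q : Finset (Fin n) → ℝ) :
    KK pk t (fun q => a * G q) q = a * KK pk t G q := by
  induction t generalizing q with
  | zero => rfl
  | succ t ih =>
    rcases hk : pk q with _ | i
    · simp only [KK_none hk]
    · simp only [KK_some hk, ih]; ring

lemma KK_harm {H : (Finset (Fin n) → ℝ) → ℝ}
    (h : ∀ i q, (H (res i true q) + H (res i false q)) / 2 = H q) (t : ℕ)
    (q : Finset (Fin n) → ℝ) : KK pk t H q = H q := by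
  induction t generalizing q with
  | zero => rfl
  | succ t ih =>
    rcases hk : pk q with _ | i
    · rw [KK_none hk]
    · rw [KK_some hk, ih, ih, h]

lemma KK_const (t : ℕ) (a : ℝ) (q : Finset (Fin n) → ℝ) : KK pk t (fun _ => a) q = a :=
  KK_harm (H := fun _ => a) (fun _ _ => by ring) t q

lemma sn_res_update (i : Fin n) (u v : Bool) (q : Finset (Fin n) → ℝ) (x : Fin n → Bool) :
    sn (res i u q) (Function.update x i v) = sn (res i u q) x := by
  unfold sn
  congr 1
  apply Finset.filter_congr
  intro j _
  have h1 : pc (res i u q) (Function.update x i v) = pc (res i u q) x := by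
    simp only [pc_res, Function.update_idem]
  have h2 : pc (res i u q) (flipAt (Function.update x i v) j) = pc (res i u q) (flipAt x j) := by
    simp only [pc_res]
    congr 1
    unfold flipAt
    by_cases hj : j = i
    · subst hj; simp
    · rw [Function.update_of_ne hj, Function.update_comm hj, Function.update_idem,
        Function.update_comm hj]
  rw [h1, h2]

lemma sn_le_res (i : Fin n) (q : Finset (Fin n) → ℝ) (x : Fin n → Bool) :
    sn q x ≤ 1 + sn (res i (x i) q) x := by
  have : univ.filter (fun j => pc q x * pc q (flipAt x j) < 0) ⊆
      insert i (univ.filter (fun j => pc (res i (x i) q) x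
        * pc (res i (x i) q) (flipAt x j) < 0)) := by
    intro j hj
    simp only [Finset.mem_filter, Finset.mem_univ, true_and, Finset.mem_insert] at hj ⊢
    by_cases hji : j = i
    · exact Or.inl hji
    · right
      rw [pc_res, pc_res]
      have e1 : Function.update x i (x i) = x := Function.update_eq_self i x
      have e2 : Function.update (flipAt x j) i (x i) = flipAt x j := by
        have : x i = flipAt x j i := by
          unfold flipAt; rw [Function.update_of_ne (Ne.symm hji)]
        rw [this]; exact Function.update_eq_self i _
      rw [e1, e2]; exact hj
  refine (Finset.card_le_card this).trans ((Finset.card_insert_le _ _).trans ?_)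
  unfold sn; omega

lemma BS_step (i : Fin n) (q : Finset (Fin n) → ℝ) :
    BS q ≤ 1 + (BS (res i true q) + BS (res i false q)) / 2 := by
  have h1 : BS q ≤ Ex wb (fun x : Fin n → Bool => 1 + √(sn (res i (x i) q) x : ℝ)) := by
    refine Ex_mono wb_pw fun x => ?_
    have h2 : (sn q x : ℝ) ≤ 1 + sn (res i (x i) q) x := by exact_mod_cast sn_le_res i q x
    refine (Real.sqrt_le_sqrt h2).trans ?_
    rw [Real.sqrt_le_left (by positivity)]
    have h3 := Real.sq_sqrt (Nat.cast_nonneg (α := ℝ) (sn (res i (x i) q) x))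
    nlinarith [Real.sqrt_nonneg (sn (res i (x i) q) x : ℝ)]
  refine h1.trans (le_of_eq ?_)
  rw [Ex_add, Ex_const wb_pw, Ex_resample wb_pw i (fun x => √(sn (res i (x i) q) x : ℝ))]
  congr 1
  simp only [Function.update_self, sn_res_update, BS]
  rw [← Ex_add, ← Ex_div_const]
  congr 1; ext x
  simp only [wb, Fintype.sum_bool]; ring

lemma BS_tree (t : ℕ) (q : Finset (Fin n) → ℝ) : BS q ≤ t + KK pk t BS q := by
  induction t generalizing q with
  | zero => simp [KK]
  | succ t ih =>
    rcases hk : pk q with _ | i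
    · rw [KK_none hk]; have : (0 : ℝ) ≤ ((t + 1 : ℕ) : ℝ) := by positivity
      linarith
    · rw [KK_some hk]
      have h1 := ih (res i true q)
      have h2 := ih (res i false q)
      have h3 := BS_step i q
      push_cast; linarith

/-- Indicator of unfinished leaves. -/
noncomputable def bd (pk : (Finset (Fin n) → ℝ) → Option (Fin n)) (q : Finset (Fin n) → ℝ) : ℝ :=
  if pk q = none then 0 else 1

lemma bd_nonneg (q : Finset (Fin n) → ℝ) : 0 ≤ bd pk q := by unfold bd; split_ifs <;> norm_num
lemma bd_le_one (q : Finset (Fin n) → ℝ) : bd pk q ≤ 1 := by unfold bd; split_ifs <;> norm_num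

lemma sum_infl_nonneg (q : Finset (Fin n) → ℝ) : 0 ≤ ∑ j, infl j q :=
  Finset.sum_nonneg fun j _ => infl_nonneg j q

lemma KK_infl {d : ℕ} {θ : ℝ} (hθ1 : θ ≤ 1)
    (hp : ∀ q i, DegLE d q → pk q = some i → θ * ∑ j, infl j q ≤ infl i q) (t : ℕ) :
    ∀ q, DegLE d q → KK pk t (fun q => bd pk q * ∑ j, infl j q) q
      ≤ (1 - θ) ^ t * ∑ j, infl j q := by
  induction t with
  | zero =>
    intro q _
    simp only [KK, pow_zero]
    exact mul_le_mul_of_nonneg_right (bd_le_one q) (sum_infl_nonneg q)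
  | succ t ih =>
    intro q hq
    have hθ : 0 ≤ 1 - θ := by linarith
    rcases hk : pk q with _ | i
    · rw [KK_none hk]
      have : bd pk q = 0 := by simp [bd, hk]
      rw [this, zero_mul]
      have := sum_infl_nonneg q
      positivity
    · rw [KK_some hk]
      have h1 := ih _ (res_degLE hq i true)
      have h2 := ih _ (res_degLE hq i false)
      have h3 := sum_infl_res i q
      have h4 := hp q i hq hk
      have h5 : 0 ≤ (1 - θ) ^ t := by positivity
      have h6 := mul_le_mul_of_nonneg_left h4 h5
      have h7 : (1 - θ) ^ t * ((∑ j, infl j (res i true q) + ∑ j, infl j (res i false q)) / 2)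
          = (1 - θ) ^ t * (∑ j, infl j q - infl i q) := by rw [h3]
      rw [pow_succ]
      linarith

lemma sqn_sq_le (q : Finset (Fin n) → ℝ) : sqn q ^ 2 ≤ Ex wb (fun x => pc q x ^ 4) := by
  have h := Ex_CS (n := n) wb_pw (fun x => pc q x ^ 4) (fun _ => 1) (fun x => pc q x ^ 2)
    (fun x => by positivity) (fun _ => by norm_num) (fun x => le_of_eq (by ring))
  rw [Ex_const wb_pw, mul_one, Ex_pc_sq] at h
  exact h

lemma KK_bad {d L : ℕ} {θ R : ℝ} (hθ1 : θ ≤ 1) (hR : 0 ≤ R)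
    (hp : ∀ q i, DegLE d q → pk q = some i → θ * ∑ j, infl j q ≤ infl i q)
    (hpR : ∀ q i, pk q = some i → q ∅ ^ 2 < R * vr q)
    (hL : (1 + R) * d * (1 - θ) ^ L ≤ 1 / 2) (q : Finset (Fin n) → ℝ) (hq : DegLE d q) :
    KK pk L (bd pk) q ≤ (1 - 1 / (4 * 9 ^ d)) * bd pk q := by
  rcases hk : pk q with _ | i
  · rw [KK_none hk]
    have : bd pk q = 0 := by simp [bd, hk]
    rw [this]; simp
  have hb1 : bd pk q = 1 := by simp [bd, hk]
  rw [hb1, mul_one]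
  have hbR : ∀ q', bd pk q' * sqn q' ≤ bd pk q' * ((1 + R) * ∑ j, infl j q') := by
    intro q'
    rcases hk' : pk q' with _ | i'
    · have : bd pk q' = 0 := by simp [bd, hk']
      rw [this]; simp
    · refine mul_le_mul_of_nonneg_left ?_ (bd_nonneg _)
      have h1 := hpR q' i' hk'
      have h2 := vr_le_sum_infl q'
      have h3 := sqn_eq q'
      nlinarith
  set σ := sqn q with hσ
  have hvr : vr q ≤ σ := vr_le_sqn q
  have hσ0 : 0 < σ := by
    have h1 := hpR q i hk
    have h2 : 0 ≤ q ∅ ^ 2 := sq_nonneg _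
    have h3 : vr q ≠ 0 := by rintro h; rw [h] at h1; linarith
    have h4 := vr_nonneg q
    exact lt_of_lt_of_le (lt_of_le_of_ne h4 (Ne.symm h3)) hvr
  set lam := 9 ^ d * σ with hlam
  have hl0 : 0 < lam := by positivity
  have hpt : ∀ q', DegLE d q' → sqn q' ≤ (lam + (-lam) * bd pk q')
      + ((1 / (4 * lam)) * Ex wb (fun x => pc q' x ^ 4)
        + (1 + R) * (bd pk q' * ∑ j, infl j q')) := by
    intro q' _
    have h1 := hbR q'
    have h2 := sqn_sq_le q'
    have h3 : (1 / (4 * lam)) * sqn q' ^ 2 ≤ (1 / (4 * lam)) * Ex wb (fun x => pc q' x ^ 4) := by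
      gcongr
    have h5 : sqn q' ≤ lam + (1 / (4 * lam)) * sqn q' ^ 2 := by
      have e : lam + (1 / (4 * lam)) * sqn q' ^ 2 - sqn q'
          = (2 * lam - sqn q') ^ 2 / (4 * lam) := by field_simp; ring
      have : 0 ≤ (2 * lam - sqn q') ^ 2 / (4 * lam) := by positivity
      linarith
    have h6 : 0 ≤ (1 / (4 * lam)) * sqn q' ^ 2 := by positivity
    unfold bd at h1 ⊢
    split_ifs at h1 ⊢ with hh
    · linarith
    · linarith
  have hm := KK_mono (pk := pk) (P := DegLE d) (fun q i b h => res_degLE h i b) hpt L q hq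
  rw [KK_harm (fun i q => sqn_res i q), KK_add, KK_add, KK_add, KK_const, KK_smul, KK_smul,
    KK_smul, KK_harm (H := fun q => Ex wb (fun x => pc q x ^ 4)) (fun i q => Ex_res4 i q 4)] at hm
  have h1 := KK_infl hθ1 hp L q hq
  have h2 := hyper_pc hq
  have h3 := sum_infl_le hq
  have h4 : (1 / (4 * lam)) * Ex wb (fun x => pc q x ^ 4) ≤ σ / 4 := by
    calc _ ≤ (1 / (4 * lam)) * (9 ^ d * sqn q ^ 2) := by gcongr
      _ = σ / 4 := by rw [hlam, ← hσ]; field_simp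
  have h5 : (1 + R) * KK pk L (fun q => bd pk q * ∑ j, infl j q) q ≤ σ / 2 := by
    have hθ : 0 ≤ (1 - θ) ^ L := pow_nonneg (by linarith) L
    calc _ ≤ (1 + R) * ((1 - θ) ^ L * ∑ j, infl j q) := by gcongr
      _ ≤ (1 + R) * ((1 - θ) ^ L * (d * σ)) := by
          gcongr
          exact h3.trans (by gcongr)
      _ = ((1 + R) * d * (1 - θ) ^ L) * σ := by ring
      _ ≤ 1 / 2 * σ := by gcongr
      _ = _ := by ring
  have h6 : σ / 4 ≤ lam * (1 - KK pk L (bd pk) q) := by linarith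
  rw [hlam] at h6
  have h7 : 1 / 4 ≤ 9 ^ d * (1 - KK pk L (bd pk) q) := by
    have : σ * (1 / 4) ≤ σ * (9 ^ d * (1 - KK pk L (bd pk) q)) := by linarith
    exact le_of_mul_le_mul_left this hσ0
  have h8 : (1 : ℝ) / (4 * 9 ^ d) ≤ 1 - KK pk L (bd pk) q := by
    rw [div_le_iff₀ (by positivity)]; linarith
  linarith

lemma KK_bad_iter {d L : ℕ} {ρ : ℝ} (hρ : 0 ≤ ρ)
    (h : ∀ q, DegLE d q → KK pk L (bd pk) q ≤ ρ * bd pk q) (k : ℕ) :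
    ∀ q, DegLE d q → KK pk (k * L) (bd pk) q ≤ ρ ^ k * bd pk q := by
  induction k with
  | zero => intro q _; simp [KK]
  | succ k ih =>
    intro q hq
    rw [show (k + 1) * L = L + k * L by ring, KK_comp]
    refine (KK_mono (P := DegLE d) (fun q i b h => res_degLE h i b) ih L q hq).trans ?_
    rw [KK_smul, pow_succ, mul_assoc]
    exact mul_le_mul_of_nonneg_left (h q hq) (by positivity)

lemma KK_wt (t : ℕ) (q : Finset (Fin n) → ℝ) (h0 : 0 < sqn q) : KK pk t wt q ≤ 5 * wt q := by
  apply min_le_wt q h0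
  · have := KK_mono (pk := pk) (P := fun _ => True) (fun _ _ _ _ => trivial)
      (fun q _ => wt_le_one q) t q trivial
    rwa [KK_const] at this
  · intro hμ
    have := KK_mono (pk := pk) (P := fun _ => True) (fun _ _ _ _ => trivial)
      (fun p _ => wt_le_harm p hμ) t q trivial
    refine this.trans (le_of_eq ?_)
    rw [KK_harm]
    · rw [sqn_eq]; ring
    · intro i p
      have h1 := sqn_res i p
      have h2 := mean_res i p
      rw [← h1, ← h2]; ring

lemma tree_bound {d L k : ℕ} {ρ A B W : ℝ} (hρ : 0 ≤ ρ) (hA : 0 ≤ A) (hW : 0 ≤ W)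
    (h : ∀ q, DegLE d q → KK pk L (bd pk) q ≤ ρ * bd pk q)
    {J : Finset (Fin n)}
    (hB : ∀ q, DegLE d q → SuppIn J q → BS q ≤ A * wt q + (B + W * bd pk q))
    (q : Finset (Fin n) → ℝ) (hq : DegLE d q) (hJ : SuppIn J q) (h0 : 0 < sqn q) :
    BS q ≤ (k * L : ℕ) + (5 * A * wt q + B + W * ρ ^ k) := by
  refine (BS_tree (pk := pk) (k * L) q).trans (add_le_add le_rfl ?_)
  have hm := KK_mono (pk := pk) (P := fun q => DegLE d q ∧ SuppIn J q)
    (fun q i b h => ⟨res_degLE h.1 i b, (res_suppIn h.2 i b).mono (Finset.erase_subset _ _)⟩)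
    (fun q h => hB q h.1 h.2) (k * L) q ⟨hq, hJ⟩
  refine hm.trans ?_
  rw [KK_add, KK_add, KK_smul, KK_smul, KK_const]
  have h1 := mul_le_mul_of_nonneg_left (KK_wt (pk := pk) (k * L) q h0) hA
  have h2 := KK_bad_iter hρ h k q hq
  have h3 : ρ ^ k * bd pk q ≤ ρ ^ k := mul_le_of_le_one_right (by positivity) (bd_le_one q)
  have h4 := mul_le_mul_of_nonneg_left (h2.trans h3) hW
  linarith

end Tree

/-! ### The recursion step -/
section Step
variable {n : ℕ}

/-- The query rule. -/
noncomputable def pick (τ R : ℝ) (q : Finset (Fin n) → ℝ) : Option (Fin n) :=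
  if h : q ∅ ^ 2 < R * vr q ∧ ∃ i, τ * vr q < infl i q then some h.2.choose else none

lemma pick_some {τ R : ℝ} {q : Finset (Fin n) → ℝ} {i : Fin n} (h : pick τ R q = some i) :
    q ∅ ^ 2 < R * vr q ∧ τ * vr q < infl i q := by
  unfold pick at h
  split_ifs at h with hh
  have := hh.2.choose_spec
  simp only [Option.some.injEq] at h
  rw [h] at this
  exact ⟨hh.1, this⟩

lemma pick_none {τ R : ℝ} {q : Finset (Fin n) → ℝ} (h : pick τ R q = none) :
    R * vr q ≤ q ∅ ^ 2 ∨ ∀ i, infl i q ≤ τ * vr q := by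
  unfold pick at h
  split_ifs at h with hh
  by_contra h2
  push Not at h2
  exact hh h2

/-- The inductive statement. -/
def QQ (n N d k : ℕ) (M : ℝ) : Prop :=
  ∀ (c : Finset (Fin n) → ℝ) (J : Finset (Fin n)), DegLE d c → SuppIn J c →
    J.card ≤ N ^ k → BS c ≤ M * wt c

/-- Multiplicative loss. -/
noncomputable def cA (d : ℕ) : ℝ := 5 * (4 * 9 ^ d * cG d + 4)
/-- Additive loss. -/
noncomputable def cB (d : ℕ) : ℝ := 2 * (32 * 9 ^ d * d ^ 2 + 4)

lemma one_le_cA (d : ℕ) : 1 ≤ cA d := by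
  have := cG_nonneg d
  have : 0 ≤ 4 * 9 ^ d * cG d := by positivity
  unfold cA; linarith

lemma one_le_cB (d : ℕ) : 1 ≤ cB d := by
  have : 0 ≤ (32 : ℝ) * 9 ^ d * d ^ 2 := by positivity
  unfold cB; linarith

set_option maxHeartbeats 1000000 in
lemma step {β k N d j : ℕ} (hd1 : 1 ≤ d) (hβ : 3 ≤ β) (hN : N = 4 ^ β) (hk : 2 ≤ k)
    (hn : n ≤ N ^ β) (h9 : (9 : ℝ) ^ (d * j) ≤ 2 ^ β) (hj : β + 2 ≤ 2 ^ j)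
    {M : ℝ} (hM1 : 1 ≤ M) (hQ : QQ n N d k M) :
    QQ n N d (k + 1) (cA d * M + cB d * N ^ (96 * d + 41)) := by
  intro p J hp hJ hcard
  have hN1 : (1 : ℝ) ≤ N := by rw [hN]; push_cast; exact one_le_pow₀ (by norm_num)
  have hN0 : (0 : ℝ) < N := by linarith
  have hβN : (β : ℝ) ^ 2 ≤ N := by
    have : β ^ 2 ≤ N := by
      rw [hN, show 4 = 2 ^ 2 by norm_num, ← pow_mul, mul_comm, pow_mul]
      exact Nat.pow_le_pow_left (Nat.lt_two_pow_self).le 2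
    exact_mod_cast this
  have hdr : (1 : ℝ) ≤ d := by exact_mod_cast hd1
  have hcG := cG_nonneg d
  set C : ℝ := 4 * 9 ^ d * cG d + 4 with hC
  have hC4 : 4 ≤ C := by
    have : 0 ≤ 4 * 9 ^ d * cG d := by positivity
    linarith
  have hCM : 4 ≤ C * M := by nlinarith
  have hJn : ∀ J' : Finset (Fin n), J'.card ≤ n := fun J' => by
    simpa using Finset.card_le_univ J'
  have hlarge : ∀ q : Finset (Fin n) → ℝ, DegLE d q → 0 < sqn q → (N : ℝ) ^ 2 * vr q ≤ q ∅ ^ 2 →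
      BS q ≤ 4 * wt q := by
    intro q hq h0 hl
    refine BS_large_mean (J := univ) hq (fun S hS => absurd (Finset.subset_univ S) hS) h0 ?_ h9 hj ?_
    · rw [hN] at hl; push_cast at hl; linarith
    · have : (univ : Finset (Fin n)).card ≤ N ^ β := (hJn _).trans hn
      rw [hN] at this
      exact_mod_cast this
  rcases (sqn_nonneg p).eq_or_lt with h0 | h0
  · rw [BS_zero h0.symm]
    have := wt_nonneg p
    have := one_le_cA d
    have := one_le_cB d
    positivity
  have hw := wt_nonneg p
  have hA1 := one_le_cA d
  have hB1 := one_le_cB d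
  have hcA : cA d = 5 * C := rfl
  rcases le_or_gt ((N : ℝ) ^ 2 * vr p) (p ∅ ^ 2) with hl | hl
  · refine (hlarge p hp h0 hl).trans (mul_le_mul_of_nonneg_right ?_ hw)
    have : 0 ≤ cB d * (N : ℝ) ^ (96 * d + 41) := by positivity
    rw [hcA]; linarith
  -- main case
  set T : ℕ := N ^ (96 * d + 36) with hT
  have hT1 : (1 : ℝ) ≤ T := by rw [hT]; push_cast; exact one_le_pow₀ hN1
  set τ : ℝ := (1 / (N : ℝ) ^ (48 * d + 18)) ^ 2 with hτ
  have hτT : τ = 1 / T := by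
    rw [hτ, hT, div_pow, one_pow, ← pow_mul]; push_cast; congr 2; ring
  set θ : ℝ := 1 / (d * T) with hθ
  have hdT : (1 : ℝ) ≤ d * T := by nlinarith
  have hθ1 : θ ≤ 1 := by rw [hθ, div_le_one (by linarith)]; exact hdT
  have hpk : ∀ (q : Finset (Fin n) → ℝ) i, DegLE d q → pick τ ((N : ℝ) ^ 2) q = some i →
      θ * ∑ j, infl j q ≤ infl i q := by
    intro q i hq h
    have h1 := (pick_some h).2
    have h2 := sum_infl_le hq
    calc θ * ∑ j, infl j q ≤ θ * (d * vr q) := by gcongr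
      _ = τ * vr q := by rw [hθ, hτT]; field_simp
      _ ≤ _ := h1.le
  set L : ℕ := (2 * d * (1 + N ^ 2)) * (d * T) with hL
  have hLb : (1 + (N : ℝ) ^ 2) * d * (1 - θ) ^ L ≤ 1 / 2 := by
    have h1 : (1 - θ) ^ L ≤ Real.exp (-θ) ^ L :=
      pow_le_pow_left₀ (by linarith) (by linarith [Real.add_one_le_exp (-θ)]) L
    have h2 : Real.exp (-θ) ^ L = Real.exp (-(2 * d * (1 + (N : ℝ) ^ 2))) := by
      rw [← Real.exp_nat_mul]; congr 1
      rw [hL, hθ]; push_cast; field_simp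
    set y := 2 * d * (1 + (N : ℝ) ^ 2) with hy
    have hy0 : 0 < y := by positivity
    have h3 : Real.exp (-y) ≤ 1 / y := by
      rw [Real.exp_neg, ← one_div]
      exact one_div_le_one_div_of_le hy0 (by linarith [Real.add_one_le_exp y])
    calc (1 + (N : ℝ) ^ 2) * d * (1 - θ) ^ L ≤ (1 + (N : ℝ) ^ 2) * d * (1 / y) := by
          gcongr; exact h1.trans (h2.le.trans h3)
      _ = 1 / 2 := by rw [hy]; field_simp
  have hbad := KK_bad (n := n) (pk := pick τ ((N : ℝ) ^ 2)) (d := d) (L := L) hθ1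
    (by positivity : (0 : ℝ) ≤ (N : ℝ) ^ 2) hpk (fun q i h => (pick_some h).1) hLb
  set ρ : ℝ := 1 - 1 / (4 * 9 ^ d) with hρ
  have h9d : (1 : ℝ) ≤ 9 ^ d := one_le_pow₀ (by norm_num)
  have hρ0 : 0 ≤ ρ := by
    have : (1 : ℝ) / (4 * 9 ^ d) ≤ 1 := by rw [div_le_one (by positivity)]; linarith
    linarith
  set K : ℕ := 4 * 9 ^ d * (2 * β ^ 2) with hK
  have hρK : (n : ℝ) * ρ ^ K ≤ 1 := by
    have h1 : ρ ^ K ≤ Real.exp (-(1 / (4 * 9 ^ d))) ^ K :=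
      pow_le_pow_left₀ hρ0 (by linarith [Real.add_one_le_exp (-(1 / (4 * 9 ^ d)) : ℝ)]) K
    have h2 : Real.exp (-(1 / (4 * 9 ^ d))) ^ K = Real.exp (-(2 * β ^ 2)) := by
      rw [← Real.exp_nat_mul]; congr 1
      rw [hK]; push_cast; field_simp
    have h3 : (n : ℝ) ≤ Real.exp (2 * β ^ 2) := by
      have a1 : (n : ℝ) ≤ (N : ℝ) ^ β := by exact_mod_cast hn
      have a2 : (N : ℝ) ^ β = 2 ^ (2 * β ^ 2) := by
        rw [hN]; push_cast
        rw [show (4 : ℝ) = 2 ^ 2 by norm_num, ← pow_mul, ← pow_mul]; congr 1; ring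
      have a3 : (2 : ℝ) ≤ Real.exp 1 := by linarith [Real.add_one_le_exp (1 : ℝ)]
      calc (n : ℝ) ≤ 2 ^ (2 * β ^ 2) := a1.trans a2.le
        _ ≤ Real.exp 1 ^ (2 * β ^ 2) := by gcongr
        _ = _ := by rw [← Real.exp_nat_mul]; push_cast; ring_nf
    calc (n : ℝ) * ρ ^ K ≤ Real.exp (2 * β ^ 2) * Real.exp (-(2 * β ^ 2)) := by
          gcongr; exact h1.trans h2.le
      _ = 1 := by rw [← Real.exp_add]; simp
  have hB : ∀ q, DegLE d q → SuppIn J q → BS q ≤ (C * M) * wt q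
      + (3 * N + n * bd (pick τ ((N : ℝ) ^ 2)) q) := by
    intro q hq hJq
    have hwq := wt_nonneg q
    rcases hpq : pick τ ((N : ℝ) ^ 2) q with _ | i
    · have hb : bd (pick τ ((N : ℝ) ^ 2)) q = 0 := by simp [bd, hpq]
      rw [hb, mul_zero, add_zero]
      rcases (sqn_nonneg q).eq_or_lt with hq0 | hq0
      · rw [BS_zero hq0.symm]; positivity
      rcases le_or_gt ((N : ℝ) ^ 2 * vr q) (q ∅ ^ 2) with hlq | hlq
      · have := hlarge q hq hq0 hlq
        have : 4 * wt q ≤ C * M * wt q := mul_le_mul_of_nonneg_right hCM hwq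
        linarith
      · have hI := (pick_none hpq).resolve_left (not_le.mpr hlq)
        have hv : 0 < vr q := by
          by_contra hneg
          have h1 : vr q = 0 := le_antisymm (not_lt.mp hneg) (vr_nonneg q)
          rw [h1] at hlq
          nlinarith [sq_nonneg (q ∅)]
        have h1 := block_final hβ hN hk hn hq hJq hcard hv hlq.le hI (by linarith) hQ
        refine h1.trans (add_le_add (mul_le_mul_of_nonneg_right ?_ hwq) le_rfl)
        refine mul_le_mul_of_nonneg_right ?_ (by linarith)
        linarith
    · have hb : bd (pick τ ((N : ℝ) ^ 2)) q = 1 := by simp [bd, hpq]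
      rw [hb, mul_one]
      have h1 := BS_le_card hJq
      have h2 : (J.card : ℝ) ≤ n := by exact_mod_cast hJn J
      have h3 : 0 ≤ C * M * wt q := by positivity
      linarith
  have hmain := tree_bound (k := K) hρ0 (by linarith : 0 ≤ C * M) (Nat.cast_nonneg n) hbad hB p hp hJ h0
  set X : ℝ := (N : ℝ) ^ (96 * d + 39) with hX
  have hNX : (N : ℝ) ≤ X := by
    rw [hX]; exact le_self_pow₀ hN1 (by omega)
  have hX1 : 1 ≤ X := hN1.trans hNX
  have ht : ((K * L : ℕ) : ℝ) ≤ 32 * 9 ^ d * d ^ 2 * X := by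
    have e1 : ((K * L : ℕ) : ℝ) = 16 * 9 ^ d * d ^ 2 * (β ^ 2 * (1 + (N : ℝ) ^ 2) * (N : ℝ) ^ (96 * d + 36)) := by
      rw [hK, hL, hT]; push_cast; ring
    have e2 : (β : ℝ) ^ 2 * (1 + (N : ℝ) ^ 2) * (N : ℝ) ^ (96 * d + 36) ≤ 2 * X := by
      calc (β : ℝ) ^ 2 * (1 + (N : ℝ) ^ 2) * (N : ℝ) ^ (96 * d + 36)
          ≤ N * (2 * (N : ℝ) ^ 2) * (N : ℝ) ^ (96 * d + 36) := by
            gcongr; nlinarith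
        _ = 2 * X := by rw [hX, show 96 * d + 39 = (96 * d + 36) + 3 by ring, pow_add _ _ 3]; ring
    rw [e1]
    calc _ ≤ 16 * 9 ^ d * (d : ℝ) ^ 2 * (2 * X) := by gcongr
      _ = _ := by ring
  have hwt : 1 ≤ 2 * (N : ℝ) ^ 2 * wt p := by
    have h1 := sqn_eq p
    unfold wt
    rw [mul_div_assoc', one_le_div h0]
    have : vr p ≤ (N : ℝ) ^ 2 * vr p := le_mul_of_one_le_left (vr_nonneg p) (one_le_pow₀ hN1)
    linarith
  have hS : 0 ≤ (32 * 9 ^ d * d ^ 2 + 4) * X := by positivity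
  have hfin : (32 * 9 ^ d * d ^ 2 + 4) * X ≤ cB d * (N : ℝ) ^ (96 * d + 41) * wt p := by
    calc _ ≤ (32 * 9 ^ d * d ^ 2 + 4) * X * (2 * (N : ℝ) ^ 2 * wt p) := le_mul_of_one_le_right hS hwt
      _ = _ := by
        rw [hX, cB, show 96 * d + 41 = (96 * d + 39) + 2 by ring, pow_add _ _ 2]; ring
  rw [hcA, add_mul]
  have e : 5 * (C * M) * wt p = 5 * C * M * wt p := by ring
  rw [e] at hmain
  linarith

end Step

/-! ### Conclusion -/
section Final
variable {n : ℕ}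

lemma QQ_iter {β N d j : ℕ} (hd1 : 1 ≤ d) (hβ : 3 ≤ β) (hN : N = 4 ^ β)
    (hn : n ≤ N ^ β) (h9 : (9 : ℝ) ^ (d * j) ≤ 2 ^ β) (hj : β + 2 ≤ 2 ^ j) (i : ℕ) :
    QQ n N d (2 + i) ((cA d + cB d) ^ i * (4 * N ^ (96 * d + 41))) := by
  have hN1 : (1 : ℝ) ≤ N := by rw [hN]; push_cast; exact one_le_pow₀ (by norm_num)
  have hA1 := one_le_cA d
  have hB1 := one_le_cB d
  induction i with
  | zero =>
    intro c J hc hJ hcard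
    refine (BS_apriori hJ).trans (mul_le_mul_of_nonneg_right ?_ (wt_nonneg c))
    rw [pow_zero, one_mul]
    have h1 : (J.card : ℝ) ≤ (N : ℝ) ^ 2 := by exact_mod_cast hcard
    have h2 : (N : ℝ) ^ 2 ≤ (N : ℝ) ^ (96 * d + 41) := pow_le_pow_right₀ hN1 (by omega)
    linarith
  | succ i ih =>
    have hX : (1 : ℝ) ≤ (N : ℝ) ^ (96 * d + 41) := one_le_pow₀ hN1
    have ha : (1 : ℝ) ≤ (cA d + cB d) ^ i := one_le_pow₀ (by linarith)
    set X := (N : ℝ) ^ (96 * d + 41)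
    set a := (cA d + cB d) ^ i with ha'
    have hM : X ≤ a * (4 * X) := by nlinarith
    have hs := step hd1 hβ hN (by omega : 2 ≤ 2 + i) hn h9 hj (hX.trans hM) ih
    intro c J hc hJ hcard
    refine (hs c J hc hJ hcard).trans (mul_le_mul_of_nonneg_right ?_ (wt_nonneg c))
    have h1 : cB d * X ≤ cB d * (a * (4 * X)) := by gcongr
    have h2 : (cA d + cB d) ^ (i + 1) = a * (cA d + cB d) := by rw [pow_succ]
    rw [h2]
    calc _ ≤ cA d * (a * (4 * X)) + cB d * (a * (4 * X)) := add_le_add le_rfl h1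
      _ = _ := by ring

/-- The exponent constant. -/
noncomputable def cD (d : ℕ) : ℝ := Real.log (cA d + cB d) + (96 * d + 42) * Real.log 4

lemma BS_exp {β d j : ℕ} (hd1 : 1 ≤ d) (hβ : 3 ≤ β)
    (hn : n ≤ (4 ^ β) ^ β) (h9 : (9 : ℝ) ^ (d * j) ≤ 2 ^ β) (hj : β + 2 ≤ 2 ^ j)
    {c : Finset (Fin n) → ℝ} (hc : DegLE d c) : BS c ≤ Real.exp (cD d * β) := by
  have hA1 := one_le_cA d
  have hB1 := one_le_cB d
  have h := QQ_iter hd1 hβ rfl hn h9 hj β c univ hc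
    (fun S hS => absurd (Finset.subset_univ S) hS) (by
      have : (univ : Finset (Fin n)).card = n := by simp
      rw [this]
      exact hn.trans (Nat.pow_le_pow_right (by positivity) (by omega)))
  have h2 : BS c ≤ (cA d + cB d) ^ β * (4 * ((4 ^ β : ℕ) : ℝ) ^ (96 * d + 41)) :=
    h.trans (mul_le_of_le_one_right (by positivity) (wt_le_one c))
  refine h2.trans ?_
  have e1 : (cA d + cB d) ^ β = Real.exp (β * Real.log (cA d + cB d)) := by
    rw [Real.exp_nat_mul, Real.exp_log (by linarith)]
  have e2 : (4 * ((4 ^ β : ℕ) : ℝ) ^ (96 * d + 41)) ≤ 4 ^ (β * (96 * d + 42)) := by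
    push_cast
    rw [← pow_mul, ← pow_succ']
    apply pow_le_pow_right₀ (by norm_num)
    have : β * (96 * d + 42) = β * (96 * d + 41) + β := by ring
    omega
  have e3 : (4 : ℝ) ^ (β * (96 * d + 42)) = Real.exp (((β * (96 * d + 42) : ℕ) : ℝ) * Real.log 4) := by
    rw [Real.exp_nat_mul, Real.exp_log (by norm_num)]
  calc _ ≤ Real.exp (β * Real.log (cA d + cB d))
        * Real.exp (((β * (96 * d + 42) : ℕ) : ℝ) * Real.log 4) := by
        rw [e1, ← e3]; gcongr
    _ = _ := by rw [← Real.exp_add]; congr 1; unfold cD; push_cast; ring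

lemma cD_pos (d : ℕ) : 0 < cD d := by
  have hA1 := one_le_cA d
  have hB1 := one_le_cB d
  have h1 : 0 ≤ Real.log (cA d + cB d) := Real.log_nonneg (by linarith)
  have h2 : 0 < Real.log 4 := Real.log_pos (by norm_num)
  unfold cD; positivity

lemma BS_final {d : ℕ} (hd1 : 1 ≤ d) (hn2 : 2 ≤ n) {c : Finset (Fin n) → ℝ} (hc : DegLE d c) :
    BS c ≤ Real.exp (cD d * (8 * d * (3 + 16 * d)) * √(Real.log n)) := by
  set s := √(Real.log n) with hs
  have hnr : (2 : ℝ) ≤ n := by exact_mod_cast hn2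
  have hlog : Real.log 2 ≤ Real.log n := Real.log_le_log (by norm_num) hnr
  have hl2 := Real.log_two_gt_d9
  have hs1 : 1 ≤ 2 * s := by
    have : (1 / 2 : ℝ) ≤ s := by
      rw [hs]; apply Real.le_sqrt_of_sq_le; norm_num at hl2 ⊢; linarith
    linarith
  set u : ℕ := ⌈s⌉₊ + 8 * d with hu
  have hsu : s ≤ u := by
    rw [hu]; push_cast
    have := Nat.le_ceil s
    have : (0 : ℝ) ≤ 8 * d := by positivity
    linarith
  have hus : (u : ℝ) ≤ s + 1 + 8 * d := by
    rw [hu]; push_cast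
    have := Nat.ceil_lt_add_one (Real.sqrt_nonneg (Real.log n))
    linarith
  set β : ℕ := 8 * d * u with hβ
  have hu8 : 8 * d ≤ u := by omega
  have hβu : u ≤ β := by rw [hβ]; nlinarith
  have hn : n ≤ (4 ^ β) ^ β := by
    have h1 : (n : ℝ) ≤ ((4 ^ β) ^ β : ℕ) := by
      push_cast
      have hsq : s ^ 2 = Real.log n := Real.sq_sqrt (by linarith)
      have hsβ : s ≤ β := hsu.trans (by exact_mod_cast hβu)
      have h4 : Real.exp 1 ≤ 4 := by linarith [Real.exp_one_lt_d9]
      calc (n : ℝ) = Real.exp (Real.log n) := (Real.exp_log (by linarith)).symm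
        _ ≤ Real.exp (((β * β : ℕ) : ℝ) * 1) := by
            apply Real.exp_le_exp.mpr
            rw [← hsq]; push_cast
            nlinarith [Real.sqrt_nonneg (Real.log n)]
        _ = Real.exp 1 ^ (β * β) := by rw [Real.exp_nat_mul]
        _ ≤ 4 ^ (β * β) := by gcongr
        _ = _ := by rw [pow_mul]
    exact_mod_cast h1
  have h9 : (9 : ℝ) ^ (d * (2 * u)) ≤ 2 ^ β := by
    calc (9 : ℝ) ^ (d * (2 * u)) ≤ 16 ^ (d * (2 * u)) := by gcongr; norm_num
      _ = 2 ^ β := by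
        rw [show (16 : ℝ) = 2 ^ 4 by norm_num, ← pow_mul, hβ]; congr 1; ring
  have hj : β + 2 ≤ 2 ^ (2 * u) := by
    have h1 : u + 1 ≤ 2 ^ u := Nat.lt_two_pow_self
    have h2 : (2 : ℕ) ^ (2 * u) = 2 ^ u * 2 ^ u := by rw [← pow_add]; congr 1; ring
    rw [h2]
    have h3 : (u + 1) * (u + 1) ≤ 2 ^ u * 2 ^ u := Nat.mul_le_mul h1 h1
    have h4 : β ≤ u * u := by rw [hβ]; exact Nat.mul_le_mul_right u hu8
    nlinarith
  refine (BS_exp hd1 (by omega) hn h9 hj hc).trans (Real.exp_le_exp.mpr ?_)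
  rw [mul_assoc]
  refine mul_le_mul_of_nonneg_left ?_ (cD_pos d).le
  rw [hβ]; push_cast
  have h5 : (u : ℝ) ≤ (3 + 16 * d) * s := by
    have : (0 : ℝ) ≤ d := by positivity
    nlinarith
  calc (8 : ℝ) * d * u ≤ 8 * d * ((3 + 16 * d) * s) := by gcongr
    _ = _ := by ring

/-- Exponent of a square-free monomial. -/
noncomputable def ind (S : Finset (Fin n)) : Fin n →₀ ℕ :=
  Finsupp.equivFunOnFinite.symm (fun i => if i ∈ S then 1 else 0)

lemma ind_apply (S : Finset (Fin n)) (i : Fin n) : ind S i = if i ∈ S then 1 else 0 := rfl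

lemma ind_support (S : Finset (Fin n)) : (ind S).support = S := by
  ext i; simp [ind_apply]

lemma ind_of_multilinear {m : Fin n →₀ ℕ} (h : ∀ i, m i ≤ 1) : ind m.support = m := by
  ext i
  rw [ind_apply]
  have := h i
  by_cases h0 : m i = 0
  · simp [h0]
  · simp [h0]; omega

lemma pev_eq {p : MvPolynomial (Fin n) ℝ} (h : ∀ m ∈ p.support, ∀ i, m i ≤ 1)
    (x : Fin n → Bool) : pev p x = pc (fun S => p.coeff (ind S)) x := by
  unfold pev pc ev
  rw [MvPolynomial.eval_eq]
  symm
  have : ∑ S : Finset (Fin n), p.coeff (ind S) * ∏ i ∈ S, chi (x i)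
      = ∑ S ∈ univ.filter (fun S : Finset (Fin n) => ind S ∈ p.support),
        p.coeff (ind S) * ∏ i ∈ S, chi (x i) := by
    rw [Finset.sum_filter]
    refine Finset.sum_congr rfl fun S _ => ?_
    split_ifs with hS
    · rfl
    · rw [MvPolynomial.notMem_support_iff.mp hS, zero_mul]
  rw [this]
  refine Finset.sum_nbij' (fun S => ind S) (fun m => m.support) ?_ ?_ ?_ ?_ ?_
  · intro S hS; exact (Finset.mem_filter.mp hS).2
  · intro m hm
    simp only [Finset.mem_filter, Finset.mem_univ, true_and]
    rw [ind_of_multilinear (h m hm)]; exact hm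
  · intro S _; exact ind_support S
  · intro m hm; exact ind_of_multilinear (h m hm)
  · intro S _
    congr 1
    rw [ind_support]
    refine Finset.prod_congr rfl fun i hi => ?_
    rw [ind_apply, if_pos hi, pow_one]

lemma coeff_degLE {p : MvPolynomial (Fin n) ℝ} {d : ℕ} (h : p.totalDegree ≤ d) :
    DegLE d (fun S => p.coeff (ind S)) := by
  intro S hS
  by_contra hne
  have h1 := MvPolynomial.le_totalDegree (MvPolynomial.mem_support_iff.mpr hne)
  have h2 : ((ind S).sum fun _ e => e) = S.card := by
    rw [Finsupp.sum_fintype _ _ (fun _ => rfl)]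
    simp [ind_apply]
  omega

lemma sign_ne_iff {a b : ℝ} (ha : a ≠ 0) (hb : b ≠ 0) :
    Real.sign b ≠ Real.sign a ↔ a * b < 0 := by
  rcases lt_or_gt_of_ne ha with h1 | h1 <;> rcases lt_or_gt_of_ne hb with h2 | h2
  · simp only [Real.sign_of_neg h1, Real.sign_of_neg h2, ne_eq, not_true_eq_false, false_iff]
    nlinarith
  · rw [Real.sign_of_neg h1, Real.sign_of_pos h2]
    exact ⟨fun _ => mul_neg_of_neg_of_pos h1 h2, fun _ => by norm_num⟩
  · rw [Real.sign_of_pos h1, Real.sign_of_neg h2]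
    exact ⟨fun _ => mul_neg_of_pos_of_neg h1 h2, fun _ => by norm_num⟩
  · simp only [Real.sign_of_pos h1, Real.sign_of_pos h2, ne_eq, not_true_eq_false, false_iff]
    nlinarith

lemma BSA_eq {d : ℕ} {f : (Fin n → Bool) → ℝ} (hf : IsPTF d f) :
    ∃ c : Finset (Fin n) → ℝ, DegLE d c ∧ BSA f = BS c := by
  obtain ⟨p, h1, h2, h3⟩ := hf
  refine ⟨_, coeff_degLE h2, ?_⟩
  have hs : ∀ x, sens f x = sn (fun S => p.coeff (ind S)) x := by
    intro x
    unfold sens sn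
    congr 1
    refine Finset.filter_congr fun i _ => ?_
    rw [(h3 x).2, (h3 (flipAt x i)).2, sign_ne_iff (h3 x).1 (h3 _).1, pev_eq h1, pev_eq h1]
  unfold BSA BS Ex
  simp only [hs, wb, Finset.prod_const, Finset.card_univ, Fintype.card_fin]
  rw [Finset.sum_div]
  refine Finset.sum_congr rfl fun x _ => ?_
  rw [div_pow, one_pow]; ring

end Final

/-- The weaker bound: every degree-`d` PTF has Boolean surface area at most
`exp(C_d √(log n))`. -/
theorem bsa_ptf_weak_bound (d : ℕ) (hd : 1 ≤ d) :
    ∃ C : ℝ, 0 < C ∧ ∀ n : ℕ, 2 ≤ n → ∀ f : (Fin n → Bool) → ℝ, IsPTF d f →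
      BSA f ≤ Real.exp (C * Real.sqrt (Real.log n)) := by
  refine ⟨cD d * (8 * d * (3 + 16 * d)), ?_, ?_⟩
  · have h1 := cD_pos d
    have h2 : (0 : ℝ) < d := by exact_mod_cast hd
    positivity
  · intro n hn f hf
    obtain ⟨c, hc, he⟩ := BSA_eq hf
    rw [he]
    exact BS_final hd hn hc
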